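/- arXiv:1805.08188 — 6 statements merged into one kernel-verified Lean document; each statement's English description precedes it below -/
import Mathlib

section
/- Let H be a complex separable infinite-dimensional Hilbert space and let S = (S_1, …, S_s) be an s-tuple of bounded selfadjoint operators on H, so that W_e(S) is a subset of ℝ^s. Let (λ_k)_{k≥1} be a sequence contained in the interior of W_e(S) relative to ℝ^s, and suppose that ∑_{k=1}^∞ dist(λ_k, ℝ^s ∖ W_e(S)) = ∞. Then there exists an orthonormal basis (u_k)_{k≥1} of H such that ⟨S_j u_k, u_k⟩ = λ_{k,j} for every k ≥ 1 and every j = 1, …, s. -/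
open Filter Metric
open scoped ComplexInnerProductSpace

/-- The joint essential numerical range of a tuple of selfadjoint operators,
viewed as a subset of `ℝ^s`: the set of `λ ∈ ℝ^s` for which there is an orthonormal
sequence `(x_k)` with `⟨S_j x_k, x_k⟩ → λ_j` for every `j`. -/
def jointEssNumRangeReal {H : Type*} [NormedAddCommGroup H] [InnerProductSpace ℂ H]
    {s : ℕ} (S : Fin s → H →L[ℂ] H) : Set (Fin s → ℝ) :=
  {lam | ∃ x : ℕ → H, Orthonormal ℂ x ∧
    ∀ j, Tendsto (fun k => ⟪(S j) (x k), x k⟫) atTop (nhds ((lam j : ℂ)))}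


lemma aux_norm_one {H : Type*} [NormedAddCommGroup H] [InnerProductSpace ℂ H] {x : H}
    (h : ⟪x, x⟫ = 1) : ‖x‖ = 1 := by
  have h2 : ‖x‖ ^ 2 = 1 := by
    rw [norm_sq_eq_re_inner (𝕜 := ℂ), h]
    simp
  exact (pow_eq_one_iff_of_nonneg (norm_nonneg _) two_ne_zero).1 h2

/-- Approximate realisation of a point of the essential numerical range
orthogonally to a finite-dimensional subspace. -/
lemma aux_exists_approx {H : Type*} [NormedAddCommGroup H] [InnerProductSpace ℂ H]
    {s : ℕ} (S : Fin s → H →L[ℂ] H) (p : Fin s → ℝ) (hp : p ∈ jointEssNumRangeReal S)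
    (M : Submodule ℂ H) [FiniteDimensional ℂ M] (ε : ℝ) (hε : 0 < ε) :
    ∃ x ∈ Mᗮ, ‖x‖ = 1 ∧ ∀ j, |(⟪S j x, x⟫).re - p j| < ε := by
  obtain ⟨x, hx, hlim⟩ := hp
  have hP : Tendsto (fun k => M.starProjection (x k)) atTop (nhds 0) := by
    let b := stdOrthonormalBasis ℂ M
    have h1 : ∀ k, M.starProjection (x k) = ∑ i, ⟪(b i : H), x k⟫ • (b i : H) := by
      intro k
      rw [b.starProjection_eq_sum_rankOne]
      simp
    simp_rw [h1]
    have h0 : (0 : H) = ∑ i, (0 : ℂ) • (b i : H) := by simp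
    rw [h0]
    refine tendsto_finsetSum _ fun i _ => Tendsto.smul_const ?_ _
    have h2 := (hx.inner_products_summable (b i : H)).tendsto_atTop_zero
    rw [tendsto_zero_iff_norm_tendsto_zero]
    have h3 := h2.sqrt
    simp only [Real.sqrt_sq (norm_nonneg _), Real.sqrt_zero] at h3
    simpa only [norm_inner_symm] using h3
  have hPn : Tendsto (fun k => ‖M.starProjection (x k)‖) atTop (nhds 0) := by
    simpa using hP.norm
  set z : ℕ → H := fun k => x k - M.starProjection (x k) with hz
  have hzn : Tendsto (fun k => ‖z k‖) atTop (nhds 1) := by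
    rw [tendsto_iff_norm_sub_tendsto_zero]
    refine squeeze_zero (fun _ => norm_nonneg _) (fun k => ?_) hPn
    have := abs_norm_sub_norm_le (z k) (x k)
    rw [hx.1 k] at this
    simpa [hz] using this
  have hq : ∀ j, Tendsto (fun k => ⟪S j (z k), z k⟫) atTop (nhds (p j : ℂ)) := by
    intro j
    have e1 : ∀ k, ⟪S j (z k), z k⟫ = ⟪S j (x k), x k⟫ - ⟪S j (x k), M.starProjection (x k)⟫
        - ⟪S j (M.starProjection (x k)), z k⟫ := by
      intro k
      simp only [hz, map_sub, inner_sub_left, inner_sub_right]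
      ring
    simp_rw [e1]
    have t1 : Tendsto (fun k => ⟪S j (x k), M.starProjection (x k)⟫) atTop (nhds 0) := by
      refine squeeze_zero_norm (a := fun k => ‖S j‖ * ‖M.starProjection (x k)‖) (fun k => ?_) ?_
      · refine (norm_inner_le_norm _ _).trans ?_
        gcongr
        simpa [hx.1 k] using (S j).le_opNorm (x k)
      · simpa using hPn.const_mul ‖S j‖
    have t2 : Tendsto (fun k => ⟪S j (M.starProjection (x k)), z k⟫) atTop (nhds 0) := by
      refine squeeze_zero_norm
        (a := fun k => ‖S j‖ * ‖M.starProjection (x k)‖ * ‖z k‖) (fun k => ?_) ?_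
      · refine (norm_inner_le_norm _ _).trans ?_
        gcongr
        exact (S j).le_opNorm _
      · simpa using (hPn.const_mul ‖S j‖).mul hzn
    simpa using ((hlim j).sub t1).sub t2
  have hr : ∀ j, Tendsto (fun k => (⟪S j (z k), z k⟫).re / ‖z k‖ ^ 2) atTop (nhds (p j)) := by
    intro j
    have := ((Complex.continuous_re.tendsto _).comp (hq j)).div (hzn.pow 2) (by norm_num)
    simp only [Complex.ofReal_re, one_pow, div_one] at this
    exact this
  have ev1 : ∀ᶠ k in atTop, ∀ j, |(⟪S j (z k), z k⟫).re / ‖z k‖ ^ 2 - p j| < ε := by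
    rw [eventually_all]
    intro j
    have := Metric.tendsto_nhds.1 (hr j) ε hε
    simpa only [Real.dist_eq] using this
  have ev2 : ∀ᶠ k in atTop, 0 < ‖z k‖ := hzn.eventually (lt_mem_nhds one_pos)
  obtain ⟨k, h1, h2⟩ := (ev1.and ev2).exists
  refine ⟨((‖z k‖⁻¹ : ℝ) : ℂ) • z k, ?_, ?_, fun j => ?_⟩
  · exact Submodule.smul_mem _ _ (Submodule.sub_starProjection_mem_orthogonal _)
  · rw [norm_smul]
    simp [h2.ne']
  · convert h1 j using 3
    rw [map_smul, inner_smul_left, inner_smul_right, Complex.conj_ofReal, Complex.re_ofReal_mul,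
      Complex.re_ofReal_mul]
    field_simp

/-- A family of approximate realisations that are mutually decoupled. -/
lemma aux_exists_family {H : Type*} [NormedAddCommGroup H] [InnerProductSpace ℂ H]
    {s : ℕ} (S : Fin s → H →L[ℂ] H)
    {ι : Type*} [DecidableEq ι] (p : ι → Fin s → ℝ) (hp : ∀ i, p i ∈ jointEssNumRangeReal S)
    (hsym : ∀ j x y, ⟪S j x, y⟫ = ⟪x, S j y⟫)
    (M : Submodule ℂ H) [FiniteDimensional ℂ M] (ε : ℝ) (hε : 0 < ε) (T : Finset ι) :
    ∃ x : ι → H, (∀ i ∈ T, x i ∈ Mᗮ ∧ ‖x i‖ = 1 ∧ ∀ j, |(⟪S j (x i), x i⟫).re - p i j| < ε) ∧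
      ∀ i ∈ T, ∀ l ∈ T, i ≠ l → ⟪x i, x l⟫ = 0 ∧ ∀ j, ⟪S j (x i), x l⟫ = 0 := by
  induction T using Finset.induction_on with
  | empty => exact ⟨fun _ => 0, by simp, by simp⟩
  | insert a T ha ih =>
    obtain ⟨x, h1, h2⟩ := ih
    let N : Submodule ℂ H := Submodule.span ℂ (x '' T) ⊔
      Submodule.span ℂ ((fun q : ι × Fin s => S q.2 (x q.1)) '' (T ×ˢ (Finset.univ : Finset (Fin s)) : Finset (ι × Fin s)))
    have : FiniteDimensional ℂ (Submodule.span ℂ (x '' T)) :=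
      FiniteDimensional.span_of_finite ℂ (T.finite_toSet.image _)
    have : FiniteDimensional ℂ (Submodule.span ℂ ((fun q : ι × Fin s => S q.2 (x q.1)) ''
        (T ×ˢ (Finset.univ : Finset (Fin s)) : Finset (ι × Fin s)))) :=
      FiniteDimensional.span_of_finite ℂ ((Finset.finite_toSet _).image _)
    obtain ⟨y, hy, hy1, hy2⟩ := aux_exists_approx S (p a) (hp a) (M ⊔ N) ε hε
    have hyM : y ∈ Mᗮ := Submodule.orthogonal_le le_sup_left hy
    have hyN : y ∈ Nᗮ := Submodule.orthogonal_le le_sup_right hy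
    have o1 : ∀ i ∈ T, ⟪x i, y⟫ = 0 := fun i hi =>
      (Submodule.mem_orthogonal _ _).1 hyN _
        (Submodule.mem_sup_left (Submodule.subset_span ⟨i, hi, rfl⟩))
    have o2 : ∀ i ∈ T, ∀ j, ⟪S j (x i), y⟫ = 0 := fun i hi j =>
      (Submodule.mem_orthogonal _ _).1 hyN _
        (Submodule.mem_sup_right (Submodule.subset_span ⟨(i, j), by simpa using hi, rfl⟩))
    have hne : ∀ i ∈ T, i ≠ a := fun i hi h => ha (h ▸ hi)
    refine ⟨Function.update x a y, ?_, ?_⟩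
    · intro i hi
      rcases Finset.mem_insert.1 hi with rfl | hi
      · simpa using ⟨hyM, hy1, hy2⟩
      · simpa [hne i hi] using h1 i hi
    · intro i hi l hl hil
      rcases Finset.mem_insert.1 hi with hi | hi <;> rcases Finset.mem_insert.1 hl with hl | hl
      · exact absurd (hi.trans hl.symm) hil
      · rw [hi, Function.update_self, Function.update_of_ne (hne l hl)]
        refine ⟨inner_eq_zero_symm.1 (o1 l hl), fun j => ?_⟩
        rw [hsym]
        exact inner_eq_zero_symm.1 (o2 l hl j)
      · rw [hl, Function.update_self, Function.update_of_ne (hne i hi)]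
        exact ⟨o1 i hi, o2 i hi⟩
      · rw [Function.update_of_ne (hne i hi), Function.update_of_ne (hne l hl)]
        exact h2 i hi l hl hil

/-- If there is a point in each open orthant around `μ`, then `μ` is a convex combination. -/
lemma aux_orthants {s : ℕ} (μ : Fin s → ℝ) (q : (Fin s → Bool) → Fin s → ℝ)
    (hq : ∀ σ j, if σ j then μ j < q σ j else q σ j < μ j) :
    ∃ w : (Fin s → Bool) → ℝ, (∀ σ, 0 ≤ w σ) ∧ ∑ σ, w σ = 1 ∧ ∀ j, ∑ σ, w σ * q σ j = μ j := by
  classical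
  let L : ((Fin s → Bool) → ℝ) →ₗ[ℝ] (Fin s → ℝ) := Fintype.linearCombination ℝ q
  have hL : ∀ w, L w = ∑ σ, w σ • q σ := fun w => rfl
  by_contra hcon
  have hnot : μ ∉ L '' stdSimplex ℝ (Fin s → Bool) := by
    rintro ⟨w, hw, hw2⟩
    refine hcon ⟨w, hw.1, hw.2, fun j => ?_⟩
    rw [← hw2, hL]
    simp
  have hc : Convex ℝ (L '' stdSimplex ℝ (Fin s → Bool)) :=
    (convex_stdSimplex ℝ _).linear_image L
  have hk : IsCompact (L '' stdSimplex ℝ (Fin s → Bool)) :=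
    (isCompact_stdSimplex ℝ _).image (LinearMap.continuous_of_finiteDimensional L)
  obtain ⟨f, u, h1, h2⟩ := geometric_hahn_banach_closed_point hc hk.isClosed hnot
  have hf : ∀ v, f v = ∑ j, v j * f (Pi.single j 1) := by
    intro v
    conv_lhs => rw [pi_eq_sum_univ' v]
    rw [map_sum]
    refine Finset.sum_congr rfl fun j _ => ?_
    rw [map_smul, smul_eq_mul]
  let σ : Fin s → Bool := fun j => decide (0 ≤ f (Pi.single j 1))
  have h3 := h1 (q σ) ⟨Pi.single σ 1, single_mem_stdSimplex ℝ σ, by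
    rw [hL, Finset.sum_eq_single σ]
    · simp
    · intro b _ hb
      simp [hb]
    · simp⟩
  have h4 : f μ ≤ f (q σ) := by
    rw [hf μ, hf (q σ)]
    refine Finset.sum_le_sum fun j _ => ?_
    have := hq σ j
    by_cases hj : 0 ≤ f (Pi.single j 1)
    · have hs : σ j = true := by simp [σ, hj]
      rw [hs] at this
      simp only [if_true] at this
      exact mul_le_mul_of_nonneg_right this.le hj
    · have hs : σ j = false := by simp [σ, hj]
      rw [hs] at this
      simp only [Bool.false_eq_true, if_false] at this
      exact mul_le_mul_of_nonpos_right this.le (not_le.1 hj).le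
  linarith

/-- Exact realisation of interior points orthogonally to a finite-dimensional subspace. -/
lemma aux_exact {H : Type*} [NormedAddCommGroup H] [InnerProductSpace ℂ H]
    {s : ℕ} (S : Fin s → H →L[ℂ] H)
    (hsym : ∀ j x y, ⟪S j x, y⟫ = ⟪x, S j y⟫)
    (μ : Fin s → ℝ) (hμ : μ ∈ interior (jointEssNumRangeReal S))
    (M : Submodule ℂ H) [FiniteDimensional ℂ M] :
    ∃ x ∈ Mᗮ, ‖x‖ = 1 ∧ ∀ j, (⟪S j x, x⟫).re = μ j := by
  classical
  obtain ⟨r, hr, hball⟩ := Metric.nhds_basis_closedBall.mem_iff.1 (mem_interior_iff_mem_nhds.1 hμ)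
  let p : (Fin s → Bool) → Fin s → ℝ := fun σ j => μ j + if σ j then r else -r
  have hp : ∀ σ, p σ ∈ jointEssNumRangeReal S := by
    intro σ
    apply hball
    rw [Metric.mem_closedBall, dist_pi_le_iff hr.le]
    intro j
    simp only [p, Real.dist_eq, add_sub_cancel_left]
    split_ifs <;> simp [abs_of_pos hr]
  obtain ⟨x, h1, h2⟩ := aux_exists_family S p hp hsym M r hr Finset.univ
  obtain ⟨w, hw0, hw1, hw⟩ := aux_orthants μ (fun σ j => (⟪S j (x σ), x σ⟫).re) (by
    intro σ j
    have := abs_lt.1 ((h1 σ (Finset.mem_univ _)).2.2 j)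
    simp only [p] at this
    split_ifs with h
    · simp only [h, if_true] at this
      linarith
    · simp only [h] at this
      simp at this
      linarith)
  have hsq : ∀ σ, ((√(w σ) : ℝ) : ℂ) * ((√(w σ) : ℝ) : ℂ) = (w σ : ℂ) := fun σ => by
    rw [← Complex.ofReal_mul, Real.mul_self_sqrt (hw0 σ)]
  refine ⟨∑ σ, ((√(w σ) : ℝ) : ℂ) • x σ, ?_, ?_, ?_⟩
  · exact Submodule.sum_mem _ fun σ _ => Submodule.smul_mem _ _ (h1 σ (Finset.mem_univ _)).1
  · have e : ⟪∑ σ, ((√(w σ) : ℝ) : ℂ) • x σ, ∑ σ, ((√(w σ) : ℝ) : ℂ) • x σ⟫ = 1 := by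
      rw [sum_inner]
      have : ∀ σ, ⟪((√(w σ) : ℝ) : ℂ) • x σ, ∑ τ, ((√(w τ) : ℝ) : ℂ) • x τ⟫ = (w σ : ℂ) := by
        intro σ
        rw [inner_sum, Finset.sum_eq_single σ]
        · rw [inner_smul_left, inner_smul_right, Complex.conj_ofReal, ← mul_assoc, hsq,
            inner_self_eq_norm_sq_to_K, (h1 σ (Finset.mem_univ _)).2.1]
          simp
        · intro τ _ hτ
          rw [inner_smul_left, inner_smul_right,
            (h2 σ (Finset.mem_univ _) τ (Finset.mem_univ _) hτ.symm).1]
          simp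
        · simp
      simp_rw [this]
      exact_mod_cast hw1
    exact aux_norm_one e
  · intro j
    rw [map_sum, sum_inner, Complex.re_sum, ← hw j]
    refine Finset.sum_congr rfl fun σ _ => ?_
    rw [inner_sum, Finset.sum_eq_single σ]
    · rw [map_smul, inner_smul_left, inner_smul_right, Complex.conj_ofReal, ← mul_assoc, hsq,
        Complex.re_ofReal_mul]
    · intro τ _ hτ
      rw [map_smul, inner_smul_left, inner_smul_right,
        (h2 σ (Finset.mem_univ _) τ (Finset.mem_univ _) hτ.symm).2 j]
      simp
    · simp

/-- One step of the construction. -/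
lemma aux_step {H : Type*} [NormedAddCommGroup H] [InnerProductSpace ℂ H]
    {s : ℕ} (S : Fin s → H →L[ℂ] H)
    (hsym : ∀ j x y, ⟪S j x, y⟫ = ⟪x, S j y⟫) (K : ℝ) (hK : ∀ j, ‖S j‖ ≤ K)
    (μ : Fin s → ℝ) (hμ : μ ∈ interior (jointEssNumRangeReal S)) (c : ℝ) (hc0 : 0 ≤ c)
    (hc1 : c < 1)
    (hin : ∀ β : Fin s → ℝ, (∀ j, |β j| ≤ K) →
      (fun j => (μ j - c * β j) / (1 - c)) ∈ interior (jointEssNumRangeReal S))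
    (y : H) (M : Submodule ℂ H) [FiniteDimensional ℂ M] :
    ∃ u ∈ Mᗮ, ‖u‖ = 1 ∧ (∀ j, (⟪S j u, u⟫).re = μ j) ∧
      infDist y ((M ⊔ Submodule.span ℂ {u} : Submodule ℂ H) : Set H) ^ 2
        ≤ (1 - c) * infDist y (M : Set H) ^ 2 := by
  set P : H := M.starProjection y with hP
  have hPM : P ∈ M := Submodule.starProjection_apply_mem _ _
  set b : H := y - P with hb
  have hbM : b ∈ Mᗮ := Submodule.sub_starProjection_mem_orthogonal _
  by_cases hb0 : b = 0
  · obtain ⟨u, hu, hu1, huS⟩ := aux_exact S hsym μ hμ M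
    refine ⟨u, hu, hu1, huS, ?_⟩
    have hyM : y ∈ M := by
      rw [sub_eq_zero.1 hb0]
      exact hPM
    rw [infDist_zero_of_mem (show y ∈ (M : Set H) from hyM),
      infDist_zero_of_mem (show y ∈ ((M ⊔ Submodule.span ℂ {u} : Submodule ℂ H) : Set H) from
        Submodule.mem_sup_left hyM)]
    simp
  have hbn : 0 < ‖b‖ := norm_pos_iff.2 hb0
  set e : H := ((‖b‖⁻¹ : ℝ) : ℂ) • b with he
  have hen : ‖e‖ = 1 := by
    rw [he, norm_smul]
    simp [hbn.ne']
  have heM : e ∈ Mᗮ := Submodule.smul_mem _ _ hbM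
  let β : Fin s → ℝ := fun j => (⟪S j e, e⟫).re
  have hβ : ∀ j, |β j| ≤ K := by
    intro j
    refine (Complex.abs_re_le_norm _).trans ((norm_inner_le_norm _ _).trans ?_)
    rw [hen, mul_one]
    refine ((S j).le_opNorm e).trans ?_
    rw [hen, mul_one]
    exact hK j
  let N : Submodule ℂ H := Submodule.span ℂ {e} ⊔ Submodule.span ℂ (Set.range fun j => S j e)
  have i1 : FiniteDimensional ℂ (Submodule.span ℂ {e}) :=
    FiniteDimensional.span_of_finite ℂ (Set.finite_singleton _)
  have i2 : FiniteDimensional ℂ (Submodule.span ℂ (Set.range fun j => S j e)) :=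
    FiniteDimensional.span_of_finite ℂ (Set.finite_range _)
  obtain ⟨v, hv, hvn, hvS⟩ := aux_exact S hsym _ (hin β hβ) (M ⊔ N)
  have hvM : v ∈ Mᗮ := Submodule.orthogonal_le le_sup_left hv
  have hvN : v ∈ Nᗮ := Submodule.orthogonal_le le_sup_right hv
  have hev : ⟪e, v⟫ = 0 := (Submodule.mem_orthogonal _ _).1 hvN _
    (Submodule.mem_sup_left (Submodule.subset_span rfl))
  have hSev : ∀ j, ⟪S j e, v⟫ = 0 := fun j => (Submodule.mem_orthogonal _ _).1 hvN _
    (Submodule.mem_sup_right (Submodule.subset_span ⟨j, rfl⟩))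
  have hve : ⟪v, e⟫ = 0 := inner_eq_zero_symm.1 hev
  have hSve : ∀ j, ⟪S j v, e⟫ = 0 := fun j => by
    rw [hsym]
    exact inner_eq_zero_symm.1 (hSev j)
  have hs1 : ((√c : ℝ) : ℂ) * ((√c : ℝ) : ℂ) = (c : ℂ) := by
    rw [← Complex.ofReal_mul, Real.mul_self_sqrt hc0]
  have hs2 : ((√(1 - c) : ℝ) : ℂ) * ((√(1 - c) : ℝ) : ℂ) = ((1 - c : ℝ) : ℂ) := by
    rw [← Complex.ofReal_mul, Real.mul_self_sqrt (by linarith)]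
  set u : H := ((√c : ℝ) : ℂ) • e + ((√(1 - c) : ℝ) : ℂ) • v with hu
  have hee : ⟪e, e⟫ = 1 := by
    rw [inner_self_eq_norm_sq_to_K, hen]
    simp
  have hvv : ⟪v, v⟫ = 1 := by
    rw [inner_self_eq_norm_sq_to_K, hvn]
    simp
  have huu : ⟪u, u⟫ = 1 := by
    simp only [hu, inner_add_left, inner_add_right, inner_smul_left, inner_smul_right, hev, hve,
      hee, hvv, Complex.conj_ofReal, mul_one, mul_zero, add_zero, zero_add, hs1, hs2]
    push_cast
    ring
  have hun : ‖u‖ = 1 := aux_norm_one huu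
  have huM : u ∈ Mᗮ := Submodule.add_mem _ (Submodule.smul_mem _ _ heM)
    (Submodule.smul_mem _ _ hvM)
  have hbe : b = ((‖b‖ : ℝ) : ℂ) • e := by
    rw [he, smul_smul, ← Complex.ofReal_mul, mul_inv_cancel₀ hbn.ne']
    simp
  have hub : ⟪u, b⟫ = ((√c * ‖b‖ : ℝ) : ℂ) := by
    rw [hbe, inner_smul_right]
    simp only [hu, inner_add_left, inner_smul_left, hve, hee, Complex.conj_ofReal]
    rw [← hbe]
    push_cast
    ring
  refine ⟨u, huM, hun, fun j => ?_, ?_⟩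
  · have e1 : ⟪S j u, u⟫ = (c : ℂ) * ⟪S j e, e⟫ + ((1 - c : ℝ) : ℂ) * ⟪S j v, v⟫ := by
      simp only [hu, map_add, map_smul, inner_add_left, inner_add_right, inner_smul_left,
        inner_smul_right, hSev, hSve, Complex.conj_ofReal, ← hs1, ← hs2]
      ring
    rw [e1, Complex.add_re, Complex.re_ofReal_mul, Complex.re_ofReal_mul, hvS j]
    have : 1 - c ≠ 0 := by linarith
    field_simp
    simp only [β]
    ring
  · set a : ℝ := √c * ‖b‖ with ha
    have ha2 : a ^ 2 = c * ‖b‖ ^ 2 := by rw [ha, mul_pow, Real.sq_sqrt hc0]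
    have h1 : infDist y ((M ⊔ Submodule.span ℂ {u} : Submodule ℂ H) : Set H)
        ≤ ‖b - (a : ℂ) • u‖ := by
      have hm : P + (a : ℂ) • u ∈ ((M ⊔ Submodule.span ℂ {u} : Submodule ℂ H) : Set H) :=
        Submodule.add_mem _ (Submodule.mem_sup_left hPM)
          (Submodule.mem_sup_right (Submodule.smul_mem _ _ (Submodule.mem_span_singleton_self u)))
      refine (infDist_le_dist_of_mem hm).trans_eq ?_
      rw [dist_eq_norm, hb, sub_sub]
    have h2 : ‖b - (a : ℂ) • u‖ ^ 2 = (1 - c) * ‖b‖ ^ 2 := by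
      have hbu : ⟪b, u⟫ = (a : ℂ) := by
        rw [← inner_conj_symm, hub, Complex.conj_ofReal]
      have : ⟪b - (a : ℂ) • u, b - (a : ℂ) • u⟫ = ((‖b‖ ^ 2 - a ^ 2 : ℝ) : ℂ) := by
        simp only [inner_sub_left, inner_sub_right, inner_smul_left, inner_smul_right, hub, hbu,
          huu, Complex.conj_ofReal]
        rw [inner_self_eq_norm_sq_to_K]
        simp only [Complex.coe_algebraMap]
        push_cast
        ring
      rw [norm_sq_eq_re_inner (𝕜 := ℂ), this]
      simp only [RCLike.re_to_complex, Complex.ofReal_re]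
      rw [ha2]
      ring
    have h3 : ‖b‖ ≤ infDist y (M : Set H) := by
      rw [le_infDist ⟨0, M.zero_mem⟩]
      intro m hm
      have hpm : P - m ∈ M := M.sub_mem hPM hm
      have h0 : ⟪b, P - m⟫ = 0 := inner_eq_zero_symm.1 ((Submodule.mem_orthogonal _ _).1 hbM _ hpm)
      have h4 : y - m = b + (P - m) := by
        rw [hb]
        abel
      have h5 := norm_add_sq_eq_norm_sq_add_norm_sq_of_inner_eq_zero b (P - m) h0
      rw [dist_eq_norm, h4]
      nlinarith [norm_nonneg (b + (P - m)), norm_nonneg b, mul_self_nonneg ‖P - m‖]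
    calc infDist y ((M ⊔ Submodule.span ℂ {u} : Submodule ℂ H) : Set H) ^ 2
        ≤ ‖b - (a : ℂ) • u‖ ^ 2 := pow_le_pow_left₀ infDist_nonneg h1 2
      _ = (1 - c) * ‖b‖ ^ 2 := h2
      _ ≤ _ := mul_le_mul_of_nonneg_left (pow_le_pow_left₀ (norm_nonneg _) h3 2) (by linarith)

/-- A divergent nonnegative series can be split into infinitely many divergent ones. -/
lemma aux_schedule (c : ℕ → ℝ) (hc : ∀ k, 0 ≤ c k)
    (h : Tendsto (fun N => ∑ k ∈ Finset.range N, c k) atTop atTop) :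
    ∃ f : ℕ → ℕ, ∀ m, Tendsto (fun N => ∑ k ∈ Finset.range N, if f k = m then c k else 0)
      atTop atTop := by
  have hex : ∀ a : ℕ, ∃ b, a < b ∧
      ∑ k ∈ Finset.range a, c k + 1 ≤ ∑ k ∈ Finset.range b, c k := by
    intro a
    obtain ⟨b, h1, h2⟩ := ((eventually_gt_atTop a).and
      (h.eventually (eventually_ge_atTop (∑ k ∈ Finset.range a, c k + 1)))).exists
    exact ⟨b, h1, h2⟩
  choose g hg1 hg2 using hex
  let N : ℕ → ℕ := fun n => g^[n] 0
  have hNs : ∀ n, N (n + 1) = g (N n) := fun n => Function.iterate_succ_apply' g n 0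
  have hN : StrictMono N := strictMono_nat_of_lt_succ fun n => by
    rw [hNs]
    exact hg1 _
  let B : ℕ → ℕ := fun k => Nat.findGreatest (fun i => N i ≤ k) k
  have hB : ∀ i k, N i ≤ k → k < N (i + 1) → B k = i := by
    intro i k h1 h2
    refine (Nat.findGreatest_eq_iff).2 ⟨(hN.id_le i).trans h1, fun _ => h1, fun n hn _ hn2 => ?_⟩
    have : N (i + 1) ≤ N n := hN.monotone hn
    omega
  refine ⟨fun k => (Nat.unpair (B k)).1, fun m => ?_⟩
  set F : ℕ → ℝ := fun N => ∑ k ∈ Finset.range N, if (Nat.unpair (B k)).1 = m then c k else 0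
    with hF
  have hmono : Monotone F := by
    refine monotone_nat_of_le_succ fun n => ?_
    simp only [hF, Finset.sum_range_succ]
    have : 0 ≤ (if (Nat.unpair (B n)).1 = m then c n else 0) := by
      split_ifs
      · exact hc n
      · exact le_rfl
    linarith
  have hblock : ∀ n, F (N (Nat.pair m n)) + 1 ≤ F (N (Nat.pair m n + 1)) := by
    intro n
    have hle : N (Nat.pair m n) ≤ N (Nat.pair m n + 1) := hN.monotone (Nat.le_succ _)
    have e1 : F (N (Nat.pair m n + 1)) - F (N (Nat.pair m n)) =
        ∑ k ∈ Finset.range (N (Nat.pair m n + 1)), c k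
          - ∑ k ∈ Finset.range (N (Nat.pair m n)), c k := by
      simp only [hF]
      rw [← Finset.sum_Ico_eq_sub _ hle, ← Finset.sum_Ico_eq_sub _ hle]
      refine Finset.sum_congr rfl fun k hk => ?_
      rw [Finset.mem_Ico] at hk
      rw [hB _ _ hk.1 hk.2, Nat.unpair_pair]
      simp
    have e2 := hg2 (N (Nat.pair m n))
    rw [← hNs] at e2
    linarith
  have hind : ∀ n : ℕ, (n : ℝ) ≤ F (N (Nat.pair m n)) := by
    intro n
    induction n with
    | zero =>
      have : F 0 ≤ F (N (Nat.pair m 0)) := hmono (Nat.zero_le _)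
      simpa [hF] using this
    | succ n ih =>
      have h1 := hblock n
      have h2 : F (N (Nat.pair m n + 1)) ≤ F (N (Nat.pair m (n + 1))) :=
        hmono (hN.monotone (Nat.pair_lt_pair_right m (Nat.lt_succ_self n)))
      push_cast
      linarith
  refine tendsto_atTop_atTop_of_monotone hmono fun b => ?_
  obtain ⟨n, hn⟩ := exists_nat_ge b
  exact ⟨_, hn.trans (hind n)⟩

lemma aux_bdd {H : Type*} [NormedAddCommGroup H] [InnerProductSpace ℂ H]
    {s : ℕ} (S : Fin s → H →L[ℂ] H) (p : Fin s → ℝ) (hp : p ∈ jointEssNumRangeReal S)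
    (j : Fin s) : |p j| ≤ ‖S j‖ := by
  obtain ⟨x, hx, hlim⟩ := hp
  have h1 : ‖(p j : ℂ)‖ ≤ ‖S j‖ := by
    refine le_of_tendsto (hlim j).norm (Eventually.of_forall fun k => ?_)
    refine (norm_inner_le_norm _ _).trans ?_
    simpa [hx.1 k] using (S j).le_opNorm (x k)
  simpa using h1

lemma aux_infDist_le {H : Type*} [NormedAddCommGroup H] [InnerProductSpace ℂ H]
    {s : ℕ} (S : Fin s → H →L[ℂ] H) (K : ℝ) (hK0 : 0 ≤ K) (hK : ∀ j, ‖S j‖ ≤ K) (p : Fin s → ℝ)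
    (hp : p ∈ jointEssNumRangeReal S) : infDist p (jointEssNumRangeReal S)ᶜ ≤ 2 * K := by
  by_contra! hcon
  rcases isEmpty_or_nonempty (Fin s) with hs | ⟨⟨j⟩⟩
  · have : (jointEssNumRangeReal S)ᶜ = ∅ := by
      ext q
      simp [Subsingleton.elim q p, hp]
    rw [this, infDist_empty] at hcon
    linarith
  · set d := infDist p (jointEssNumRangeReal S)ᶜ with hd
    obtain ⟨t, ht1, ht2⟩ := exists_between hcon
    have hmem : (fun i => p i + t) ∈ jointEssNumRangeReal S := by
      apply ball_infDist_compl_subset (x := p)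
      rw [Metric.mem_ball, ← hd]
      refine lt_of_le_of_lt ((dist_pi_le_iff (by linarith)).2 fun i => ?_) ht2
      rw [Real.dist_eq, add_sub_cancel_left, abs_of_nonneg (by linarith)]
    have h1 := abs_le.1 ((aux_bdd S _ hmem j).trans (hK j))
    have h2 := abs_le.1 ((aux_bdd S _ hp j).trans (hK j))
    linarith [h1.2, h2.1]

theorem stmt_0 {H : Type*} [NormedAddCommGroup H] [InnerProductSpace ℂ H]
    [CompleteSpace H] [TopologicalSpace.SeparableSpace H]
    (hdim : ¬ FiniteDimensional ℂ H)
    {s : ℕ} (S : Fin s → H →L[ℂ] H) (hsa : ∀ j, IsSelfAdjoint (S j))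
    (lam : ℕ → Fin s → ℝ)
    (hmem : ∀ k, lam k ∈ interior (jointEssNumRangeReal S))
    (hblaschke : Tendsto
      (fun N => ∑ k ∈ Finset.range N, Metric.infDist (lam k) ((jointEssNumRangeReal S)ᶜ))
      atTop atTop) :
    ∃ u : HilbertBasis ℕ ℂ H, ∀ k j, ⟪(S j) (u k), u k⟫ = (lam k j : ℂ) := by
  have hsym : ∀ j x y, ⟪S j x, y⟫ = ⟪x, S j y⟫ := fun j x y => (hsa j).isSymmetric x y
  let K : ℝ := 1 + ∑ j, ‖S j‖
  have hsum : 0 ≤ ∑ j, ‖S j‖ := Finset.sum_nonneg fun _ _ => norm_nonneg _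
  have hK1 : 1 ≤ K := by simp only [K]; linarith
  have hK : ∀ j, ‖S j‖ ≤ K := by
    intro j
    have := Finset.single_le_sum (f := fun j => ‖S j‖) (fun _ _ => norm_nonneg _)
      (Finset.mem_univ j)
    simp only [K]
    linarith
  set W := jointEssNumRangeReal S with hW
  let d : ℕ → ℝ := fun k => infDist (lam k) Wᶜ
  have hd0 : ∀ k, 0 ≤ d k := fun k => infDist_nonneg
  have hd2 : ∀ k, d k ≤ 2 * K := fun k =>
    aux_infDist_le S K (by linarith) hK _ (interior_subset (hmem k))
  let c : ℕ → ℝ := fun k => d k / (8 * K)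
  have hcd : ∀ k, c k * (8 * K) = d k := fun k => div_mul_cancel₀ _ (by linarith)
  have hc0 : ∀ k, 0 ≤ c k := fun k => div_nonneg (hd0 k) (by linarith)
  have hc4 : ∀ k, c k ≤ 1 / 4 := by
    intro k
    rw [div_le_iff₀ (by linarith)]
    linarith [hd2 k]
  have hcsum : Tendsto (fun N => ∑ k ∈ Finset.range N, c k) atTop atTop := by
    have h1 : ∀ N, ∑ k ∈ Finset.range N, c k = (∑ k ∈ Finset.range N, d k) / (8 * K) := fun N => by
      rw [Finset.sum_div]
    simp_rw [h1]
    exact hblaschke.atTop_div_const (by linarith)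
  have hin : ∀ k, ∀ β : Fin s → ℝ, (∀ j, |β j| ≤ K) →
      (fun j => (lam k j - c k * β j) / (1 - c k)) ∈ interior W := by
    intro k β hβ
    have hck := hc4 k
    have hne : 1 - c k ≠ 0 := by linarith
    rcases (hd0 k).eq_or_lt with h0 | hpos
    · have hc : c k = 0 := by simp [c, ← h0]
      simpa [hc] using hmem k
    · refine interior_maximal (ball_infDist_compl_subset (x := lam k)) isOpen_ball ?_
      rw [Metric.mem_ball, dist_pi_lt_iff hpos]
      intro j
      have e1 : (lam k j - c k * β j) / (1 - c k) - lam k j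
          = c k * (lam k j - β j) / (1 - c k) := by
        field_simp
        ring
      rw [Real.dist_eq, e1, abs_div, abs_mul, abs_of_nonneg (hc0 k),
        abs_of_pos (by linarith : 0 < 1 - c k), div_lt_iff₀ (by linarith)]
      have h1 := (aux_bdd S _ (interior_subset (hmem k)) j).trans (hK j)
      have h2 : |lam k j - β j| ≤ 2 * K := (abs_sub _ _).trans (by linarith [hβ j])
      have h3 : c k * |lam k j - β j| ≤ c k * (2 * K) := mul_le_mul_of_nonneg_left h2 (hc0 k)
      have h4 := hcd k
      change _ < d k * (1 - c k)
      nlinarith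
  obtain ⟨f, hf⟩ := aux_schedule c hc0 hcsum
  let y : ℕ → H := TopologicalSpace.denseSeq H
  have hstep : ∀ (k : ℕ) (M : {M : Submodule ℂ H // FiniteDimensional ℂ M}),
      ∃ u ∈ M.1ᗮ, ‖u‖ = 1 ∧ (∀ j, (⟪S j u, u⟫).re = lam k j) ∧
      infDist (y (f k)) ((M.1 ⊔ Submodule.span ℂ {u} : Submodule ℂ H) : Set H) ^ 2
        ≤ (1 - c k) * infDist (y (f k)) (M.1 : Set H) ^ 2 := by
    rintro k ⟨M, hM⟩
    exact aux_step S hsym K hK (lam k) (hmem k) (c k) (hc0 k) (by linarith [hc4 k]) (hin k) _ M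
  choose U hU1 hU2 hU3 hU4 using hstep
  let MM : ℕ → {M : Submodule ℂ H // FiniteDimensional ℂ M} := fun n =>
    Nat.rec ⟨⊥, inferInstance⟩ (fun k M => ⟨M.1 ⊔ Submodule.span ℂ {U k M}, by
      have := M.2
      have : FiniteDimensional ℂ (Submodule.span ℂ {U k M}) :=
        FiniteDimensional.span_of_finite ℂ (Set.finite_singleton _)
      infer_instance⟩) n
  let u : ℕ → H := fun k => U k (MM k)
  have hMs : ∀ k, (MM (k + 1)).1 = (MM k).1 ⊔ Submodule.span ℂ {u k} := fun k => rfl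
  have hMmono : Monotone fun k => (MM k).1 := monotone_nat_of_le_succ fun k => by
    rw [hMs]
    exact le_sup_left
  have huM : ∀ k, u k ∈ (MM (k + 1)).1 := fun k => by
    rw [hMs]
    exact Submodule.mem_sup_right (Submodule.mem_span_singleton_self _)
  have horth : ∀ i k, i < k → ⟪u i, u k⟫ = 0 := fun i k hik =>
    (Submodule.mem_orthogonal _ _).1 (hU1 k (MM k)) _ (hMmono hik (huM i))
  have hon : Orthonormal ℂ u := by
    refine ⟨fun k => hU2 k (MM k), fun i k hik => ?_⟩
    rcases lt_or_gt_of_ne hik with h | h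
    · exact horth i k h
    · exact inner_eq_zero_symm.1 (horth k i h)
  have hMspan : ∀ k, (MM k).1 ≤ Submodule.span ℂ (Set.range u) := by
    intro k
    induction k with
    | zero => exact bot_le
    | succ k ih =>
      rw [hMs]
      refine sup_le ih (Submodule.span_mono ?_)
      rintro _ rfl
      exact ⟨k, rfl⟩
  have hdecay : ∀ m N, infDist (y m) ((MM N).1 : Set H) ^ 2 ≤
      infDist (y m) ((MM 0).1 : Set H) ^ 2 *
        Real.exp (-∑ k ∈ Finset.range N, if f k = m then c k else 0) := by
    intro m N
    induction N with
    | zero => simp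
    | succ k ih =>
      rw [Finset.sum_range_succ]
      by_cases hk : f k = m
      · have h1 := hU4 k (MM k)
        rw [hk] at h1
        change infDist (y m) ((MM (k + 1)).1 : Set H) ^ 2 ≤ _ at h1
        rw [if_pos hk, neg_add, Real.exp_add, ← mul_assoc]
        have h2 : 1 - c k ≤ Real.exp (-c k) := by
          linarith [Real.add_one_le_exp (-c k)]
        calc _ ≤ _ := h1
          _ ≤ Real.exp (-c k) * infDist (y m) ((MM k).1 : Set H) ^ 2 :=
            mul_le_mul_of_nonneg_right h2 (sq_nonneg _)
          _ ≤ Real.exp (-c k) * _ := mul_le_mul_of_nonneg_left ih (Real.exp_pos _).le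
          _ = _ := mul_comm _ _
      · rw [if_neg hk, add_zero]
        refine le_trans ?_ ih
        exact pow_le_pow_left₀ infDist_nonneg
          (infDist_le_infDist_of_subset (hMmono (Nat.le_succ k)) ⟨0, (MM k).1.zero_mem⟩) 2
  have hycl : ∀ m, y m ∈ (Submodule.span ℂ (Set.range u)).topologicalClosure := by
    intro m
    change y m ∈ closure (Submodule.span ℂ (Set.range u) : Set H)
    rw [mem_closure_iff_infDist_zero ⟨0, Submodule.zero_mem _⟩]
    have ht : Tendsto (fun N => infDist (y m) ((MM 0).1 : Set H) ^ 2 *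
        Real.exp (-∑ k ∈ Finset.range N, if f k = m then c k else 0)) atTop (nhds 0) := by
      have := (Real.tendsto_exp_neg_atTop_nhds_zero.comp (hf m)).const_mul
        (infDist (y m) ((MM 0).1 : Set H) ^ 2)
      simpa only [mul_zero, Function.comp_def] using this
    have hle : infDist (y m) (Submodule.span ℂ (Set.range u) : Set H) ^ 2 ≤ 0 := by
      refine ge_of_tendsto ht (Eventually.of_forall fun N => le_trans ?_ (hdecay m N))
      exact pow_le_pow_left₀ infDist_nonneg
        (infDist_le_infDist_of_subset (hMspan N) ⟨0, (MM N).1.zero_mem⟩) 2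
    exact pow_eq_zero_iff two_ne_zero |>.1 (le_antisymm hle (sq_nonneg _))
  have hdense : ⊤ ≤ (Submodule.span ℂ (Set.range u)).topologicalClosure := by
    intro z _
    have hz : z ∈ closure (Set.range y) := TopologicalSpace.denseRange_denseSeq H z
    have hsub : Set.range y ⊆ ((Submodule.span ℂ (Set.range u)).topologicalClosure : Set H) := by
      rintro _ ⟨m, rfl⟩
      exact hycl m
    exact closure_minimal hsub (Submodule.isClosed_topologicalClosure _) hz
  refine ⟨HilbertBasis.mk hon hdense, fun k j => ?_⟩
  rw [HilbertBasis.coe_mk]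
  rw [← hU3 k (MM k) j]
  exact ((hsa j).isSymmetric.coe_re_inner_apply_self (u k)).symm
end

section
/- Let H be a complex separable infinite-dimensional Hilbert space and 𝒯 = (T_1, …, T_n) an n-tuple of bounded operators on H. Identify ℂ^n with ℝ^{2n} (each coordinate by its real and imaginary parts), and let M ⊂ ℝ^{2n} be the smallest affine subspace containing the joint numerical range W(𝒯). Let (λ_k)_{k≥1} be a sequence contained in the interior of W_e(𝒯) relative to M, and suppose ∑_{k=1}^∞ dist(λ_k, M ∖ W_e(𝒯)) = ∞. Then there exists an orthonormal basis (u_k)_{k≥1} of H such that ⟨T_j u_k, u_k⟩ = λ_{k,j} for every k ≥ 1 and every j = 1, …, n. -/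
open Filter Metric
open scoped ComplexInnerProductSpace

/-- The joint numerical range of a tuple of bounded operators:
`W(𝒯) = {(⟨T_1 x, x⟩, …, ⟨T_n x, x⟩) : ‖x‖ = 1} ⊂ ℂ^n`. -/
def jointNumRange {H : Type*} [NormedAddCommGroup H] [InnerProductSpace ℂ H]
    {n : ℕ} (T : Fin n → H →L[ℂ] H) : Set (Fin n → ℂ) :=
  {lam | ∃ x : H, ‖x‖ = 1 ∧ ∀ j, ⟪(T j) x, x⟫ = lam j}

/-- The joint essential numerical range of a tuple of bounded operators: the set of
`λ ∈ ℂ^n` for which there is an orthonormal sequence `(x_k)` with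
`⟨T_j x_k, x_k⟩ → λ_j` for every `j`. -/
def jointEssNumRange {H : Type*} [NormedAddCommGroup H] [InnerProductSpace ℂ H]
    {n : ℕ} (T : Fin n → H →L[ℂ] H) : Set (Fin n → ℂ) :=
  {lam | ∃ x : ℕ → H, Orthonormal ℂ x ∧
    ∀ j, Tendsto (fun k => ⟪(T j) (x k), x k⟫) atTop (nhds (lam j))}

section helpers

variable {H : Type*} [NormedAddCommGroup H] [InnerProductSpace ℂ H] {n : ℕ}

/-- the value of the tuple of quadratic forms at `x` -/
noncomputable def tval (T : Fin n → H →L[ℂ] H) (x : H) : Fin n → ℂ := fun j => ⟪(T j) x, x⟫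

/-- projections of an orthonormal sequence onto a finite-dimensional space tend to zero -/
lemma proj_tendsto (F : Submodule ℂ H) [FiniteDimensional ℂ F] (x : ℕ → H)
    (hx : Orthonormal ℂ x) : Tendsto (fun k => F.starProjection (x k)) atTop (nhds 0) := by
  have h1 : ∀ e : H, Tendsto (fun k => ⟪e, x k⟫) atTop (nhds 0) := by
    intro e
    have h := (hx.inner_products_summable e).tendsto_atTop_zero
    rw [tendsto_zero_iff_norm_tendsto_zero]
    have h2 := h.sqrt
    simp only [Real.sqrt_zero] at h2
    refine h2.congr fun k => ?_
    rw [Real.sqrt_sq (norm_nonneg _), norm_inner_symm]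
  let b := stdOrthonormalBasis ℂ F
  have h2 : ∀ y : H, F.starProjection y = ∑ i, ⟪(b i : H), y⟫ • (b i : H) := by
    intro y
    have := b.orthogonalProjectionOnto_apply_eq_sum y
    rw [Submodule.starProjection_apply, this]
    simp
  simp_rw [h2]
  rw [show (0 : H) = ∑ i, (0 : ℂ) • (b i : H) by simp]
  exact tendsto_finsetSum _ fun i _ => (h1 _).smul_const _

lemma tval_smul (T : Fin n → H →L[ℂ] H) (c : ℝ) (x : H) :
    tval T ((c : ℂ) • x) = fun j => ((c ^ 2 : ℝ) : ℂ) * tval T x j := by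
  ext j
  simp [tval]
  ring

lemma approx (T : Fin n → H →L[ℂ] H) (lam : Fin n → ℂ) (hl : lam ∈ jointEssNumRange T)
    (G : Submodule ℂ H) [FiniteDimensional ℂ G] (η : ℝ) (hη : 0 < η) :
    ∃ x ∈ Gᗮ, ‖x‖ = 1 ∧ dist (tval T x) lam < η := by
  obtain ⟨x, hx, hT⟩ := hl
  have hp := proj_tendsto G x hx
  have hpn : Tendsto (fun k => ‖G.starProjection (x k)‖) atTop (nhds 0) := by
    simpa using hp.norm
  set p := fun k => G.starProjection (x k) with hpdef
  set y := fun k => x k - p k with hydef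
  have hyG : ∀ k, y k ∈ Gᗮ := fun k => by
    simp only [hydef, hpdef]; exact Submodule.sub_starProjection_mem_orthogonal (x k)
  have hyn : Tendsto (fun k => ‖y k‖) atTop (nhds 1) := by
    rw [tendsto_iff_norm_sub_tendsto_zero]
    refine squeeze_zero (fun _ => norm_nonneg _) (fun k => ?_) hpn
    have h1 : ‖x k‖ = 1 := hx.1 k
    have h2 := abs_norm_sub_norm_le (y k) (x k)
    rw [h1] at h2
    rw [Real.norm_eq_abs]
    refine h2.trans (le_of_eq ?_)
    simp [hydef, hpdef]
  have hyle : ∀ k, ‖y k‖ ≤ 1 + ‖p k‖ := fun k => by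
    have := norm_sub_le (x k) (p k)
    rw [hx.1 k] at this
    exact this
  have hTy : ∀ j, Tendsto (fun k => tval T (y k) j) atTop (nhds (lam j)) := by
    intro j
    have hd : Tendsto (fun k => tval T (y k) j - ⟪T j (x k), x k⟫) atTop (nhds 0) := by
      have hb : Tendsto (fun k => ‖T j‖ * ‖p k‖ + ‖T j‖ * ‖p k‖ * (1 + ‖p k‖)) atTop (nhds 0) := by
        have := (hpn.const_mul ‖T j‖).add
          ((hpn.const_mul ‖T j‖).mul (hpn.const_add 1))
        simpa using this
      refine squeeze_zero_norm (fun k => ?_) hb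
      have e : tval T (y k) j - ⟪T j (x k), x k⟫ = -⟪T j (x k), p k⟫ - ⟪T j (p k), y k⟫ := by
        simp only [tval, hydef, map_sub, inner_sub_left, inner_sub_right]; ring
      rw [e]
      refine (norm_sub_le _ _).trans ?_
      rw [norm_neg]
      refine add_le_add ((norm_inner_le_norm _ _).trans ?_) ((norm_inner_le_norm _ _).trans ?_)
      · have := (T j).le_opNorm (x k)
        rw [hx.1 k, mul_one] at this
        gcongr
      · have := (T j).le_opNorm (p k)
        have := hyle k
        gcongr
    have := hd.add (hT j)
    simpa using this
  have hz : Tendsto (fun k => tval T (((‖y k‖⁻¹ : ℝ) : ℂ) • y k)) atTop (nhds lam) := by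
    rw [tendsto_pi_nhds]
    intro j
    simp only [tval_smul]
    have h1 : Tendsto (fun k => (((‖y k‖⁻¹) ^ 2 : ℝ) : ℂ)) atTop (nhds 1) := by
      have := (hyn.inv₀ one_ne_zero).pow 2
      have := (Complex.continuous_ofReal.tendsto _).comp this
      simpa [Function.comp_def] using this
    simpa using h1.mul (hTy j)
  have ev1 := (Metric.tendsto_nhds.1 hz) η hη
  have ev2 : ∀ᶠ k in atTop, (0:ℝ) < ‖y k‖ := hyn.eventually (lt_mem_nhds one_pos)
  obtain ⟨k, h1, h2⟩ := (ev1.and ev2).exists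
  refine ⟨_, Gᗮ.smul_mem _ (hyG k), ?_, h1⟩
  rw [norm_smul]
  simp [h2.ne']

variable [CompleteSpace H]

/-- span of `x`, the `T j x` and the `(T j)† x` -/
noncomputable def extSpan (T : Fin n → H →L[ℂ] H) (x : H) : Submodule ℂ H :=
  Submodule.span ℂ (insert x (Set.range (fun j => T j x) ∪
    Set.range (fun j => ContinuousLinearMap.adjoint (T j) x)))

instance ext_fd (T : Fin n → H →L[ℂ] H) (x : H) : FiniteDimensional ℂ (extSpan T x) :=
  FiniteDimensional.span_of_finite ℂ
    (((Set.finite_range _).union (Set.finite_range _)).insert _)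

lemma ext_orth (T : Fin n → H →L[ℂ] H) (x y : H) (hy : y ∈ (extSpan T x)ᗮ) :
    ⟪x, y⟫ = 0 ∧ ∀ j, ⟪T j x, y⟫ = 0 ∧ ⟪T j y, x⟫ = 0 := by
  rw [Submodule.mem_orthogonal] at hy
  refine ⟨hy _ (Submodule.subset_span (Or.inl rfl)), fun j => ⟨hy _ (Submodule.subset_span
    (Or.inr (Or.inl ⟨j, rfl⟩))), ?_⟩⟩
  have := hy _ (Submodule.subset_span (Or.inr (Or.inr ⟨j, rfl⟩)))
  rw [ContinuousLinearMap.adjoint_inner_left] at this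
  rw [← inner_conj_symm, this, map_zero]

lemma family {ι : Type*} [DecidableEq ι] (T : Fin n → H →L[ℂ] H) (w : ι → Fin n → ℂ)
    (hw : ∀ i, w i ∈ jointEssNumRange T)
    (G : Submodule ℂ H) [FiniteDimensional ℂ G] (η : ℝ) (hη : 0 < η) (s : Finset ι) :
    ∃ x : ι → H, (∀ i ∈ s, x i ∈ Gᗮ ∧ ‖x i‖ = 1 ∧ dist (tval T (x i)) (w i) < η) ∧
      ∀ i ∈ s, ∀ l ∈ s, i ≠ l → ⟪x i, x l⟫ = 0 ∧ ∀ j, ⟪T j (x i), x l⟫ = 0 := by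
  induction s using Finset.induction_on with
  | empty => exact ⟨fun _ => 0, by simp, by simp⟩
  | insert a s ha ih =>
    obtain ⟨x, h1, h2⟩ := ih
    obtain ⟨y, hy, hy1, hy2⟩ := approx T (w a) (hw a) (G ⊔ s.sup (fun i => extSpan T (x i))) η hη
    have hyG : y ∈ Gᗮ := Submodule.orthogonal_le le_sup_left hy
    have hye : ∀ i ∈ s, y ∈ (extSpan T (x i))ᗮ := fun i hi =>
      Submodule.orthogonal_le ((Finset.le_sup (f := fun i => extSpan T (x i)) hi).trans le_sup_right) hy
    have hne : ∀ i ∈ s, i ≠ a := fun i hi h => ha (h ▸ hi)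
    refine ⟨Function.update x a y, ?_, ?_⟩
    · intro i hi
      rcases Finset.mem_insert.1 hi with rfl | hi
      · simpa using ⟨hyG, hy1, hy2⟩
      · simpa [hne i hi] using h1 i hi
    · intro i hi l hl hil
      rcases Finset.mem_insert.1 hi with hia | hi' <;> rcases Finset.mem_insert.1 hl with hla | hl'
      · exact absurd (hia.trans hla.symm) hil
      · subst hia
        have := ext_orth T _ _ (hye l hl')
        simp only [Function.update_self, Function.update_of_ne (hne l hl')]
        exact ⟨by rw [← inner_conj_symm, this.1, map_zero], fun j => (this.2 j).2⟩
      · subst hla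
        have := ext_orth T _ _ (hye i hi')
        simp only [Function.update_self, Function.update_of_ne (hne i hi')]
        exact ⟨this.1, fun j => (this.2 j).1⟩
      · simp only [Function.update_of_ne (hne i hi'), Function.update_of_ne (hne l hl')]
        exact h2 i hi' l hl' hil

/-- splitting a divergent nonnegative series into infinitely many divergent ones -/
lemma splitting (t : ℕ → ℝ) (h0 : ∀ k, 0 ≤ t k) (h1 : ∀ k, t k ≤ 1 / 2)
    (ht : Tendsto (fun N => ∑ k ∈ Finset.range N, t k) atTop atTop) :
    ∃ m : ℕ → ℕ, ∀ j, Tendsto (fun N => ∑ k ∈ Finset.range N, if m k = j then t k else 0)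
      atTop atTop := by
  set S : ℕ → ℝ := fun N => ∑ k ∈ Finset.range N, t k with hS
  have hS0 : ∀ k, 0 ≤ S k := fun k => Finset.sum_nonneg fun i _ => h0 i
  have hSs : ∀ k, S (k + 1) = S k + t k := fun k => Finset.sum_range_succ _ _
  have hmono : Monotone S := monotone_nat_of_le_succ fun k => by rw [hSs]; linarith [h0 k]
  have hSle : ∀ k, S k ≤ k / 2 := by
    intro k
    induction k with
    | zero => simp [hS]
    | succ k ih => rw [hSs]; push_cast; linarith [h1 k]
  have hex : ∀ i : ℕ, ∃ a, (i : ℝ) ≤ S a := fun i => (ht.eventually_ge_atTop (i : ℝ)).exists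
  let f : ℕ → ℕ := fun k => (Nat.unpair ⌊S k⌋₊).1
  refine ⟨f, fun j => ?_⟩
  have hg0 : ∀ k, 0 ≤ (if f k = j then t k else 0) := fun k => by
    split_ifs <;> simp [h0]
  rw [← not_summable_iff_tendsto_nat_atTop_of_nonneg hg0]
  intro hsum
  have hc := hsum.hasSum.tendsto_sum_nat.cauchySeq
  rw [Metric.cauchySeq_iff] at hc
  obtain ⟨K, hK⟩ := hc (1 / 2) (by norm_num)
  set i := Nat.pair j K with hi
  classical
  set a := Nat.find (hex i)
  set b := Nat.find (hex (i + 1))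
  have ha : (i : ℝ) ≤ S a := Nat.find_spec (hex i)
  have hb : ((i + 1 : ℕ) : ℝ) ≤ S b := Nat.find_spec (hex (i + 1))
  have hb' : ∀ k < b, S k < ((i + 1 : ℕ) : ℝ) := fun k hk => not_le.1 (Nat.find_min (hex (i + 1)) hk)
  have ha' : S a ≤ i + 1 / 2 := by
    rcases Nat.eq_zero_or_pos a with h | h
    · rw [h]; simp only [hS, Finset.range_zero, Finset.sum_empty]; positivity
    · obtain ⟨c, hc⟩ := Nat.exists_eq_succ_of_ne_zero h.ne'
      have := not_le.1 (Nat.find_min (hex i) (show c < a by omega))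
      rw [hc, Nat.succ_eq_add_one, hSs]
      linarith [h1 c]
  have hKi : K ≤ i := Nat.right_le_pair _ _
  have hKa : K ≤ a := by
    have h2 := ha.trans (hSle a)
    have h3 : (i : ℝ) ≤ a := h2.trans (by linarith [(Nat.cast_nonneg a : (0:ℝ) ≤ a)])
    exact hKi.trans (by exact_mod_cast h3)
  push_cast at hb hb'
  have hab : a ≤ b := by
    by_contra h
    have := hmono (not_le.1 h).le
    linarith
  have := hK b (hKa.trans hab) a hKa
  rw [Real.dist_eq, ← Finset.sum_Ico_eq_sub _ hab] at this
  have e : ∑ k ∈ Finset.Ico a b, (if f k = j then t k else 0) = S b - S a := by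
    rw [← Finset.sum_Ico_eq_sub _ hab]
    refine Finset.sum_congr rfl fun k hk => ?_
    rw [Finset.mem_Ico] at hk
    have : ⌊S k⌋₊ = i := by
      rw [Nat.floor_eq_iff (hS0 k)]
      exact ⟨ha.trans (hmono hk.1), hb' k hk.2⟩
    simp [f, this, hi]
  rw [e] at this
  have := (le_abs_self _).trans_lt this
  linarith

/-- a perturbed net of a ball still contains the centre in its convex hull -/
lemma net_hull {V ι : Type*} [NormedAddCommGroup V] [NormedSpace ℝ V] [Finite ι]
    (r : ℝ) (hr : 0 < r) (w' : ι → V)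
    (hnet : ∀ v : V, ‖v‖ < r → ∃ i, dist v (w' i) < r / 2) :
    (0 : V) ∈ convexHull ℝ (Set.range w') := by
  by_contra h
  have hcl : IsClosed (convexHull ℝ (Set.range w')) :=
    ((Set.finite_range w').isCompact_convexHull ℝ).isClosed
  obtain ⟨f, u, hu, hf⟩ := geometric_hahn_banach_point_closed (convex_convexHull ℝ _) hcl h
  have hfw : ∀ i, 0 < f (w' i) := fun i => by
    have := hf _ (subset_convexHull ℝ _ ⟨i, rfl⟩)
    rw [map_zero] at hu; linarith
  obtain ⟨i0, -⟩ := hnet 0 (by simpa using hr)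
  have hf0 : 0 < ‖f‖ := by
    rw [norm_pos_iff]; rintro rfl; simpa using hfw i0
  have key : ∀ v : V, ‖v‖ < r → -(‖f‖ * (r / 2)) < f v := by
    intro v hv
    obtain ⟨i, hi⟩ := hnet v hv
    have h1 := f.le_opNorm (v - w' i)
    rw [← dist_eq_norm, map_sub, Real.norm_eq_abs] at h1
    have h2 := (abs_le.1 h1).1
    have h3 := hfw i
    have h4 : ‖f‖ * dist v (w' i) < ‖f‖ * (r / 2) := by gcongr
    linarith
  obtain ⟨x, hx, hx2⟩ := f.exists_lt_apply_of_lt_opNorm (show ‖f‖ / 2 < ‖f‖ by linarith)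
  have hrx : ‖r • x‖ < r := by
    rw [norm_smul, Real.norm_of_nonneg hr.le]; nlinarith
  have k1 := key (r • x) hrx
  have k2 := key (-(r • x)) (by rwa [norm_neg])
  rw [map_neg] at k2
  rw [map_smul, smul_eq_mul] at k1 k2
  have : |r * f x| < ‖f‖ * (r / 2) := abs_lt.2 ⟨k1, by linarith⟩
  rw [abs_mul, abs_of_pos hr] at this
  rw [Real.norm_eq_abs] at hx2
  nlinarith


lemma form_sum {ι : Type*} (s : Finset ι) (S : H →L[ℂ] H) (x : ι → H) (a : ι → ℝ)
    (ha : ∀ i ∈ s, 0 ≤ a i) (h : ∀ i ∈ s, ∀ l ∈ s, i ≠ l → ⟪S (x i), x l⟫ = 0) :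
    ⟪S (∑ i ∈ s, ((√(a i) : ℝ) : ℂ) • x i), ∑ i ∈ s, ((√(a i) : ℝ) : ℂ) • x i⟫
      = ∑ i ∈ s, (a i : ℂ) * ⟪S (x i), x i⟫ := by
  rw [map_sum, sum_inner]
  refine Finset.sum_congr rfl fun i hi => ?_
  rw [inner_sum, Finset.sum_eq_single i]
  · rw [map_smul, inner_smul_left, inner_smul_right, Complex.conj_ofReal, ← mul_assoc,
      ← Complex.ofReal_mul, Real.mul_self_sqrt (ha i hi)]
  · intro l hl hli
    rw [map_smul, inner_smul_left, inner_smul_right, h i hi l hl hli.symm]; simp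
  · intro h'; exact absurd hi h'

lemma exact_value (T : Fin n → H →L[ℂ] H) (M : AffineSubspace ℝ (Fin n → ℂ))
    (hW : ∀ x : H, ‖x‖ = 1 → tval T x ∈ M) (ν : Fin n → ℂ) (hν : ν ∈ M) (ε : ℝ) (hε : 0 < ε)
    (hin : ∀ y ∈ M, dist y ν < ε → y ∈ jointEssNumRange T)
    (G : Submodule ℂ H) [FiniteDimensional ℂ G] :
    ∃ x ∈ Gᗮ, ‖x‖ = 1 ∧ tval T x = ν := by
  classical
  have hr : 0 < ε / 2 := by positivity
  obtain ⟨t, hts, htf, hcov⟩ := (isCompact_closedBall (0 : M.direction) (ε / 2)).finite_cover_balls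
    (show 0 < ε / 2 / 4 by positivity)
  have : Fintype t := htf.fintype
  have hwM : ∀ i : t, ((i : M.direction) : Fin n → ℂ) + ν ∈ M := fun i =>
    AffineSubspace.vadd_mem_of_mem_direction i.1.2 hν
  have hw : ∀ i : t, ((i : M.direction) : Fin n → ℂ) + ν ∈ jointEssNumRange T := by
    intro i
    refine hin _ (hwM i) ?_
    have := hts i.2
    rw [mem_closedBall_zero_iff] at this
    rw [dist_eq_norm, add_sub_cancel_right]
    exact lt_of_le_of_lt this (by linarith)
  obtain ⟨x, hx1, hx2⟩ := family T (fun i : t => ((i : M.direction) : Fin n → ℂ) + ν) hw G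
    (ε / 2 / 4) (by positivity) Finset.univ
  let w' : t → M.direction := fun i => ⟨tval T (x i) - ν,
    AffineSubspace.vsub_mem_direction (hW _ (hx1 i (Finset.mem_univ _)).2.1) hν⟩
  have hhull : (0 : M.direction) ∈ convexHull ℝ (Set.range w') := by
    refine net_hull (ε / 2) hr w' fun v hv => ?_
    have hv' : v ∈ closedBall (0 : M.direction) (ε / 2) := by
      rw [mem_closedBall_zero_iff]; exact hv.le
    obtain ⟨i, hi, hvi⟩ := Set.mem_iUnion₂.1 (hcov hv')
    refine ⟨⟨i, hi⟩, ?_⟩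
    have h1 := (hx1 ⟨i, hi⟩ (Finset.mem_univ _)).2.2
    have h2 : dist i (w' ⟨i, hi⟩) < ε / 2 / 4 := by
      rw [dist_comm, Subtype.dist_eq, dist_eq_norm]
      rw [dist_eq_norm] at h1
      convert h1 using 2
      simp only [w']
      abel
    have h3 := dist_triangle v i (w' ⟨i, hi⟩)
    rw [mem_ball] at hvi
    linarith
  rw [convexHull_range_eq_exists_affineCombination] at hhull
  obtain ⟨s, a, ha0, ha1, hsum⟩ := hhull
  rw [Finset.affineCombination_eq_linear_combination _ _ _ ha1] at hsum
  have hsum' := congrArg (Subtype.val) hsum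
  simp only [AddSubmonoidClass.coe_finsetSum, Submodule.coe_smul, Submodule.coe_zero, w',
    smul_sub, Finset.sum_sub_distrib, ← Finset.sum_smul, ha1, one_smul, sub_eq_zero] at hsum'
  have ha1' : ∑ i ∈ s, (a i : ℂ) = 1 := by exact_mod_cast ha1
  refine ⟨∑ i ∈ s, ((√(a i) : ℝ) : ℂ) • x i, ?_, ?_, ?_⟩
  · exact Submodule.sum_mem _ fun i _ => Submodule.smul_mem _ _ (hx1 i (Finset.mem_univ _)).1
  · have := form_sum s (ContinuousLinearMap.id ℂ H) x a ha0 fun i _ l _ hil =>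
      (hx2 i (Finset.mem_univ _) l (Finset.mem_univ _) hil).1
    simp only [ContinuousLinearMap.id_apply, inner_self_eq_norm_sq_to_K,
      (hx1 _ (Finset.mem_univ _)).2.1] at this
    simp only [Complex.coe_algebraMap, Complex.ofReal_one, one_pow, mul_one, ha1'] at this
    have h2 : ‖∑ i ∈ s, ((√(a i) : ℝ) : ℂ) • x i‖ ^ 2 = 1 := by exact_mod_cast this
    exact (pow_eq_one_iff_of_nonneg (norm_nonneg _) two_ne_zero).1 h2
  · ext j
    have := form_sum s (T j) x a ha0 fun i _ l _ hil =>
      (hx2 i (Finset.mem_univ _) l (Finset.mem_univ _) hil).2 j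
    rw [tval, this]
    have h3 := congrFun hsum' j
    rw [← h3, Finset.sum_apply]
    simp [tval]

lemma tval_norm_le (T : Fin n → H →L[ℂ] H) (x : H) (hx : ‖x‖ = 1) :
    ‖tval T x‖ ≤ ∑ j, ‖T j‖ := by
  rw [pi_norm_le_iff_of_nonneg (Finset.sum_nonneg fun _ _ => norm_nonneg _)]
  intro j
  have h1 : ‖tval T x j‖ ≤ ‖T j‖ := by
    refine (norm_inner_le_norm _ _).trans ?_
    have := (T j).le_opNorm x
    rw [hx, mul_one] at this ⊢
    exact this
  exact h1.trans (Finset.single_le_sum (f := fun j => ‖T j‖) (fun _ _ => norm_nonneg _)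
    (Finset.mem_univ j))

lemma ess_norm_le (T : Fin n → H →L[ℂ] H) (lam : Fin n → ℂ) (h : lam ∈ jointEssNumRange T) :
    ‖lam‖ ≤ ∑ j, ‖T j‖ := by
  obtain ⟨x, hx, hT⟩ := h
  have : Tendsto (fun k => tval T (x k)) atTop (nhds lam) := tendsto_pi_nhds.2 hT
  exact le_of_tendsto this.norm (Eventually.of_forall fun k => tval_norm_le T _ (hx.1 k))

lemma step (T : Fin n → H →L[ℂ] H) (M : AffineSubspace ℝ (Fin n → ℂ))
    (hW : ∀ x : H, ‖x‖ = 1 → tval T x ∈ M) (lam : Fin n → ℂ) (hl : lam ∈ M) (δ : ℝ) (hδ : 0 < δ)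
    (hin : ∀ y ∈ M, dist y lam < δ → y ∈ jointEssNumRange T)
    (t : ℝ) (ht0 : 0 ≤ t) (ht1 : t ≤ 1 / 2) (htδ : 4 * (∑ j, ‖T j‖) * t < δ)
    (F : Submodule ℂ H) [FiniteDimensional ℂ F] (b : H) (hb : b ∈ Fᗮ) :
    ∃ u ∈ Fᗮ, ‖u‖ = 1 ∧ tval T u = lam ∧ t * ‖b‖ ^ 2 ≤ ‖⟪u, b⟫‖ ^ 2 := by
  by_cases hb0 : b = 0
  · obtain ⟨u, h1, h2, h3⟩ := exact_value T M hW lam hl δ hδ hin F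
    exact ⟨u, h1, h2, h3, by simp [hb0]⟩
  have hbn : ‖b‖ ≠ 0 := norm_ne_zero_iff.2 hb0
  set c : H := ((‖b‖⁻¹ : ℝ) : ℂ) • b with hc
  have hc1 : ‖c‖ = 1 := by rw [hc, norm_smul]; simp [hbn]
  have hcF : c ∈ Fᗮ := Submodule.smul_mem _ _ hb
  have hcb : ⟪c, b⟫ = ‖b‖ := by
    rw [hc, inner_smul_left, inner_self_eq_norm_sq_to_K]
    simp only [Complex.conj_ofReal, Complex.coe_algebraMap]
    push_cast
    have : (‖b‖ : ℂ) ≠ 0 := by exact_mod_cast hbn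
    field_simp
  set K := ∑ j, ‖T j‖
  have h1t : 0 < 1 - t := by linarith
  set μ := tval T c with hμ
  have hμM : μ ∈ M := hW c hc1
  set ν : Fin n → ℂ := (t / (1 - t)) • (lam - μ) + lam with hν
  have hνM : ν ∈ M := AffineSubspace.vadd_mem_of_mem_direction
    (M.direction.smul_mem _ (AffineSubspace.vsub_mem_direction hl hμM)) hl
  have hK : ‖lam - μ‖ ≤ 2 * K := by
    have h1 := ess_norm_le T lam (hin lam hl (by simpa using hδ))
    have h2 := tval_norm_le T c hc1
    have := norm_sub_le lam μ
    linarith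
  have hdist : dist ν lam < δ := by
    rw [dist_eq_norm, hν, add_sub_cancel_right, norm_smul, Real.norm_of_nonneg (by positivity)]
    have h2 : t / (1 - t) ≤ 2 * t := by
      rw [div_le_iff₀ h1t]; nlinarith
    calc t / (1 - t) * ‖lam - μ‖ ≤ (2 * t) * (2 * K) := by gcongr
      _ < δ := by linarith
  obtain ⟨x, hx, hx1, hxν⟩ := exact_value T M hW ν hνM (δ - dist ν lam) (by linarith)
    (fun y hy hyd => hin y hy (by linarith [dist_triangle y ν lam])) (F ⊔ extSpan T c)
  have hxF : x ∈ Fᗮ := Submodule.orthogonal_le le_sup_left hx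
  have hxc := ext_orth T c x (Submodule.orthogonal_le le_sup_right hx)
  have hxc' : ⟪x, c⟫ = 0 := by rw [← inner_conj_symm, hxc.1, map_zero]
  have s1 : ((√(1 - t) : ℝ) : ℂ) * (√(1 - t) : ℝ) = ((1 - t : ℝ) : ℂ) := by
    rw [← Complex.ofReal_mul, Real.mul_self_sqrt h1t.le]
  have s2 : ((√t : ℝ) : ℂ) * (√t : ℝ) = (t : ℂ) := by
    rw [← Complex.ofReal_mul, Real.mul_self_sqrt ht0]
  have hxb : ⟪x, b⟫ = 0 := by
    have : b = (‖b‖ : ℂ) • c := by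
      rw [hc, smul_smul, ← Complex.ofReal_mul, mul_inv_cancel₀ hbn]; simp
    rw [this, inner_smul_right, hxc', mul_zero]
  refine ⟨((√(1 - t) : ℝ) : ℂ) • x + ((√t : ℝ) : ℂ) • c,
    Submodule.add_mem _ (Submodule.smul_mem _ _ hxF) (Submodule.smul_mem _ _ hcF), ?_, ?_, ?_⟩
  · have : ‖((√(1 - t) : ℝ) : ℂ) • x + ((√t : ℝ) : ℂ) • c‖ ^ 2 = 1 := by
      rw [sq, norm_add_sq_eq_norm_sq_add_norm_sq_of_inner_eq_zero (𝕜 := ℂ)]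
      · rw [norm_smul, norm_smul, hx1, hc1, Complex.norm_real, Complex.norm_real,
          Real.norm_of_nonneg (Real.sqrt_nonneg _), Real.norm_of_nonneg (Real.sqrt_nonneg _)]
        rw [mul_one, mul_one, Real.mul_self_sqrt h1t.le, Real.mul_self_sqrt ht0]; ring
      · rw [inner_smul_left, inner_smul_right, hxc']; simp
    exact (pow_eq_one_iff_of_nonneg (norm_nonneg _) two_ne_zero).1 this
  · ext j
    have e1 : ⟪T j x, x⟫ = ν j := congrFun hxν j
    have e2 : ⟪T j c, c⟫ = μ j := rfl
    have : tval T (((√(1 - t) : ℝ) : ℂ) • x + ((√t : ℝ) : ℂ) • c) j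
        = ((1 - t : ℝ) : ℂ) * ν j + (t : ℂ) * μ j := by
      rw [← e1, ← e2, ← s1, ← s2]
      simp only [tval, map_add, map_smul, inner_add_left, inner_add_right, inner_smul_left,
        inner_smul_right, Complex.conj_ofReal, (hxc.2 j).1, (hxc.2 j).2]
      ring
    rw [this, hν]
    simp only [Pi.add_apply, Pi.smul_apply, Pi.sub_apply, Complex.real_smul]
    have h1tc : (1 - (t : ℂ)) ≠ 0 := by
      have : ((1 - t : ℝ) : ℂ) ≠ 0 := by exact_mod_cast h1t.ne'
      simpa using this
    push_cast
    field_simp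
    ring
  · rw [inner_add_left, inner_smul_left, inner_smul_left, hxb, hcb]
    simp only [mul_zero, zero_add, Complex.conj_ofReal]
    rw [← Complex.ofReal_mul, Complex.norm_real, Real.norm_eq_abs, sq_abs, mul_pow,
      Real.sq_sqrt ht0]

end helpers

/-- `ℂ^n` is viewed as a real affine space (i.e. as `ℝ^{2n}`); `M` is the smallest real
affine subspace containing the joint numerical range `W(𝒯)`.  A sequence in the interior
of `W_e(𝒯)` relative to `M` satisfying the Blaschke-type condition
`∑ₖ dist(λ_k, M ∖ W_e(𝒯)) = ∞` is a diagonal of `𝒯`. -/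
theorem stmt_1 {H : Type*} [NormedAddCommGroup H] [InnerProductSpace ℂ H]
    [CompleteSpace H] [TopologicalSpace.SeparableSpace H]
    (hdim : ¬ FiniteDimensional ℂ H)
    {n : ℕ} (T : Fin n → H →L[ℂ] H)
    (M : AffineSubspace ℝ (Fin n → ℂ))
    (hM : M = affineSpan ℝ (jointNumRange T))
    (lam : ℕ → Fin n → ℂ)
    -- each `λ_k` lies in the interior of `W_e(𝒯)` relative to `M`
    (hmem : ∀ k, lam k ∈ (M : Set (Fin n → ℂ)) ∧ ∃ ε > 0, ∀ y ∈ (M : Set (Fin n → ℂ)),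
      dist y (lam k) < ε → y ∈ jointEssNumRange T)
    (hblaschke : Tendsto
      (fun N => ∑ k ∈ Finset.range N,
        Metric.infDist (lam k) ((M : Set (Fin n → ℂ)) \ jointEssNumRange T))
      atTop atTop) :
    ∃ u : HilbertBasis ℕ ℂ H, ∀ k j, ⟪(T j) (u k), u k⟫ = lam k j := by
  classical
  subst hM
  set M := affineSpan ℝ (jointNumRange T) with hM
  have hW : ∀ x : H, ‖x‖ = 1 → tval T x ∈ M := fun x hx =>
    subset_affineSpan ℝ _ ⟨x, hx, fun _ => rfl⟩
  set A : Set (Fin n → ℂ) := (M : Set (Fin n → ℂ)) \ jointEssNumRange T with hA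
  have hne : A.Nonempty := by
    by_contra h
    rw [Set.not_nonempty_iff_eq_empty] at h
    rw [h] at hblaschke
    simp only [Metric.infDist_empty, Finset.sum_const_zero] at hblaschke
    obtain ⟨N, hN⟩ := (hblaschke.eventually_ge_atTop 1).exists
    linarith
  set δ : ℕ → ℝ := fun k => Metric.infDist (lam k) A with hδ
  have hδpos : ∀ k, 0 < δ k := by
    intro k
    obtain ⟨hk, ε, hε, hin⟩ := hmem k
    refine lt_of_lt_of_le hε ((Metric.le_infDist hne).2 fun y hy => ?_)
    by_contra h
    exact hy.2 (hin y hy.1 (by rw [dist_comm]; exact not_le.1 h))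
  have hin : ∀ k, ∀ y ∈ M, dist y (lam k) < δ k → y ∈ jointEssNumRange T := by
    intro k y hy hd
    by_contra h
    rw [dist_comm] at hd
    exact Metric.notMem_of_dist_lt_infDist hd ⟨hy, h⟩
  obtain ⟨y0, hy0⟩ := hne
  set K := ∑ j, ‖T j‖ with hK
  have hK0 : 0 ≤ K := Finset.sum_nonneg fun _ _ => norm_nonneg _
  set C := 4 * K + 2 * (K + ‖y0‖) + 1 with hC
  have hC0 : 0 < C := by positivity
  have hδle : ∀ k, δ k ≤ K + ‖y0‖ := by
    intro k
    have h1 := ess_norm_le T (lam k) (hin k _ (hmem k).1 (by simpa using hδpos k))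
    have h2 : δ k ≤ dist (lam k) y0 := Metric.infDist_le_dist_of_mem hy0
    rw [dist_eq_norm] at h2
    linarith [norm_sub_le (lam k) y0]
  set t : ℕ → ℝ := fun k => δ k / C with htdef
  have ht0 : ∀ k, 0 ≤ t k := fun k => (div_pos (hδpos k) hC0).le
  have ht1 : ∀ k, t k ≤ 1 / 2 := fun k => by
    simp only [htdef]
    rw [div_le_iff₀ hC0]; linarith [hδle k]
  have htδ : ∀ k, 4 * K * t k < δ k := fun k => by
    simp only [htdef]
    rw [mul_div_assoc', div_lt_iff₀ hC0]
    nlinarith [hδpos k, norm_nonneg y0]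
  have htsum : Tendsto (fun N => ∑ k ∈ Finset.range N, t k) atTop atTop := by
    simp only [htdef, ← Finset.sum_div]
    exact hblaschke.atTop_div_const hC0
  obtain ⟨m, hm⟩ := splitting t ht0 ht1 htsum
  let e : ℕ → H := TopologicalSpace.denseSeq H
  have hstep : ∀ (k : ℕ) (F : Submodule ℂ H), ∃ u : H, ∀ _ : FiniteDimensional ℂ F,
      u ∈ Fᗮ ∧ ‖u‖ = 1 ∧ tval T u = lam k ∧
      t k * ‖e (m k) - F.starProjection (e (m k))‖ ^ 2
        ≤ ‖⟪u, e (m k) - F.starProjection (e (m k))⟫‖ ^ 2 := by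
    intro k F
    by_cases hF : FiniteDimensional ℂ F
    · obtain ⟨u, h1, h2, h3, h4⟩ := step T M hW (lam k) (hmem k).1 (δ k) (hδpos k) (hin k) (t k)
        (ht0 k) (ht1 k) (htδ k) F (e (m k) - F.starProjection (e (m k)))
        (Submodule.sub_starProjection_mem_orthogonal _)
      exact ⟨u, fun _ => ⟨h1, h2, h3, h4⟩⟩
    · exact ⟨0, fun h => absurd h hF⟩
  choose g hg using hstep
  let F : ℕ → Submodule ℂ H := fun k => Nat.rec (motive := fun _ => Submodule ℂ H) ⊥ (fun k F => F ⊔ Submodule.span ℂ {g k F}) k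
  let u : ℕ → H := fun k => g k (F k)
  have hFs : ∀ k, F (k + 1) = F k ⊔ Submodule.span ℂ {u k} := fun k => rfl
  have hF0 : F 0 = ⊥ := rfl
  clear_value F
  have hFfd : ∀ k : ℕ, FiniteDimensional ℂ ↥(F k) := by
    intro k
    induction k with
    | zero => rw [hF0]; infer_instance
    | succ k ih => rw [hFs]; infer_instance
  have hFmono : Monotone F := monotone_nat_of_le_succ fun k => by rw [hFs]; exact le_sup_left
  have hu := fun k => hg k (F k) (hFfd k)
  have huF : ∀ k, u k ∈ F (k + 1) := fun k => by
    rw [hFs]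
    exact Submodule.mem_sup_right (Submodule.mem_span_singleton_self _)
  have hlt : ∀ i k, i < k → ⟪u i, u k⟫ = 0 := fun i k hik =>
    (Submodule.mem_orthogonal _ _).1 (hu k).1 _ (hFmono (Nat.succ_le_of_lt hik) (huF i))
  have hon : Orthonormal ℂ u := by
    refine ⟨fun k => (hu k).2.1, fun i k hik => ?_⟩
    rcases lt_or_gt_of_ne hik with h | h
    · exact hlt i k h
    · show ⟪u i, u k⟫ = 0
      rw [← inner_conj_symm, hlt k i h, map_zero]
  have hFspan : ∀ k, F k ≤ Submodule.span ℂ (Set.range u) := by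
    intro k
    induction k with
    | zero => rw [hF0]; exact bot_le
    | succ k ih =>
      rw [hFs]
      exact sup_le ih (Submodule.span_mono (by rintro _ rfl; exact ⟨k, rfl⟩))
  have hdec : ∀ (k : ℕ) (x : H), ‖x - (F (k + 1)).starProjection x‖ ^ 2 ≤
      ‖x - (F k).starProjection x‖ ^ 2 - ‖⟪u k, x - (F k).starProjection x⟫‖ ^ 2 := by
    intro k x
    set q := x - (F k).starProjection x with hq
    have h1 : ‖x - (F (k + 1)).starProjection x‖ ≤ ‖q - ⟪u k, q⟫ • u k‖ := by
      rw [Submodule.starProjection_minimal]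
      have hmem' : (F k).starProjection x + ⟪u k, q⟫ • u k ∈ F (k + 1) :=
        Submodule.add_mem _ (hFmono (Nat.le_succ k) (Submodule.starProjection_apply_mem _ _))
          (Submodule.smul_mem _ _ (huF k))
      have := ciInf_le (f := fun z : F (k + 1) => ‖x - z‖)
        ⟨0, by rintro _ ⟨z, rfl⟩; exact norm_nonneg _⟩ ⟨_, hmem'⟩
      refine this.trans (le_of_eq ?_)
      simp only [hq]
      congr 1
      abel
    have h2 : ‖q‖ ^ 2 = ‖q - ⟪u k, q⟫ • u k‖ ^ 2 + ‖⟪u k, q⟫‖ ^ 2 := by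
      have h3 := norm_add_sq_eq_norm_sq_add_norm_sq_of_inner_eq_zero (𝕜 := ℂ)
        (q - ⟪u k, q⟫ • u k) (⟪u k, q⟫ • u k) (by
          rw [inner_smul_right, inner_sub_left, inner_smul_left, inner_self_eq_norm_sq_to_K,
            (hu k).2.1, inner_conj_symm]
          simp)
      rw [sub_add_cancel, norm_smul, (hu k).2.1] at h3
      rw [sq, h3]; ring
    have h4 : ‖x - (F (k + 1)).starProjection x‖ ^ 2 ≤ ‖q - ⟪u k, q⟫ • u k‖ ^ 2 := by gcongr
    linarith
  have hexp : ∀ i k, ‖e i - (F k).starProjection (e i)‖ ^ 2 ≤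
      ‖e i‖ ^ 2 * Real.exp (-∑ l ∈ Finset.range k, if m l = i then t l else 0) := by
    intro i k
    induction k with
    | zero =>
      have : (F 0).starProjection (e i) = 0 := by
        have := Submodule.starProjection_apply_mem (F 0) (e i)
        exact (Submodule.mem_bot ℂ).1 (hF0.le this)

      simp [this]
    | succ k ih =>
      have h1 := hdec k (e i)
      rw [Finset.sum_range_succ, neg_add, Real.exp_add, ← mul_assoc]
      split_ifs with h
      · have h2 := (hu k).2.2.2
        rw [h] at h2
        have h3 : 1 - t k ≤ Real.exp (-t k) := by linarith [Real.add_one_le_exp (-t k)]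
        have h4 : ‖e i - (F (k + 1)).starProjection (e i)‖ ^ 2 ≤
            ‖e i - (F k).starProjection (e i)‖ ^ 2 * (1 - t k) := by
          have : ‖⟪u k, e i - (F k).starProjection (e i)⟫‖ ^ 2 ≥
            t k * ‖e i - (F k).starProjection (e i)‖ ^ 2 := h2
          linarith
        refine h4.trans (mul_le_mul ih h3 (by linarith [ht1 k]) (by positivity))
      · simp only [neg_zero, Real.exp_zero, mul_one]
        refine le_trans ?_ ih
        linarith [sq_nonneg ‖⟪u k, e i - (F k).starProjection (e i)⟫‖]
  have hlim : ∀ i, Tendsto (fun k => (F k).starProjection (e i)) atTop (nhds (e i)) := by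
    intro i
    have h1 : Tendsto (fun k => ‖e i - (F k).starProjection (e i)‖ ^ 2) atTop (nhds 0) := by
      refine squeeze_zero (fun _ => sq_nonneg _) (hexp i) ?_
      have := ((Real.tendsto_exp_neg_atTop_nhds_zero.comp (hm i)).const_mul (‖e i‖ ^ 2))
      simpa [Function.comp_def] using this
    have h2 := h1.sqrt
    simp only [Real.sqrt_sq (norm_nonneg _), Real.sqrt_zero] at h2
    rw [tendsto_iff_norm_sub_tendsto_zero]
    exact h2.congr fun k => norm_sub_rev _ _
  have hsp : ⊤ ≤ (Submodule.span ℂ (Set.range u)).topologicalClosure := by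
    intro x _
    have h1 : Set.range e ⊆ ((Submodule.span ℂ (Set.range u)).topologicalClosure : Set H) := by
      rintro _ ⟨i, rfl⟩
      rw [Submodule.topologicalClosure_coe]
      exact mem_closure_of_tendsto (hlim i) (Eventually.of_forall fun k =>
        hFspan k (Submodule.starProjection_apply_mem _ _))
    have h2 := closure_minimal h1 (Submodule.isClosed_topologicalClosure _)
    exact h2 (TopologicalSpace.denseRange_denseSeq H x)
  refine ⟨HilbertBasis.mk hon hsp, fun k j => ?_⟩
  rw [HilbertBasis.coe_mk]
  exact congrFun (hu k).2.2.1 j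
end

section
/- Let H be a complex separable infinite-dimensional Hilbert space and 𝒯 = (T_1, …, T_n) an n-tuple of bounded operators on H. Let (λ_k)_{k≥1} be a sequence contained in the interior (in ℂ^n) of W_e(𝒯), and suppose ∑_{k=1}^∞ dist(λ_k, ℂ^n ∖ W_e(𝒯)) = ∞. Then there exists an orthonormal basis (u_k)_{k≥1} of H such that ⟨T_j u_k, u_k⟩ = λ_{k,j} for every k ≥ 1 and every j = 1, …, n. -/
open Filter Metric
open scoped ComplexInnerProductSpace

section Aux

variable {H : Type*} [NormedAddCommGroup H] [InnerProductSpace ℂ H]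

/-- An orthonormal sequence is weakly null. -/
lemma aux_weak_null {x : ℕ → H} (hx : Orthonormal ℂ x) (e : H) :
    Tendsto (fun k => ⟪e, x k⟫) atTop (nhds 0) := by
  have h := (hx.inner_products_summable e).tendsto_atTop_zero
  rw [tendsto_zero_iff_norm_tendsto_zero]
  have h2 := h.sqrt
  simp only [Real.sqrt_zero] at h2
  refine h2.congr fun k => ?_
  rw [Real.sqrt_sq (norm_nonneg _), norm_inner_symm]

lemma aux_proj_null {x : ℕ → H} (hx : Orthonormal ℂ x) (F : Submodule ℂ H)
    [FiniteDimensional ℂ F] :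
    Tendsto (fun k => F.starProjection (x k)) atTop (nhds 0) := by
  have h : ∀ k, F.starProjection (x k)
      = ∑ i, ⟪((stdOrthonormalBasis ℂ F i : F) : H), x k⟫ • ((stdOrthonormalBasis ℂ F i : F) : H) := by
    intro k
    rw [Submodule.starProjection_apply,
      (stdOrthonormalBasis ℂ F).orthogonalProjectionOnto_apply_eq_sum]
    simp
  simp only [h]
  have : (0 : H) = ∑ i, (0 : ℂ) • ((stdOrthonormalBasis ℂ F i : F) : H) := by simp
  rw [this]
  exact tendsto_finsetSum _ fun i _ => (aux_weak_null hx _).smul_const _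

/-- Points of the essential numerical range are approximated off finite-dimensional subspaces. -/
lemma aux_approx {n : ℕ} (T : Fin n → H →L[ℂ] H) {p : Fin n → ℂ}
    (hp : p ∈ jointEssNumRange T) (F : Submodule ℂ H) [FiniteDimensional ℂ F]
    {δ : ℝ} (hδ : 0 < δ) :
    ∃ x : H, ‖x‖ = 1 ∧ x ∈ Fᗮ ∧ dist (fun j => ⟪T j x, x⟫) p < δ := by
  obtain ⟨x, hx, hT⟩ := hp
  set y : ℕ → H := fun k => x k - F.starProjection (x k) with hy
  have hP := aux_proj_null hx F
  have hyx : Tendsto (fun k => ‖y k‖) atTop (nhds 1) := by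
    have h1 : Tendsto (fun k => ‖F.starProjection (x k)‖) atTop (nhds 0) := by
      simpa using hP.norm
    have hle : ∀ k, |‖y k‖ - 1| ≤ ‖F.starProjection (x k)‖ := by
      intro k
      have := abs_norm_sub_norm_le (y k) (x k)
      rw [hx.1 k] at this
      refine this.trans (le_of_eq ?_)
      simp [hy]
    rw [tendsto_iff_dist_tendsto_zero]
    exact squeeze_zero (fun _ => dist_nonneg) hle h1
  have hTy : ∀ j, Tendsto (fun k => ⟪T j (y k), y k⟫) atTop (nhds (p j)) := by
    intro j
    have e : ∀ k, ⟪T j (y k), y k⟫ = ⟪T j (x k), x k⟫ - ⟪T j (x k), F.starProjection (x k)⟫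
        - ⟪T j (F.starProjection (x k)), y k⟫ := by
      intro k
      simp only [hy, map_sub, inner_sub_left, inner_sub_right]
      ring
    have bd : ∀ k, ‖y k‖ ≤ 2 := by
      intro k
      have := norm_sub_le (x k) (F.starProjection (x k))
      have h2 := F.norm_starProjection_apply_le (x k)
      rw [hx.1 k] at this h2
      simp only [hy]; linarith
    have hPn : Tendsto (fun k => ‖F.starProjection (x k)‖) atTop (nhds 0) := by
      simpa using hP.norm
    have t1 : Tendsto (fun k => ⟪T j (x k), F.starProjection (x k)⟫) atTop (nhds 0) := by
      refine squeeze_zero_norm (a := fun k => ‖T j‖ * ‖F.starProjection (x k)‖) (fun k => ?_) ?_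
      · refine (norm_inner_le_norm _ _).trans ?_
        gcongr
        simpa [hx.1 k] using (T j).le_opNorm (x k)
      · simpa using hPn.const_mul ‖T j‖
    have t2 : Tendsto (fun k => ⟪T j (F.starProjection (x k)), y k⟫) atTop (nhds 0) := by
      refine squeeze_zero_norm (a := fun k => ‖T j‖ * ‖F.starProjection (x k)‖ * 2)
        (fun k => ?_) ?_
      · refine (norm_inner_le_norm _ _).trans ?_
        gcongr
        · exact (T j).le_opNorm _
        · exact bd k
      · simpa using (hPn.const_mul ‖T j‖).mul_const 2
    simp only [e]
    simpa using ((hT j).sub t1).sub t2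
  have hlim : Tendsto (fun k => (fun j => ((‖y k‖ : ℂ)⁻¹ * (‖y k‖ : ℂ)⁻¹) * ⟪T j (y k), y k⟫))
      atTop (nhds p) := by
    rw [tendsto_pi_nhds]
    intro j
    have c : Tendsto (fun k => ((‖y k‖ : ℝ) : ℂ)⁻¹) atTop (nhds 1) := by
      have : Tendsto (fun k => ((‖y k‖ : ℝ) : ℂ)) atTop (nhds ((1 : ℝ) : ℂ)) :=
        (Complex.continuous_ofReal.tendsto _).comp hyx
      simpa using this.inv₀ (by simp)
    simpa using (c.mul c).mul (hTy j)
  have ev1 := (Metric.tendsto_nhds.1 hlim) δ hδ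
  have ev2 := hyx.eventually (lt_mem_nhds (show (0 : ℝ) < 1 by norm_num))
  obtain ⟨k, h1, h2⟩ := (ev1.and ev2).exists
  refine ⟨((‖y k‖ : ℂ)⁻¹) • y k, ?_, ?_, ?_⟩
  · rw [norm_smul, norm_inv, Complex.norm_real, norm_norm]
    exact inv_mul_cancel₀ h2.ne'
  · exact Submodule.smul_mem _ _ (F.sub_starProjection_mem_orthogonal _)
  · refine lt_of_eq_of_lt ?_ h1
    congr 1
    funext j
    rw [map_smul, inner_smul_left, inner_smul_right, mul_assoc]
    simp

variable [CompleteSpace H]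

lemma aux_family {n : ℕ} (T : Fin n → H →L[ℂ] H) {δ : ℝ} (hδ : 0 < δ)
    (F : Submodule ℂ H) [FiniteDimensional ℂ F]
    (s : Finset (Fin n → ℂ)) (hs : ∀ p ∈ s, p ∈ jointEssNumRange T) :
    ∃ x : (Fin n → ℂ) → H, (∀ p ∈ s, ‖x p‖ = 1 ∧ x p ∈ Fᗮ ∧
        dist (fun j => ⟪T j (x p), x p⟫) p < δ) ∧
      (∀ p ∈ s, ∀ q ∈ s, p ≠ q → ⟪x p, x q⟫ = 0 ∧ ∀ j, ⟪T j (x p), x q⟫ = 0) := by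
  classical
  induction s using Finset.induction_on with
  | empty => exact ⟨fun _ => 0, by simp, by simp⟩
  | insert a s ha ih =>
    obtain ⟨x, hx1, hx2⟩ := ih fun p hp => hs p (Finset.mem_insert_of_mem hp)
    set S : Set H := (x '' s) ∪ (⋃ j, (fun p => T j (x p)) '' s) ∪
      (⋃ j, (fun p => (T j).adjoint (x p)) '' s) with hS
    have hSf : S.Finite := by
      refine Set.Finite.union (Set.Finite.union (s.finite_toSet.image _) ?_) ?_
      · exact Set.finite_iUnion fun j => s.finite_toSet.image _
      · exact Set.finite_iUnion fun j => s.finite_toSet.image _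
    have : FiniteDimensional ℂ (Submodule.span ℂ S) := FiniteDimensional.span_of_finite ℂ hSf
    obtain ⟨v, hv1, hv2, hv3⟩ := aux_approx T (hs a (Finset.mem_insert_self _ _))
      (F ⊔ Submodule.span ℂ S) hδ
    have hvF : v ∈ Fᗮ := Submodule.orthogonal_le le_sup_left hv2
    have hvS : ∀ w ∈ S, ⟪w, v⟫ = 0 := fun w hw =>
      (Submodule.mem_orthogonal _ _).1 hv2 w (Submodule.mem_sup_right (Submodule.subset_span hw))
    have hvS' : ∀ w ∈ S, ⟪v, w⟫ = 0 := fun w hw => inner_eq_zero_symm.1 (hvS w hw)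
    have m1 : ∀ p ∈ s, x p ∈ S := fun p hp => Or.inl (Or.inl ⟨p, hp, rfl⟩)
    have m2 : ∀ p ∈ s, ∀ j, T j (x p) ∈ S := fun p hp j =>
      Or.inl (Or.inr (Set.mem_iUnion.2 ⟨j, p, hp, rfl⟩))
    have m3 : ∀ p ∈ s, ∀ j, (T j).adjoint (x p) ∈ S := fun p hp j =>
      Or.inr (Set.mem_iUnion.2 ⟨j, p, hp, rfl⟩)
    have hne : ∀ p ∈ s, p ≠ a := fun p hp h => ha (h ▸ hp)
    refine ⟨Function.update x a v, ?_, ?_⟩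
    · intro p hp
      rcases Finset.mem_insert.1 hp with rfl | hp
      · simp only [Function.update_self]
        exact ⟨hv1, hvF, hv3⟩
      · rw [Function.update_of_ne (hne p hp)]
        exact hx1 p hp
    · intro p hp q hq hpq
      rcases Finset.mem_insert.1 hp with ep | hp' <;> rcases Finset.mem_insert.1 hq with eq | hq'
      · exact absurd (ep.trans eq.symm) hpq
      · subst ep
        rw [Function.update_of_ne (hne q hq'), Function.update_self]
        refine ⟨hvS' _ (m1 q hq'), fun j => ?_⟩
        rw [← ContinuousLinearMap.adjoint_inner_right]
        exact hvS' _ (m3 q hq' j)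
      · subst eq
        rw [Function.update_of_ne (hne p hp'), Function.update_self]
        exact ⟨hvS _ (m1 p hp'), fun j => hvS _ (m2 p hp' j)⟩
      · rw [Function.update_of_ne (hne p hp'), Function.update_of_ne (hne q hq')]
        exact hx2 p hp' q hq' hpq

lemma aux_convex {E : Type*} [NormedAddCommGroup E] [NormedSpace ℝ E] [FiniteDimensional ℝ E]
    {μ : E} {r : ℝ} (hr : 0 < r) {s : Finset E}
    (hcov : closedBall μ r ⊆ ⋃ p ∈ (s : Set E), ball p (r / 4)) {q : E → E}
    (hq : ∀ p ∈ s, dist (q p) p < r / 4) :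
    μ ∈ convexHull ℝ (q '' s) := by
  by_contra hμ
  have hfin : (q '' (s : Set E)).Finite := s.finite_toSet.image _
  obtain ⟨f, u, h1, h2⟩ := geometric_hahn_banach_closed_point (convex_convexHull ℝ _)
    (hfin.isClosed_convexHull ℝ) hμ
  have key : ∀ y ∈ closedBall μ r, f y < f μ + ‖f‖ * (r / 2) := by
    intro y hy
    obtain ⟨p, hp, hyp⟩ := Set.mem_iUnion₂.1 (hcov hy)
    have h3 : f (q p) < f μ := (h1 _ (subset_convexHull ℝ _ ⟨p, hp, rfl⟩)).trans h2
    have h4 : f (y - q p) ≤ ‖f‖ * (r / 2) := by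
      refine (le_abs_self _).trans ((f.le_opNorm _).trans ?_)
      gcongr
      have h5 := dist_triangle y p (q p)
      have h6 := hq p hp
      rw [dist_comm] at h6
      rw [mem_ball] at hyp
      rw [← dist_eq_norm]; linarith
    rw [map_sub] at h4
    linarith
  have hf : f ≠ 0 := by
    rintro rfl
    have := key μ (mem_closedBall_self hr.le)
    simp at this
  have hfp : 0 < ‖f‖ := norm_pos_iff.2 hf
  obtain ⟨x, hx1, hx2⟩ := f.exists_lt_apply_of_lt_opNorm (r := ‖f‖ / 2) (by linarith)
  have hb : ∀ z : E, ‖z‖ < 1 → μ + r • z ∈ closedBall μ r := by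
    intro z hz
    rw [mem_closedBall, dist_eq_norm, add_sub_cancel_left, norm_smul, Real.norm_of_nonneg hr.le]
    nlinarith
  have k1 := key _ (hb x hx1)
  have k2 := key _ (hb (-x) (by simpa using hx1))
  simp only [map_add, map_smul, map_neg, smul_eq_mul] at k1 k2
  rw [Real.norm_eq_abs] at hx2
  rcases lt_abs.1 hx2 with h | h <;> nlinarith

/-- Interior points of the essential numerical range are attained off finite-dimensional
subspaces. -/
lemma aux_attain {n : ℕ} (T : Fin n → H →L[ℂ] H) {μ : Fin n → ℂ}
    (hμ : μ ∈ interior (jointEssNumRange T)) (F : Submodule ℂ H) [FiniteDimensional ℂ F] :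
    ∃ v : H, ‖v‖ = 1 ∧ v ∈ Fᗮ ∧ ∀ j, ⟪T j v, v⟫ = μ j := by
  classical
  obtain ⟨r, hr, hball⟩ := Metric.nhds_basis_closedBall.mem_iff.1 (mem_interior_iff_mem_nhds.1 hμ)
  obtain ⟨t, ht1, ht2, ht3⟩ := (isCompact_closedBall μ r).finite_cover_balls
    (show 0 < r / 4 by linarith)
  lift t to Finset (Fin n → ℂ) using ht2
  obtain ⟨x, hx1, hx2⟩ := aux_family T (show 0 < r / 4 by linarith) F t
    (fun p hp => hball (ht1 hp))
  set q : (Fin n → ℂ) → (Fin n → ℂ) := fun p j => ⟪T j (x p), x p⟫ with hq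
  have hc := aux_convex hr ht3 (q := q) (fun p hp => (hx1 p hp).2.2)
  rw [← Finset.coe_image, Finset.mem_convexHull'] at hc
  obtain ⟨w, hw0, hw1, hw2⟩ := hc
  have hsec : ∀ y, ∃ p, y ∈ t.image q → p ∈ t ∧ q p = y := by
    intro y
    by_cases hy : y ∈ t.image q
    · obtain ⟨p, hp, e⟩ := Finset.mem_image.1 hy
      exact ⟨p, fun _ => ⟨hp, e⟩⟩
    · exact ⟨0, fun h => absurd h hy⟩
  choose g hg using hsec
  have hgne : ∀ y ∈ t.image q, ∀ z ∈ t.image q, y ≠ z → g y ≠ g z := by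
    intro y hy z hz hyz h
    apply hyz
    rw [← (hg y hy).2, ← (hg z hz).2, h]
  set v : H := ∑ y ∈ t.image q, ((√(w y) : ℝ) : ℂ) • x (g y) with hv
  have hsq : ∀ y ∈ t.image q, ((√(w y) : ℝ) : ℂ) * ((√(w y) : ℝ) : ℂ) = (w y : ℂ) := by
    intro y hy
    rw [← Complex.ofReal_mul, Real.mul_self_sqrt (hw0 y hy)]
  have hin : ⟪v, v⟫ = 1 := by
    rw [hv, sum_inner]
    have : ∀ y ∈ t.image q, ⟪((√(w y) : ℝ) : ℂ) • x (g y),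
        ∑ y ∈ t.image q, ((√(w y) : ℝ) : ℂ) • x (g y)⟫ = (w y : ℂ) := by
      intro y hy
      rw [inner_sum, Finset.sum_eq_single y]
      · rw [inner_smul_left, inner_smul_right, inner_self_eq_norm_sq_to_K,
          (hx1 _ (hg y hy).1).1, Complex.conj_ofReal]
        simpa using hsq y hy
      · intro z hz hzy
        rw [inner_smul_left, inner_smul_right,
          (hx2 _ (hg y hy).1 _ (hg z hz).1 (hgne y hy z hz hzy.symm)).1]
        simp
      · exact fun h => absurd hy h
    rw [Finset.sum_congr rfl this]
    exact_mod_cast congrArg (fun a : ℝ => (a : ℂ)) hw1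
  refine ⟨v, ?_, ?_, ?_⟩
  · rw [inner_self_eq_norm_sq_to_K] at hin
    have h2 : ‖v‖ ^ 2 = 1 := by
      have h3 : ((‖v‖ ^ 2 : ℝ) : ℂ) = ((1 : ℝ) : ℂ) := by simpa using hin
      exact Complex.ofReal_injective h3
    have := norm_nonneg v
    nlinarith
  · exact Submodule.sum_mem _ fun y hy => Submodule.smul_mem _ _ (hx1 _ (hg y hy).1).2.1
  · intro j
    rw [hv, map_sum, sum_inner]
    have : ∀ y ∈ t.image q, ⟪T j (((√(w y) : ℝ) : ℂ) • x (g y)),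
        ∑ y ∈ t.image q, ((√(w y) : ℝ) : ℂ) • x (g y)⟫ = (w y • y) j := by
      intro y hy
      rw [inner_sum, Finset.sum_eq_single y]
      · rw [map_smul, inner_smul_left, inner_smul_right, Complex.conj_ofReal, ← mul_assoc,
          hsq y hy]
        have := congrFun (hg y hy).2 j
        simp only [hq] at this
        rw [this]
        simp
      · intro z hz hzy
        rw [map_smul, inner_smul_left, inner_smul_right,
          (hx2 _ (hg y hy).1 _ (hg z hz).1 (hgne y hy z hz hzy.symm)).2 j]
        simp
      · exact fun h => absurd hy h
    rw [Finset.sum_congr rfl this, ← hw2, Finset.sum_apply]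

lemma aux_bound {n : ℕ} (T : Fin n → H →L[ℂ] H) {R : ℝ} (hR : ∀ j, ‖T j‖ ≤ R)
    {p : Fin n → ℂ} (hp : p ∈ jointEssNumRange T) (j : Fin n) : ‖p j‖ ≤ R := by
  obtain ⟨x, hx, hT⟩ := hp
  refine le_of_tendsto (hT j).norm (Eventually.of_forall fun k => ?_)
  refine (norm_inner_le_norm _ _).trans ?_
  have := (T j).le_opNorm (x k)
  rw [hx.1 k] at this ⊢
  linarith [hR j]

lemma aux_dist {n : ℕ} (T : Fin n → H →L[ℂ] H) {R : ℝ} (hR0 : 0 ≤ R) (hR : ∀ j, ‖T j‖ ≤ R)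
    {p : Fin n → ℂ} (hp : p ∈ jointEssNumRange T) :
    infDist p (jointEssNumRange T)ᶜ ≤ 2 * R + 2 := by
  rcases n with _ | n
  · have : (jointEssNumRange T)ᶜ = ∅ := by
      ext q
      simp [Subsingleton.elim q p, hp]
    rw [this, infDist_empty]
    linarith
  · set c : Fin (n + 1) → ℂ := fun _ => ((R + 1 : ℝ) : ℂ) with hc
    have hcW : c ∈ (jointEssNumRange T)ᶜ := by
      intro h
      have := aux_bound T hR h 0
      simp only [hc, Complex.norm_real, Real.norm_eq_abs] at this
      linarith [le_abs_self (R + 1)]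
    refine (infDist_le_dist_of_mem hcW).trans ?_
    rw [dist_pi_le_iff (by linarith)]
    intro j
    rw [dist_eq_norm]
    refine (norm_sub_le _ _).trans ?_
    have := aux_bound T hR hp j
    simp only [hc, Complex.norm_real, Real.norm_eq_abs]
    rw [abs_of_nonneg (by linarith)]
    linarith

lemma aux_step_s2 {n : ℕ} (T : Fin n → H →L[ℂ] H) {R : ℝ} (hR0 : 0 ≤ R) (hR : ∀ j, ‖T j‖ ≤ R)
    {lam : Fin n → ℂ} (hl : lam ∈ interior (jointEssNumRange T)) {t : ℝ} (ht0 : 0 ≤ t)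
    (ht1 : t ≤ 1 / 4) (ht : t * (8 * R + 8) ≤ infDist lam (jointEssNumRange T)ᶜ)
    (M : Submodule ℂ H) [FiniteDimensional ℂ M] {b : H} (hb : ‖b‖ = 1) (hbM : b ∈ Mᗮ) :
    ∃ u : H, ‖u‖ = 1 ∧ u ∈ Mᗮ ∧ (∀ j, ⟪T j u, u⟫ = lam j) ∧ ⟪u, b⟫ = ((√t : ℝ) : ℂ) := by
  set μ : Fin n → ℂ := fun j => ((1 - t : ℝ) : ℂ)⁻¹ * (lam j - (t : ℂ) * ⟪T j b, b⟫) with hμdef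
  have h1t : (0 : ℝ) < 1 - t := by linarith
  have h1tc : ((1 - t : ℝ) : ℂ) ≠ 0 := by exact_mod_cast h1t.ne'
  have hμ : μ ∈ interior (jointEssNumRange T) := by
    rcases ht0.eq_or_lt with h | h
    · have : μ = lam := by
        funext j
        simp [hμdef, ← h]
      rwa [this]
    · have hd : 0 < infDist lam (jointEssNumRange T)ᶜ := lt_of_lt_of_le (by positivity) ht
      have hsub : ball lam (infDist lam (jointEssNumRange T)ᶜ) ⊆ interior (jointEssNumRange T) :=
        interior_maximal ball_infDist_compl_subset isOpen_ball
      apply hsub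
      rw [mem_ball, dist_pi_lt_iff hd]
      intro j
      have e : μ j - lam j = ((1 - t : ℝ) : ℂ)⁻¹ * ((t : ℂ) * (lam j - ⟪T j b, b⟫)) := by
        simp only [hμdef]
        field_simp
        push_cast
        ring
      rw [dist_eq_norm, e, norm_mul, norm_mul, norm_inv, Complex.norm_real, Complex.norm_real,
        Real.norm_of_nonneg h1t.le, Real.norm_of_nonneg ht0]
      have h2 : ‖lam j - ⟪T j b, b⟫‖ ≤ 2 * R := by
        refine (norm_sub_le _ _).trans ?_
        have h3 := aux_bound T hR (interior_subset hl) j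
        have h4 : ‖⟪T j b, b⟫‖ ≤ R := by
          refine (norm_inner_le_norm _ _).trans ?_
          have := (T j).le_opNorm b
          rw [hb] at this ⊢
          linarith [hR j]
        linarith
      rw [inv_mul_lt_iff₀ h1t]
      have h5 : t * ‖lam j - ⟪T j b, b⟫‖ ≤ t * (2 * R) := by gcongr
      have h6 : (1 - t) * infDist lam (jointEssNumRange T)ᶜ ≥ (3 / 4) * (t * (8 * R + 8)) :=
        mul_le_mul (by linarith) ht (by positivity) h1t.le
      nlinarith [mul_nonneg ht0 hR0]
  set S : Set H := {b} ∪ (Set.range fun j => T j b) ∪ (Set.range fun j => (T j).adjoint b) with hS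
  have hSf : S.Finite :=
    ((Set.finite_singleton b).union (Set.finite_range _)).union (Set.finite_range _)
  have : FiniteDimensional ℂ (Submodule.span ℂ S) := FiniteDimensional.span_of_finite ℂ hSf
  obtain ⟨v, hv1, hv2, hv3⟩ := aux_attain T hμ (M ⊔ Submodule.span ℂ S)
  have hvM : v ∈ Mᗮ := Submodule.orthogonal_le le_sup_left hv2
  have hvS : ∀ w ∈ S, ⟪w, v⟫ = 0 := fun w hw =>
    (Submodule.mem_orthogonal _ _).1 hv2 w (Submodule.mem_sup_right (Submodule.subset_span hw))
  have hvS' : ∀ w ∈ S, ⟪v, w⟫ = 0 := fun w hw => inner_eq_zero_symm.1 (hvS w hw)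
  have b1 : ⟪b, v⟫ = 0 := hvS _ (Or.inl (Or.inl rfl))
  have b2 : ⟪v, b⟫ = 0 := hvS' _ (Or.inl (Or.inl rfl))
  have b3 : ∀ j, ⟪T j b, v⟫ = 0 := fun j => hvS _ (Or.inl (Or.inr ⟨j, rfl⟩))
  have b4 : ∀ j, ⟪T j v, b⟫ = 0 := fun j => by
    rw [← ContinuousLinearMap.adjoint_inner_right]
    exact hvS' _ (Or.inr ⟨j, rfl⟩)
  have bb : ⟪b, b⟫ = 1 := by rw [inner_self_eq_norm_sq_to_K, hb]; simp
  have vv : ⟪v, v⟫ = 1 := by rw [inner_self_eq_norm_sq_to_K, hv1]; simp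
  have s1 : ((√t : ℝ) : ℂ) * ((√t : ℝ) : ℂ) = (t : ℂ) := by
    rw [← Complex.ofReal_mul, Real.mul_self_sqrt ht0]
  have s2 : ((√(1 - t) : ℝ) : ℂ) * ((√(1 - t) : ℝ) : ℂ) = ((1 - t : ℝ) : ℂ) := by
    rw [← Complex.ofReal_mul, Real.mul_self_sqrt h1t.le]
  refine ⟨((√t : ℝ) : ℂ) • b + ((√(1 - t) : ℝ) : ℂ) • v, ?_, ?_, ?_, ?_⟩
  · have hin : ⟪((√t : ℝ) : ℂ) • b + ((√(1 - t) : ℝ) : ℂ) • v,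
        ((√t : ℝ) : ℂ) • b + ((√(1 - t) : ℝ) : ℂ) • v⟫ = 1 := by
      simp only [inner_add_left, inner_add_right, inner_smul_left, inner_smul_right,
        Complex.conj_ofReal, b1, b2, bb, vv, mul_zero, mul_one, add_zero, zero_add, s1, s2]
      push_cast
      ring
    rw [inner_self_eq_norm_sq_to_K] at hin
    set w := ((√t : ℝ) : ℂ) • b + ((√(1 - t) : ℝ) : ℂ) • v
    have h2 : ‖w‖ ^ 2 = 1 := by
      have h3 : ((‖w‖ ^ 2 : ℝ) : ℂ) = ((1 : ℝ) : ℂ) := by simpa using hin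
      exact Complex.ofReal_injective h3
    have := norm_nonneg w
    nlinarith
  · exact Submodule.add_mem _ (Submodule.smul_mem _ _ hbM) (Submodule.smul_mem _ _ hvM)
  · intro j
    simp only [map_add, map_smul, inner_add_left, inner_add_right, inner_smul_left,
      inner_smul_right, Complex.conj_ofReal, b3, b4, hv3, mul_zero, add_zero, zero_add,
      ← mul_assoc, s1, s2]
    simp only [hμdef]
    rw [mul_inv_cancel_left₀ h1tc]
    ring
  · simp only [inner_add_left, inner_smul_left, Complex.conj_ofReal, b2, bb]
    simp

lemma aux_step2 {n : ℕ} (T : Fin n → H →L[ℂ] H) {R : ℝ} (hR0 : 0 ≤ R) (hR : ∀ j, ‖T j‖ ≤ R)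
    {lam : Fin n → ℂ} (hl : lam ∈ interior (jointEssNumRange T)) {t : ℝ} (ht0 : 0 ≤ t)
    (ht1 : t ≤ 1 / 4) (ht : t * (8 * R + 8) ≤ infDist lam (jointEssNumRange T)ᶜ)
    {z : ℕ → H} (hz : ∀ m, ‖z m‖ ≤ 1)
    (M : Submodule ℂ H) [FiniteDimensional ℂ M] :
    ∃ u : H, ‖u‖ = 1 ∧ u ∈ Mᗮ ∧ (∀ j, ⟪T j u, u⟫ = lam j) ∧
      ∃ m, (∀ p, ‖z p - M.starProjection (z p)‖ ^ 2 ≤ 2 * ‖z m - M.starProjection (z m)‖ ^ 2) ∧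
        t * ‖z m - M.starProjection (z m)‖ ^ 2 ≤ ‖⟪u, z m⟫‖ ^ 2 := by
  by_cases hall : ∀ p, z p - M.starProjection (z p) = 0
  · obtain ⟨u, h1, h2, h3⟩ := aux_attain T hl M
    exact ⟨u, h1, h2, h3, 0, by simp [hall], by simp [hall]⟩
  · push Not at hall
    obtain ⟨p0, hp0⟩ := hall
    set f : ℕ → ℝ := fun p => ‖z p - M.starProjection (z p)‖ ^ 2 with hf
    have hbdd : BddAbove (Set.range f) := by
      refine ⟨4, ?_⟩
      rintro _ ⟨p, rfl⟩
      have h1 := norm_sub_le (z p) (M.starProjection (z p))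
      have h2 := M.norm_starProjection_apply_le (z p)
      have h3 := hz p
      have h4 := norm_nonneg (z p - M.starProjection (z p))
      simp only [hf]
      nlinarith
    have hfp : 0 < f p0 := by
      simp only [hf]
      have := norm_pos_iff.2 hp0
      positivity
    have hsup : 0 < ⨆ p, f p := hfp.trans_le (le_ciSup hbdd p0)
    obtain ⟨m, hm⟩ := exists_lt_of_lt_ciSup (show (⨆ p, f p) / 2 < ⨆ p, f p by linarith)
    have hmax : ∀ p, f p ≤ 2 * f m := fun p => by
      have := le_ciSup hbdd p
      linarith
    set r : H := z m - M.starProjection (z m) with hr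
    have hrne : r ≠ 0 := by
      intro h
      have h0 : f m = 0 := by
        change ‖r‖ ^ 2 = 0
        simp [h]
      linarith
    have hrn : (‖r‖ : ℂ) ≠ 0 := by simpa using hrne
    have hrM : r ∈ Mᗮ := M.sub_starProjection_mem_orthogonal _
    obtain ⟨u, h1, h2, h3, h4⟩ := aux_step_s2 T hR0 hR hl ht0 ht1 ht M
      (b := (‖r‖ : ℂ)⁻¹ • r) (by
        rw [norm_smul, norm_inv, Complex.norm_real, norm_norm]
        exact inv_mul_cancel₀ (norm_ne_zero_iff.2 hrne)) (Submodule.smul_mem _ _ hrM)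
    refine ⟨u, h1, h2, h3, m, hmax, ?_⟩
    have e1 : ⟪u, z m⟫ = ⟪u, r⟫ := by
      rw [hr, inner_sub_right, Submodule.inner_left_of_mem_orthogonal
        (M.starProjection_apply_mem _) h2, sub_zero]
    have e2 : ⟪u, r⟫ = (‖r‖ : ℂ) * ((√t : ℝ) : ℂ) := by
      rw [← h4, inner_smul_right, mul_inv_cancel_left₀ hrn]
    rw [e1, e2, norm_mul, Complex.norm_real, Complex.norm_real, norm_norm,
      Real.norm_of_nonneg (Real.sqrt_nonneg t), mul_pow, Real.sq_sqrt ht0, mul_comm]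

/-- Residual decrease when one orthogonal unit vector is added. -/
lemma aux_resid (M : Submodule ℂ H) [FiniteDimensional ℂ M] (M' : Submodule ℂ H)
    [FiniteDimensional ℂ M'] (hM : M ≤ M') {u : H} (hu : ‖u‖ = 1) (huM : u ∈ Mᗮ) (huM' : u ∈ M')
    (z : H) :
    ‖z - M'.starProjection z‖ ^ 2 ≤ ‖z - M.starProjection z‖ ^ 2 - ‖⟪u, z⟫‖ ^ 2 := by
  set r := z - M.starProjection z with hr
  have e1 : ⟪u, z⟫ = ⟪u, r⟫ := by
    rw [hr, inner_sub_right, Submodule.inner_left_of_mem_orthogonal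
      (M.starProjection_apply_mem _) huM, sub_zero]
  have h1 : ‖z - M'.starProjection z‖ ≤ ‖r - ⟪u, r⟫ • u‖ := by
    rw [Submodule.starProjection_minimal]
    have hm : M.starProjection z + ⟪u, r⟫ • u ∈ M' :=
      M'.add_mem (hM (M.starProjection_apply_mem _)) (M'.smul_mem _ huM')
    have := ciInf_le (f := fun x : M' => ‖z - x‖) ⟨0, by rintro _ ⟨x, rfl⟩; positivity⟩
      ⟨_, hm⟩
    refine this.trans (le_of_eq ?_)
    simp only [hr]
    congr 1
    abel
  have h2 : ‖r - ⟪u, r⟫ • u‖ ^ 2 = ‖r‖ ^ 2 - ‖⟪u, r⟫‖ ^ 2 := by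
    have h3 : ⟪⟪u, r⟫ • u, r - ⟪u, r⟫ • u⟫ = 0 := by
      rw [inner_sub_right, inner_smul_left, inner_smul_left, inner_smul_right,
        inner_self_eq_norm_sq_to_K, hu]
      simp
    have h4 := norm_add_sq_eq_norm_sq_add_norm_sq_of_inner_eq_zero _ _ h3
    rw [add_sub_cancel, norm_smul, hu, mul_one] at h4
    nlinarith
  rw [e1, ← h2]
  gcongr

lemma aux_dense (H : Type*) [NormedAddCommGroup H] [InnerProductSpace ℂ H]
    [TopologicalSpace.SeparableSpace H] :
    ∃ z : ℕ → H, (∀ m, ‖z m‖ ≤ 1) ∧ Tendsto (fun m => ‖z m‖) atTop (nhds 0) ∧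
      ∀ N : Submodule ℂ H, (∀ m, z m ∈ N.topologicalClosure) → ⊤ ≤ N.topologicalClosure := by
  set y := TopologicalSpace.denseSeq H
  set c : ℕ → ℝ := fun m => (1 / 2) ^ m * (1 + ‖y m‖)⁻¹ with hc
  have hcp : ∀ m, 0 < c m := fun m => by simp only [hc]; positivity
  have hle : ∀ m, ‖(c m : ℂ) • y m‖ ≤ (1 / 2) ^ m := by
    intro m
    rw [norm_smul, Complex.norm_real, Real.norm_of_nonneg (hcp m).le]
    simp only [hc]
    rw [mul_assoc]
    have : (1 + ‖y m‖)⁻¹ * ‖y m‖ ≤ 1 := by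
      rw [inv_mul_le_iff₀ (by positivity)]
      linarith
    exact mul_le_of_le_one_right (by positivity) this
  refine ⟨fun m => (c m : ℂ) • y m, fun m => (hle m).trans (pow_le_one₀ (by norm_num)
    (by norm_num)), ?_, ?_⟩
  · exact squeeze_zero (fun _ => norm_nonneg _) hle
      (tendsto_pow_atTop_nhds_zero_of_lt_one (by norm_num) (by norm_num))
  · intro N hN x _
    have hy : ∀ m, y m ∈ N.topologicalClosure := by
      intro m
      have hne : (c m : ℂ) ≠ 0 := by exact_mod_cast (hcp m).ne'
      have := N.topologicalClosure.smul_mem (c m : ℂ)⁻¹ (hN m)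
      rwa [inv_smul_smul₀ hne] at this
    have hsub : closure (Set.range y) ⊆ N.topologicalClosure :=
      closure_minimal (by rintro _ ⟨m, rfl⟩; exact hy m) N.isClosed_topologicalClosure
    exact hsub (TopologicalSpace.denseRange_denseSeq H x)

end Aux

/-- The greedy choice makes all residuals small. -/
lemma aux_greedy {a : ℕ → ℕ → ℝ} {t ζ : ℕ → ℝ} (ht0 : ∀ k, 0 ≤ t k)
    (htsum : Tendsto (fun N => ∑ k ∈ Finset.range N, t k) atTop atTop)
    (hz0 : Tendsto ζ atTop (nhds 0)) (ha0 : ∀ k p, 0 ≤ a k p)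
    (hamono : ∀ p, Antitone fun k => a k p) (haz : ∀ k p, a k p ≤ ζ p ^ 2)
    (hsel : ∀ k, ∃ m, (∀ p, a k p ≤ 2 * a k m) ∧ t k * a k m ≤ a k m - a (k + 1) m) :
    ∀ p, ∀ ε > 0, ∃ k, a k p < ε := by
  intro p ε hε
  by_contra! hcon
  have hzsq : Tendsto (fun m => ζ m ^ 2) atTop (nhds 0) := by simpa using hz0.pow 2
  obtain ⟨L, hL⟩ := eventually_atTop.1 (hzsq.eventually (gt_mem_nhds (half_pos hε)))
  set Φ : ℕ → ℝ := fun k => ∑ m ∈ Finset.range L, a k m with hΦ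
  have hΦ0 : ∀ k, 0 ≤ Φ k := fun k => Finset.sum_nonneg fun m _ => ha0 k m
  have hΦdec : ∀ k, Φ (k + 1) ≤ Φ k - t k * (ε / 2) := by
    intro k
    obtain ⟨m, hm1, hm2⟩ := hsel k
    have h1 : ε / 2 ≤ a k m := by
      have := hm1 p
      have := hcon k
      linarith
    have hmL : m ∈ Finset.range L := by
      rw [Finset.mem_range]
      by_contra! h
      have := hL m h
      have := haz k m
      linarith
    have h2 : Φ k - Φ (k + 1) = ∑ q ∈ Finset.range L, (a k q - a (k + 1) q) := by
      simp only [hΦ, Finset.sum_sub_distrib]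
    have h3 : a k m - a (k + 1) m ≤ ∑ q ∈ Finset.range L, (a k q - a (k + 1) q) :=
      Finset.single_le_sum (f := fun q => a k q - a (k + 1) q)
        (fun q _ => sub_nonneg.2 (hamono q (Nat.le_succ k))) hmL
    have h5 : t k * (ε / 2) ≤ t k * a k m := mul_le_mul_of_nonneg_left h1 (ht0 k)
    linarith
  have hΦsum : ∀ N, Φ N + (∑ k ∈ Finset.range N, t k) * (ε / 2) ≤ Φ 0 := by
    intro N
    induction N with
    | zero => simp
    | succ N ih =>
      rw [Finset.sum_range_succ, add_mul]
      linarith [hΦdec N]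
  obtain ⟨N, hN⟩ := (htsum.eventually_gt_atTop (Φ 0 / (ε / 2))).exists
  rw [div_lt_iff₀ (half_pos hε)] at hN
  linarith [hΦsum N, hΦ0 N]


theorem stmt_2 {H : Type*} [NormedAddCommGroup H] [InnerProductSpace ℂ H]
    [CompleteSpace H] [TopologicalSpace.SeparableSpace H]
    (hdim : ¬ FiniteDimensional ℂ H)
    {n : ℕ} (T : Fin n → H →L[ℂ] H)
    (lam : ℕ → Fin n → ℂ)
    (hmem : ∀ k, lam k ∈ interior (jointEssNumRange T))
    (hblaschke : Tendsto
      (fun N => ∑ k ∈ Finset.range N, Metric.infDist (lam k) ((jointEssNumRange T)ᶜ))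
      atTop atTop) :
    ∃ u : HilbertBasis ℕ ℂ H, ∀ k j, ⟪(T j) (u k), u k⟫ = lam k j := by
  classical
  set R : ℝ := ∑ j, ‖T j‖ with hRdef
  have hR0 : 0 ≤ R := Finset.sum_nonneg fun _ _ => norm_nonneg _
  have hR : ∀ j, ‖T j‖ ≤ R := fun j =>
    Finset.single_le_sum (f := fun j => ‖T j‖) (fun _ _ => norm_nonneg _) (Finset.mem_univ j)
  set d : ℕ → ℝ := fun k => infDist (lam k) (jointEssNumRange T)ᶜ with hd
  have hd0 : ∀ k, 0 ≤ d k := fun k => infDist_nonneg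
  set t : ℕ → ℝ := fun k => d k / (8 * R + 8) with ht
  have hC : 0 < 8 * R + 8 := by linarith
  have ht0 : ∀ k, 0 ≤ t k := fun k => div_nonneg (hd0 k) hC.le
  have ht1 : ∀ k, t k ≤ 1 / 4 := fun k => by
    have := aux_dist T hR0 hR (interior_subset (hmem k))
    simp only [ht]
    rw [div_le_iff₀ hC]
    simp only [hd]
    linarith
  have ht2 : ∀ k, t k * (8 * R + 8) ≤ infDist (lam k) (jointEssNumRange T)ᶜ := fun k => by
    simp only [ht]
    rw [div_mul_cancel₀ _ hC.ne']
  have htsum : Tendsto (fun N => ∑ k ∈ Finset.range N, t k) atTop atTop := by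
    have := hblaschke.atTop_div_const hC
    refine this.congr fun N => ?_
    rw [Finset.sum_div]
  obtain ⟨z, hz1, hz0, hzd⟩ := aux_dense H
  have hstep : ∀ (k : ℕ) (M : {M : Submodule ℂ H // FiniteDimensional ℂ M}),
      ∃ u : H, ‖u‖ = 1 ∧ u ∈ M.1ᗮ ∧ (∀ j, ⟪T j u, u⟫ = lam k j) ∧
      ∃ m, (∀ (_ : FiniteDimensional ℂ M.1), (∀ p, ‖z p - M.1.starProjection (z p)‖ ^ 2 ≤
          2 * ‖z m - M.1.starProjection (z m)‖ ^ 2) ∧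
        t k * ‖z m - M.1.starProjection (z m)‖ ^ 2 ≤ ‖⟪u, z m⟫‖ ^ 2) := by
    rintro k ⟨M, hM⟩
    obtain ⟨u, h1, h2, h3, m, h4, h5⟩ :=
      aux_step2 T hR0 hR (hmem k) (ht0 k) (ht1 k) (ht2 k) hz1 M
    exact ⟨u, h1, h2, h3, m, fun _ => ⟨h4, h5⟩⟩
  choose U hU1 hU2 hU3 mm hmm using hstep
  obtain ⟨Mseq, hM0, hMs'⟩ : ∃ Mseq : ℕ → {M : Submodule ℂ H // FiniteDimensional ℂ M},
      (Mseq 0).1 = ⊥ ∧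
      ∀ k, (Mseq (k + 1)).1 = (Mseq k).1 ⊔ Submodule.span ℂ {U k (Mseq k)} :=
    ⟨fun k => Nat.rec ⟨⊥, inferInstance⟩ (fun k M => ⟨M.1 ⊔ Submodule.span ℂ {U k M}, by
      have := M.2
      infer_instance⟩) k, rfl, fun k => rfl⟩
  set u : ℕ → H := fun k => U k (Mseq k) with hu
  have hMs : ∀ k, (Mseq (k + 1)).1 = (Mseq k).1 ⊔ Submodule.span ℂ {u k} := hMs'
  have hMfin : ∀ k, FiniteDimensional ℂ (Mseq k).1 := fun k => (Mseq k).2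
  have hmono : Monotone fun k => (Mseq k).1 := monotone_nat_of_le_succ fun k => by
    rw [hMs]; exact le_sup_left
  have huM : ∀ k, u k ∈ (Mseq (k + 1)).1 := fun k => by
    rw [hMs]; exact Submodule.mem_sup_right (Submodule.mem_span_singleton_self _)
  have hlt : ∀ i k, i < k → ⟪u i, u k⟫ = 0 := fun i k hik =>
    Submodule.inner_right_of_mem_orthogonal (hmono (Nat.succ_le_of_lt hik) (huM i))
      (hU2 k (Mseq k))
  have hon : Orthonormal ℂ u := by
    refine ⟨fun k => hU1 k (Mseq k), fun i k hik => ?_⟩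
    rcases lt_or_gt_of_ne hik with h | h
    · exact hlt i k h
    · exact inner_eq_zero_symm.1 (hlt k i h)
  have hMspan : ∀ k, (Mseq k).1 ≤ Submodule.span ℂ (Set.range u) := by
    intro k
    induction k with
    | zero => rw [hM0]; exact bot_le
    | succ k ih =>
      rw [hMs]
      refine sup_le ih ?_
      rw [Submodule.span_singleton_le_iff_mem]
      exact Submodule.subset_span ⟨k, rfl⟩
  set a : ℕ → ℕ → ℝ := fun k p => ‖z p - (Mseq k).1.starProjection (z p)‖ ^ 2 with ha
  have ha0 : ∀ k p, 0 ≤ a k p := fun k p => by simp only [ha]; positivity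
  have hadec : ∀ k p, a (k + 1) p ≤ a k p - ‖⟪u k, z p⟫‖ ^ 2 := fun k p =>
    aux_resid (Mseq k).1 (Mseq (k + 1)).1 (hmono (Nat.le_succ k)) (hU1 k (Mseq k))
      (hU2 k (Mseq k)) (huM k) (z p)
  have hamono : ∀ p, Antitone fun k => a k p := fun p => antitone_nat_of_succ_le fun k => by
    have := hadec k p
    have h2 := sq_nonneg ‖⟪u k, z p⟫‖
    linarith
  have haz : ∀ k p, a k p ≤ ‖z p‖ ^ 2 := fun k p => by
    have h := hamono p (Nat.zero_le k)
    refine h.trans (le_of_eq ?_)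
    simp only [ha]
    have := hMfin 0
    have : (Mseq 0).1.starProjection (z p) = 0 :=
      (Submodule.mem_bot ℂ).1 (hM0.le ((Mseq 0).1.starProjection_apply_mem (z p)))
    rw [this, sub_zero]
  have hsel : ∀ k, ∃ m, (∀ p, a k p ≤ 2 * a k m) ∧ t k * a k m ≤ ‖⟪u k, z m⟫‖ ^ 2 := fun k =>
    ⟨mm k (Mseq k), hmm k (Mseq k) (Mseq k).2⟩
  have hsmall : ∀ p, ∀ ε > 0, ∃ k, a k p < ε := 
    aux_greedy ht0 htsum hz0 ha0 hamono haz fun k => by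
      obtain ⟨m, h1, h2⟩ := hsel k
      exact ⟨m, h1, by linarith [hadec k m]⟩
  have htop : ⊤ ≤ (Submodule.span ℂ (Set.range u)).topologicalClosure := by
    refine hzd _ fun p => ?_
    change z p ∈ closure ((Submodule.span ℂ (Set.range u) : Submodule ℂ H) : Set H)
    rw [Metric.mem_closure_iff]
    intro ε hε
    obtain ⟨k, hk⟩ := hsmall p (ε ^ 2) (by positivity)
    refine ⟨(Mseq k).1.starProjection (z p),
      hMspan k ((Mseq k).1.starProjection_apply_mem _), ?_⟩
    rw [dist_eq_norm]
    exact lt_of_pow_lt_pow_left₀ 2 hε.le hk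
  refine ⟨HilbertBasis.mk hon htop, fun k j => ?_⟩
  rw [HilbertBasis.coe_mk]
  exact hU3 k (Mseq k) j
end

section
/- Let H be a complex separable infinite-dimensional Hilbert space and S = (S_1, …, S_s) an s-tuple of bounded selfadjoint operators on H. Let (λ_k)_{k≥1} ⊂ ℝ^s, with λ_k = (λ_{k,1}, …, λ_{k,s}), be contained in the interior of W_e(S) relative to ℝ^s, and suppose there exists an orthonormal basis (u_k)_{k≥1} of H with ⟨S_j u_k, u_k⟩ = λ_{k,j} for all k and j. Let α_0, α_1, …, α_s be real numbers with (α_1, …, α_s) ≠ (0, …, 0), set V = α_0 I + ∑_{j=1}^s α_j S_j and a = inf{t : t ∈ W(V)}. Then ∑_{k=1}^∞ (α_0 − a + ∑_{j=1}^s α_j λ_{k,j}) = ∞. -/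
open Filter Metric
open scoped ComplexInnerProductSpace

theorem aux_hasSum {H : Type*} [NormedAddCommGroup H] [InnerProductSpace ℂ H]
    (u : HilbertBasis ℕ ℂ H) (y : H) :
    HasSum (fun k => ‖⟪u k, y⟫‖ ^ 2) (‖y‖ ^ 2) := by
  have h := u.hasSum_inner_mul_inner y y
  have h2 := (Complex.reCLM.hasSum h)
  convert! h2 using 1
  · ext k
    simp only [Function.comp, Complex.reCLM_apply]
    rw [← inner_conj_symm y (u k), ← Complex.normSq_eq_conj_mul_self, Complex.ofReal_re,
      Complex.normSq_eq_norm_sq]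
  · rw [Complex.reCLM_apply, inner_self_eq_norm_sq_to_K]
    norm_cast

theorem aux_trace {H : Type*} [NormedAddCommGroup H] [InnerProductSpace ℂ H] [CompleteSpace H]
    (u : HilbertBasis ℕ ℂ H) (T : H →L[ℂ] H) (hT : T.IsPositive)
    (hs : Summable (fun k => (⟪T (u k), u k⟫).re)) (x : ℕ → H) (hx : Orthonormal ℂ x) :
    Tendsto (fun k => ⟪T (x k), x k⟫) atTop (nhds 0) := by
  have hT0 : 0 ≤ T := (ContinuousLinearMap.nonneg_iff_isPositive T).2 hT
  obtain ⟨R, hR, hRR⟩ : ∃ R : H →L[ℂ] H, R.IsPositive ∧ R * R = T :=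
    ⟨CFC.sqrt T, (ContinuousLinearMap.nonneg_iff_isPositive _).1 (CFC.sqrt_nonneg T),
      CFC.sqrt_mul_sqrt_self T hT0⟩
  have key : ∀ y, ⟪T y, y⟫ = ((‖R y‖ ^ 2 : ℝ) : ℂ) := by
    intro y
    rw [← hRR, ContinuousLinearMap.mul_apply, hR.inner_left_eq_inner_right,
      inner_self_eq_norm_sq_to_K]
    norm_cast
  simp only [key, Complex.ofReal_re] at hs
  have hsum : Summable (fun m => ‖R (x m)‖ ^ 2) := by
    refine summable_of_sum_le (c := ∑' k, ‖R (u k)‖ ^ 2) (fun m => by positivity) ?_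
    intro F
    have h1 : HasSum (fun k => ∑ m ∈ F, ‖⟪u k, R (x m)⟫‖ ^ 2) (∑ m ∈ F, ‖R (x m)‖ ^ 2) :=
      hasSum_sum fun m _ => aux_hasSum u (R (x m))
    refine hasSum_le ?_ h1 hs.hasSum
    intro k
    have := hx.sum_inner_products_le (R (u k)) (s := F)
    refine le_trans (le_of_eq ?_) this
    refine Finset.sum_congr rfl fun m _ => ?_
    rw [← hR.inner_left_eq_inner_right, norm_inner_symm]
  have h0 := hsum.tendsto_atTop_zero
  simp only [key]
  exact_mod_cast (Complex.continuous_ofReal.tendsto 0).comp h0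

/-- A necessary condition on diagonals of tuples of selfadjoint operators:
for `V = α₀ I + ∑ α_j S_j` and `a = inf W(V)` one has
`∑ₖ (α₀ - a + ∑_j α_j λ_{k,j}) = ∞`. -/
theorem stmt_6 {H : Type*} [NormedAddCommGroup H] [InnerProductSpace ℂ H]
    [CompleteSpace H] [TopologicalSpace.SeparableSpace H]
    (hdim : ¬ FiniteDimensional ℂ H)
    {s : ℕ} (S : Fin s → H →L[ℂ] H) (hsa : ∀ j, IsSelfAdjoint (S j))
    (lam : ℕ → Fin s → ℝ)
    (hmem : ∀ k, lam k ∈ interior (jointEssNumRangeReal S))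
    (u : HilbertBasis ℕ ℂ H) (hu : ∀ k j, ⟪(S j) (u k), u k⟫ = (lam k j : ℂ))
    (α₀ : ℝ) (α : Fin s → ℝ) (hα : α ≠ 0)
    (V : H →L[ℂ] H) (hV : V = (α₀ : ℂ) • (1 : H →L[ℂ] H) + ∑ j, (α j : ℂ) • S j)
    (a : ℝ) (ha : a = sInf {t : ℝ | ∃ x : H, ‖x‖ = 1 ∧ ⟪V x, x⟫ = (t : ℂ)}) :
    Tendsto (fun N => ∑ k ∈ Finset.range N, (α₀ - a + ∑ j, α j * lam k j))
      atTop atTop := by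
  set T : H →L[ℂ] H := V - (a : ℂ) • (1 : H →L[ℂ] H) with hTdef
  have hVsa : IsSelfAdjoint V := by
    rw [hV]
    refine IsSelfAdjoint.add ?_ ?_
    · exact IsSelfAdjoint.smul (Complex.conj_ofReal α₀) (IsSelfAdjoint.one _)
    · exact isSelfAdjoint_sum _ fun j _ => IsSelfAdjoint.smul (Complex.conj_ofReal _) (hsa j)
  have hTsa : IsSelfAdjoint T :=
    hVsa.sub (IsSelfAdjoint.smul (Complex.conj_ofReal a) (IsSelfAdjoint.one _))
  have hVre : ∀ x, ⟪V x, x⟫ = ((⟪V x, x⟫).re : ℂ) := fun x =>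
    (hVsa.isSymmetric.coe_re_inner_apply_self x).symm
  have hbdd : BddBelow {t : ℝ | ∃ x : H, ‖x‖ = 1 ∧ ⟪V x, x⟫ = (t : ℂ)} := by
    refine ⟨-‖V‖, ?_⟩
    rintro t ⟨x, hx, ht⟩
    have h1 : ‖⟪V x, x⟫‖ ≤ ‖V x‖ * ‖x‖ := norm_inner_le_norm _ _
    have h2 := V.le_opNorm x
    rw [ht, Complex.norm_real, Real.norm_eq_abs] at h1
    rw [hx, mul_one] at h1 h2
    have := neg_abs_le t
    linarith
  have hunit : ∀ x, ‖x‖ = 1 → a ≤ (⟪V x, x⟫).re := by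
    intro x hx
    rw [ha]
    exact csInf_le hbdd ⟨x, hx, hVre x⟩
  have hTV : ∀ x, ⟪T x, x⟫ = ⟪V x, x⟫ - a * (‖x‖ : ℂ) ^ 2 := by
    intro x
    simp [hTdef, inner_sub_left, inner_smul_left, inner_self_eq_norm_sq_to_K]
  have hTpos : T.IsPositive := by
    refine ContinuousLinearMap.isPositive_def'.2 ⟨hTsa, fun x => ?_⟩
    rw [ContinuousLinearMap.reApplyInnerSelf_apply]
    by_cases hx : x = 0
    · simp [hx]
    have hn : 0 < ‖x‖ := norm_pos_iff.2 hx
    set y : H := ((‖x‖⁻¹ : ℝ) : ℂ) • x with hy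
    have hy1 : ‖y‖ = 1 := by
      rw [hy, norm_smul, Complex.norm_real, norm_inv, norm_norm, inv_mul_cancel₀ hn.ne']
    have hxy : x = (‖x‖ : ℂ) • y := by
      rw [hy, smul_smul, ← Complex.ofReal_mul, mul_inv_cancel₀ hn.ne', Complex.ofReal_one,
        one_smul]
    have h1 : 0 ≤ (⟪T y, y⟫).re := by
      rw [hTV, hy1]
      have := hunit y hy1
      simpa using this
    have h2 : ⟪T x, x⟫ = ((‖x‖ * ‖x‖ : ℝ) : ℂ) * ⟪T y, y⟫ := by
      conv_lhs => rw [hxy]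
      rw [map_smul, inner_smul_left, inner_smul_right, Complex.conj_ofReal]
      push_cast
      ring
    rw [h2]
    change 0 ≤ (((‖x‖ * ‖x‖ : ℝ) : ℂ) * ⟪T y, y⟫).re
    rw [Complex.re_ofReal_mul]
    positivity
  have hform : ∀ x, ‖x‖ = 1 →
      ⟪T x, x⟫ = (α₀ : ℂ) - a + ∑ j, (α j : ℂ) * ⟪S j x, x⟫ := by
    intro x hx
    rw [hTV, hV, hx]
    simp [inner_add_left, inner_smul_left, inner_self_eq_norm_sq_to_K, hx, sum_inner]
    ring
  have hterm : ∀ k, (⟪T (u k), u k⟫).re = α₀ - a + ∑ j, α j * lam k j := by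
    intro k
    rw [hform _ (u.orthonormal.1 k)]
    simp only [hu]
    exact_mod_cast Complex.ofReal_re _
  have hnn : ∀ k, 0 ≤ α₀ - a + ∑ j, α j * lam k j := by
    intro k
    rw [← hterm]
    exact hTpos.re_inner_nonneg_left _
  rw [← not_summable_iff_tendsto_nat_atTop_of_nonneg hnn]
  intro hs
  simp only [← hterm] at hs
  have hzero : ∀ μ ∈ jointEssNumRangeReal S, α₀ - a + ∑ j, α j * μ j = 0 := by
    rintro μ ⟨x, hx, hμ⟩
    have h1 := aux_trace u T hTpos hs x hx
    have h2 : Tendsto (fun k => ⟪T (x k), x k⟫) atTop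
        (nhds ((α₀ : ℂ) - a + ∑ j, (α j : ℂ) * (μ j : ℂ))) := by
      simp only [hform _ (hx.1 _)]
      exact tendsto_const_nhds.add (tendsto_finsetSum _ fun j _ => (hμ j).const_mul _)
    exact_mod_cast tendsto_nhds_unique h2 h1
  have hcont : Continuous (fun t : ℝ => lam 0 + t • α) := by fun_prop
  have hev : ∀ᶠ t : ℝ in nhds 0, lam 0 + t • α ∈ interior (jointEssNumRangeReal S) := by
    refine hcont.continuousAt.eventually_mem (isOpen_interior.mem_nhds ?_)
    simpa using hmem 0
  obtain ⟨ε, hε, hball⟩ := Metric.eventually_nhds_iff.1 hev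
  have hm := hball (y := ε / 2) (by rw [Real.dist_eq, sub_zero, abs_of_pos] <;> linarith)
  have e1 := hzero _ (interior_subset hm)
  have e0 := hzero _ (interior_subset (hmem 0))
  have e2 : ∑ j, α j * (lam 0 + (ε / 2) • α) j
      = ∑ j, α j * lam 0 j + (ε / 2) * ∑ j, α j * α j := by
    rw [Finset.mul_sum, ← Finset.sum_add_distrib]
    refine Finset.sum_congr rfl fun j _ => ?_
    simp only [Pi.add_apply, Pi.smul_apply, smul_eq_mul]
    ring
  have e3 : (ε / 2) * ∑ j, α j * α j = 0 := by linarith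
  have e4 : ∑ j, α j * α j = 0 := by
    rcases mul_eq_zero.1 e3 with h | h
    · linarith
    · exact h
  apply hα
  ext j
  have := (Finset.sum_eq_zero_iff_of_nonneg fun j _ => mul_self_nonneg (α j)).1 e4 j
    (Finset.mem_univ j)
  simpa using this
end

section
/- Let H be a complex separable infinite-dimensional Hilbert space, 𝒯 = (T_1, …, T_n) an n-tuple of bounded operators on H, and p > 1. Let (λ_k)_{k≥1} ⊂ ℂ^n satisfy ∑_{k=1}^∞ dist(λ_k, W_e(𝒯))^p < ∞. Then there exists an orthonormal basis (u_k)_{k≥1} of H such that ∑_{k=1}^∞ (max_{1≤j≤n} |⟨T_j u_k, u_k⟩ − λ_{k,j}|)^p < ∞. (Equivalently: defining the tuple 𝒦 = (K_1, …, K_n) diagonal in the basis (u_k) by K_j u_k = (λ_{k,j} − ⟨T_j u_k, u_k⟩) u_k, each K_j belongs to the Schatten class S_p and (λ_k)_{k≥1} is a diagonal of 𝒯 + 𝒦.) -/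
open Filter Metric
open scoped ComplexInnerProductSpace

section EssNumRange

variable {H : Type*} [NormedAddCommGroup H] [InnerProductSpace ℂ H]

lemma ess_select [CompleteSpace H] {n : ℕ} (T : Fin n → H →L[ℂ] H) {lam : Fin n → ℂ}
    (hl : lam ∈ jointEssNumRange T) (F : Set H) (hF : F.Finite) {δ : ℝ} (hδ : 0 < δ) :
    ∃ x : H, ⟪x, x⟫ = 1 ∧ (∀ f ∈ F, ⟪f, x⟫ = 0) ∧ (∀ f ∈ F, ⟪x, f⟫ = 0) ∧
      ∀ j, ‖⟪T j x, x⟫ - lam j‖ ≤ δ := by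
  obtain ⟨x, hx, hT⟩ := hl
  let M : Submodule ℂ H := Submodule.span ℂ F
  have : FiniteDimensional ℂ M := FiniteDimensional.span_of_finite ℂ hF
  have weak : ∀ f : H, Tendsto (fun k => ⟪x k, f⟫) atTop (nhds 0) := by
    intro f
    have h1 := (hx.inner_products_summable f).tendsto_atTop_zero
    rw [tendsto_zero_iff_norm_tendsto_zero]
    have h2 := h1.sqrt
    simpa using h2
  have hP : Tendsto (fun k => M.starProjection (x k)) atTop (nhds 0) := by
    let b := stdOrthonormalBasis ℂ M
    have : (fun k => M.starProjection (x k)) = fun k => ∑ i, ⟪(b i : H), x k⟫ • (b i : H) := by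
      funext k
      rw [Submodule.starProjection_apply, b.orthogonalProjectionOnto_apply_eq_sum]
      simp
    rw [this]
    have h0 : (0:H) = ∑ i, (0:ℂ) • (b i : H) := by simp
    rw [h0]
    refine tendsto_finsetSum _ fun i _ => Tendsto.smul_const ?_ _
    have := (weak (b i)).star
    simpa using this
  set z : ℕ → H := fun k => x k - M.starProjection (x k) with hz
  have hzT : ∀ A : H →L[ℂ] H, ∀ l : ℂ, Tendsto (fun k => ⟪A (x k), x k⟫) atTop (nhds l) →
      Tendsto (fun k => ⟪A (z k), z k⟫) atTop (nhds l) := by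
    intro A l h
    have e : ∀ k, ⟪A (z k), z k⟫ = ⟪A (x k), x k⟫ - (⟪A (x k), M.starProjection (x k)⟫ +
        ⟪A (M.starProjection (x k)), z k⟫) := by
      intro k
      simp only [hz, map_sub, inner_sub_left, inner_sub_right]; ring
    simp_rw [e]
    have hb : Tendsto (fun k => ‖A‖ * ‖M.starProjection (x k)‖ +
        ‖A‖ * ‖M.starProjection (x k)‖ * (1 + ‖M.starProjection (x k)‖)) atTop (nhds 0) := by
      have := hP.norm
      rw [norm_zero] at this
      have h2 := (this.const_mul ‖A‖).add ((this.const_mul ‖A‖).mul (this.const_add 1))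
      simpa using h2
    have h3 : Tendsto (fun k => ⟪A (x k), M.starProjection (x k)⟫ +
        ⟪A (M.starProjection (x k)), z k⟫) atTop (nhds 0) := by
      refine squeeze_zero_norm (fun k => ?_) hb
      have n1 : ‖x k‖ = 1 := hx.1 k
      refine (norm_add_le _ _).trans (add_le_add ?_ ?_)
      · refine (norm_inner_le_norm _ _).trans ?_
        gcongr
        simpa [n1] using A.le_opNorm (x k)
      · refine (norm_inner_le_norm _ _).trans ?_
        gcongr
        · exact A.le_opNorm _
        · simpa [n1] using norm_sub_le (x k) (M.starProjection (x k))
    simpa using h.sub h3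
  have hzn : Tendsto (fun k => ⟪z k, z k⟫) atTop (nhds 1) := by
    refine hzT (ContinuousLinearMap.id ℂ H) 1 ?_
    have : ∀ k, ⟪x k, x k⟫ = (1:ℂ) := fun k => by
      rw [inner_self_eq_norm_sq_to_K, hx.1 k]; simp
    have h : (fun k => ⟪(ContinuousLinearMap.id ℂ H) (x k), x k⟫) = fun _ => (1:ℂ) :=
      funext this
    rw [h]; exact tendsto_const_nhds
  have hq : ∀ j, Tendsto (fun k => ⟪T j (z k), z k⟫ / ⟪z k, z k⟫) atTop (nhds (lam j)) := by
    intro j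
    have := (hzT (T j) _ (hT j)).div hzn one_ne_zero
    rw [div_one] at this
    exact this
  have hev : ∀ᶠ k in atTop, ⟪z k, z k⟫ ≠ 0 ∧
      ∀ j, ‖⟪T j (z k), z k⟫ / ⟪z k, z k⟫ - lam j‖ ≤ δ := by
    refine (hzn.eventually_ne one_ne_zero).and ?_
    rw [eventually_all]
    intro j
    have := (hq j).eventually (Metric.closedBall_mem_nhds _ hδ)
    filter_upwards [this] with k hk
    simpa [dist_eq_norm] using hk
  obtain ⟨k, hk0, hk⟩ := hev.exists
  have hzk : z k ≠ 0 := by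
    intro h; simp [h] at hk0
  have hnk : (‖z k‖ : ℂ) ≠ 0 := by simpa using hzk
  have horth : ∀ f ∈ F, ⟪f, z k⟫ = 0 := by
    intro f hf
    have hm : z k ∈ Mᗮ := by
      simp only [hz]
      exact M.sub_starProjection_mem_orthogonal (x k)
    exact (Submodule.mem_orthogonal M _).1 hm f (Submodule.subset_span hf)
  have hself : ⟪z k, z k⟫ = (‖z k‖ : ℂ) ^ 2 := inner_self_eq_norm_sq_to_K (z k)
  refine ⟨((‖z k‖ : ℂ)⁻¹) • z k, ?_, ?_, ?_, ?_⟩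
  · rw [inner_smul_left, inner_smul_right, hself]
    simp only [map_inv₀, Complex.conj_ofReal]
    field_simp
  · intro f hf
    rw [inner_smul_right, horth f hf, mul_zero]
  · intro f hf
    rw [inner_smul_left, inner_eq_zero_symm.1 (horth f hf), mul_zero]
  · intro j
    convert hk j using 3
    rw [map_smul, inner_smul_left, inner_smul_right, hself]
    simp only [map_inv₀, Complex.conj_ofReal]
    field_simp

lemma ess_select_many [CompleteSpace H] {n : ℕ} (T : Fin n → H →L[ℂ] H) (mu : ℕ → Fin n → ℂ)
    (hmu : ∀ k, mu k ∈ jointEssNumRange T) (F : Set H) (hF : F.Finite) {δ : ℝ} (hδ : 0 < δ)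
    (N : ℕ) :
    ∃ x : ℕ → H, (∀ i < N, ∀ j < N, ⟪x i, x j⟫ = if i = j then 1 else 0) ∧
      (∀ i < N, ∀ f ∈ F, ⟪f, x i⟫ = 0) ∧ (∀ i < N, ∀ f ∈ F, ⟪x i, f⟫ = 0) ∧
      (∀ l, ∀ i < N, ∀ j < N, i ≠ j → ⟪T l (x i), x j⟫ = 0) ∧
      ∀ i < N, ∀ l, ‖⟪T l (x i), x i⟫ - mu i l‖ ≤ δ := by
  induction N with
  | zero => exact ⟨fun _ => 0, by simp⟩
  | succ N ih =>
    obtain ⟨x, h1, h2, h3, h4, h5⟩ := ih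
    let G : Set H := F ∪ (x '' Set.Iio N ∪ ((⋃ l, (fun i => T l (x i)) '' Set.Iio N) ∪
      (⋃ l, (fun i => ContinuousLinearMap.adjoint (T l) (x i)) '' Set.Iio N)))
    have hG : G.Finite := by
      refine hF.union (((Set.finite_Iio N).image _).union (Set.Finite.union ?_ ?_))
      · exact Set.finite_iUnion fun l => (Set.finite_Iio N).image _
      · exact Set.finite_iUnion fun l => (Set.finite_Iio N).image _
    obtain ⟨w, w1, w2, w3, w4⟩ := ess_select T (hmu N) G hG hδ
    have gF : ∀ f ∈ F, f ∈ G := fun f hf => Or.inl hf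
    have gx : ∀ i < N, x i ∈ G := fun i hi => Or.inr (Or.inl ⟨i, hi, rfl⟩)
    have gT : ∀ l, ∀ i < N, T l (x i) ∈ G := fun l i hi =>
      Or.inr (Or.inr (Or.inl (Set.mem_iUnion.2 ⟨l, i, hi, rfl⟩)))
    have gA : ∀ l, ∀ i < N, ContinuousLinearMap.adjoint (T l) (x i) ∈ G := fun l i hi =>
      Or.inr (Or.inr (Or.inr (Set.mem_iUnion.2 ⟨l, i, hi, rfl⟩)))
    have xN : Function.update x N w N = w := by simp
    have xi : ∀ i < N, Function.update x N w i = x i := fun i hi => by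
      rw [Function.update_of_ne hi.ne]
    refine ⟨Function.update x N w, ?_, ?_, ?_, ?_, ?_⟩
    · intro i hi j hj
      rcases Nat.lt_succ_iff_lt_or_eq.1 hi with hi | rfl <;>
      rcases Nat.lt_succ_iff_lt_or_eq.1 hj with hj | rfl
      · rw [xi i hi, xi j hj, h1 i hi j hj]
      · rw [xi i hi, xN, if_neg hi.ne]; exact w2 _ (gx i hi)
      · rw [xi j hj, xN, if_neg hj.ne']; exact w3 _ (gx j hj)
      · rw [xN, w1]; simp
    · intro i hi f hf
      rcases Nat.lt_succ_iff_lt_or_eq.1 hi with hi | rfl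
      · rw [xi i hi]; exact h2 i hi f hf
      · rw [xN]; exact w2 f (gF f hf)
    · intro i hi f hf
      rcases Nat.lt_succ_iff_lt_or_eq.1 hi with hi | rfl
      · rw [xi i hi]; exact h3 i hi f hf
      · rw [xN]; exact w3 f (gF f hf)
    · intro l i hi j hj hij
      rcases Nat.lt_succ_iff_lt_or_eq.1 hi with hi | rfl <;>
      rcases Nat.lt_succ_iff_lt_or_eq.1 hj with hj | rfl
      · rw [xi i hi, xi j hj, h4 l i hi j hj hij]
      · rw [xi i hi, xN]; exact w2 _ (gT l i hi)
      · rw [xi j hj, xN, ← ContinuousLinearMap.adjoint_inner_right]; exact w3 _ (gA l j hj)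
      · exact absurd rfl hij
    · intro i hi l
      rcases Nat.lt_succ_iff_lt_or_eq.1 hi with hi | rfl
      · rw [xi i hi]; exact h5 i hi l
      · rw [xN]; exact w4 l

/-- A block of `N` orthonormal vectors whose span contains `e`. -/
lemma ess_block [CompleteSpace H] {n : ℕ} (T : Fin n → H →L[ℂ] H) (mu : ℕ → Fin n → ℂ)
    (hmu : ∀ k, mu k ∈ jointEssNumRange T) (F : Set H) (hF : F.Finite) (e : H)
    (he : ⟪e, e⟫ = 1) (heF : ∀ f ∈ F, ⟪f, e⟫ = 0) (M : ℝ) (hM : ∀ l, ‖T l‖ ≤ M) (hM0 : 0 ≤ M)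
    (N : ℕ) (hN : 0 < N) :
    ∃ w : ℕ → H, (∀ i < N, ∀ j < N, ⟪w i, w j⟫ = if i = j then 1 else 0) ∧
      (∀ i < N, ∀ f ∈ F, ⟪f, w i⟫ = 0) ∧
      e ∈ Submodule.span ℂ (w '' Set.Iio N) ∧
      ∀ i < N, ‖fun l => ⟪T l (w i), w i⟫ - mu i l‖ ≤ (4 * M + 1) / N := by
  have hNR : (0:ℝ) < N := by exact_mod_cast hN
  let G : Set H := F ∪ ({e} ∪ ((Set.range fun l => T l e) ∪
    (Set.range fun l => ContinuousLinearMap.adjoint (T l) e)))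
  have hG : G.Finite := hF.union ((Set.finite_singleton e).union
    ((Set.finite_range _).union (Set.finite_range _)))
  obtain ⟨x, h1, h2, h3, h4, h5⟩ :=
    ess_select_many T mu hmu G hG (δ := 1 / (N:ℝ)) (by positivity) N
  have gF : ∀ f ∈ F, f ∈ G := fun f hf => Or.inl hf
  have ge : e ∈ G := Or.inr (Or.inl rfl)
  have gT : ∀ l, T l e ∈ G := fun l => Or.inr (Or.inr (Or.inl ⟨l, rfl⟩))
  have gA : ∀ l, ContinuousLinearMap.adjoint (T l) e ∈ G :=
    fun l => Or.inr (Or.inr (Or.inr ⟨l, rfl⟩))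
  set a : ℂ := (((Real.sqrt N)⁻¹ : ℝ) : ℂ) with ha
  set b : ℂ := (N : ℂ)⁻¹ with hb
  have hNC : (N:ℂ) ≠ 0 := by exact_mod_cast hN.ne'
  have hbN : b * N = 1 := inv_mul_cancel₀ hNC
  have haa : a * a = b := by
    rw [ha, hb, ← Complex.ofReal_mul, ← mul_inv, Real.mul_self_sqrt hNR.le]; simp
  have ca : (starRingEnd ℂ) a = a := Complex.conj_ofReal _
  have cb : (starRingEnd ℂ) b = b := by simp [hb]
  have ha0 : a ≠ 0 := by
    intro h; rw [h] at haa; rw [← haa] at hbN; simp at hbN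
  set s : H := ∑ j ∈ Finset.range N, x j with hs
  have xs : ∀ i < N, ⟪x i, s⟫ = 1 := by
    intro i hi
    rw [hs, inner_sum, Finset.sum_eq_single i, h1 i hi i hi, if_pos rfl]
    · intro j hj hji
      rw [h1 i hi j (Finset.mem_range.1 hj), if_neg hji.symm]
    · intro h; exact absurd (Finset.mem_range.2 hi) h
  have sx : ∀ i < N, ⟪s, x i⟫ = 1 := by
    intro i hi
    rw [← inner_conj_symm, xs i hi, map_one]
  have ss : ⟪s, s⟫ = (N:ℂ) := by
    conv_lhs => rw [hs, sum_inner]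
    rw [Finset.sum_congr rfl fun i hi => xs i (Finset.mem_range.1 hi)]; simp
  have es : ∀ g ∈ G, ⟪g, s⟫ = 0 := by
    intro g hg
    rw [hs, inner_sum]
    exact Finset.sum_eq_zero fun i hi => h2 i (Finset.mem_range.1 hi) g hg
  have se : ∀ g ∈ G, ⟪s, g⟫ = 0 := fun g hg => inner_eq_zero_symm.1 (es g hg)
  have Txs : ∀ l, ∀ i < N, ⟪T l (x i), s⟫ = ⟪T l (x i), x i⟫ := by
    intro l i hi
    rw [hs, inner_sum, Finset.sum_eq_single i]
    · intro j hj hji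
      exact h4 l i hi j (Finset.mem_range.1 hj) hji.symm
    · intro h; exact absurd (Finset.mem_range.2 hi) h
  have Tsx : ∀ l, ∀ i < N, ⟪T l s, x i⟫ = ⟪T l (x i), x i⟫ := by
    intro l i hi
    rw [hs, map_sum, sum_inner, Finset.sum_eq_single i]
    · intro j hj hji
      exact h4 l j (Finset.mem_range.1 hj) i hi hji
    · intro h; exact absurd (Finset.mem_range.2 hi) h
  have Tss : ∀ l, ⟪T l s, s⟫ = ∑ i ∈ Finset.range N, ⟪T l (x i), x i⟫ := by
    intro l
    conv_lhs => rw [hs, map_sum, sum_inner]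
    exact Finset.sum_congr rfl fun i hi => Txs l i (Finset.mem_range.1 hi)
  have Txe : ∀ l, ∀ i < N, ⟪T l (x i), e⟫ = 0 := fun l i hi => by
    rw [← ContinuousLinearMap.adjoint_inner_right]; exact h3 i hi _ (gA l)
  have Tse : ∀ l, ⟪T l s, e⟫ = 0 := fun l => by
    rw [← ContinuousLinearMap.adjoint_inner_right]; exact se _ (gA l)
  have nx : ∀ i < N, ‖x i‖ = 1 := fun i hi => by
    have h0 := h1 i hi i hi
    rw [if_pos rfl] at h0
    have this : (‖x i‖ : ℂ) ^ 2 = 1 := (inner_self_eq_norm_sq_to_K (𝕜 := ℂ) (x i)).symm.trans h0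
    have h' : ‖x i‖ ^ 2 = 1 := by exact_mod_cast this
    nlinarith [norm_nonneg (x i)]
  have ne : ‖e‖ = 1 := by
    have this : (‖e‖ : ℂ) ^ 2 = 1 := (inner_self_eq_norm_sq_to_K (𝕜 := ℂ) e).symm.trans he
    have h' : ‖e‖ ^ 2 = 1 := by exact_mod_cast this
    nlinarith [norm_nonneg e]
  have tb : ∀ l, ∀ v : H, ‖v‖ = 1 → ‖⟪T l v, v⟫‖ ≤ M := by
    intro l v hv
    have q1 := norm_inner_le_norm (𝕜 := ℂ) (T l v) v
    have q2 := (T l).le_opNorm v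
    rw [hv, mul_one] at q1 q2
    exact q1.trans (q2.trans (hM l))
  refine ⟨fun i => a • e + x i - b • s, ?_, ?_, ?_, ?_⟩
  · intro i hi j hj
    simp only [inner_sub_left, inner_sub_right, inner_add_left, inner_add_right, inner_smul_left,
      inner_smul_right, ca, cb, he, h1 i hi j hj, xs i hi, sx j hj, ss, es e ge, se e ge,
      h2 j hj e ge, h3 i hi e ge]
    linear_combination haa + b * hbN
  · intro i hi f hf
    simp only [inner_sub_right, inner_add_right, inner_smul_right, heF f hf, h2 i hi f (gF f hf),
      es f (gF f hf)]
    simp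
  · have : e = a • ∑ i ∈ Finset.range N, (a • e + x i - b • s) := by
      rw [Finset.sum_sub_distrib, Finset.sum_add_distrib, ← hs]
      simp only [Finset.sum_const, Finset.card_range, ← Nat.cast_smul_eq_nsmul ℂ, smul_smul]
      rw [mul_comm (N:ℂ) b, hbN, one_smul, add_sub_cancel_right, smul_smul,
        show a * ((N:ℂ) * a) = 1 by linear_combination (N:ℂ) * haa + hbN, one_smul]
    rw [this]
    refine Submodule.smul_mem _ _ (Submodule.sum_mem _ fun i hi => Submodule.subset_span ?_)
    refine ⟨i, Finset.mem_range.1 hi, ?_⟩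
    rw [← this]
  · intro i hi
    rw [pi_norm_le_iff_of_nonneg (by positivity)]
    intro l
    have key : ⟪T l (a • e + x i - b • s), a • e + x i - b • s⟫ - mu i l =
        b * (⟪T l e, e⟫ - 2 * ⟪T l (x i), x i⟫ + b * ∑ i ∈ Finset.range N, ⟪T l (x i), x i⟫)
        + (⟪T l (x i), x i⟫ - mu i l) := by
      simp only [map_sub, map_add, map_smul, inner_sub_left, inner_sub_right, inner_add_left,
        inner_add_right, inner_smul_left,
        inner_smul_right, ca, cb, Txs l i hi, Tsx l i hi, Tss, Txe l i hi, Tse,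
        h2 i hi _ (gT l), es _ (gT l)]
      linear_combination ⟪T l e, e⟫ * haa
    rw [key]
    have nb : ‖b‖ = 1 / N := by simp [hb]
    have hsum : ‖∑ i ∈ Finset.range N, ⟪T l (x i), x i⟫‖ ≤ N * M := by
      refine (norm_sum_le_of_le (f := fun i => ⟪T l (x i), x i⟫) (n := fun _ => M) _
        fun i hi => tb l _ (nx i (Finset.mem_range.1 hi))).trans ?_
      simp
    have hbs : ‖b * ∑ i ∈ Finset.range N, ⟪T l (x i), x i⟫‖ ≤ M := by
      rw [norm_mul, nb, one_div, inv_mul_le_iff₀ hNR]; exact hsum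
    have h2t : ‖2 * ⟪T l (x i), x i⟫‖ ≤ 2 * M := by
      rw [norm_mul]; simpa using tb l _ (nx i hi)
    have hin : ‖⟪T l e, e⟫ - 2 * ⟪T l (x i), x i⟫ + b * ∑ i ∈ Finset.range N, ⟪T l (x i), x i⟫‖
        ≤ 4 * M := by
      refine (norm_add_le _ _).trans ?_
      have := norm_sub_le ⟪T l e, e⟫ (2 * ⟪T l (x i), x i⟫)
      have := tb l e ne
      linarith
    refine (norm_add_le _ _).trans ?_
    rw [norm_mul, nb]
    have := h5 i hi l
    calc _ ≤ 1 / (N:ℝ) * (4 * M) + 1 / N := by gcongr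
      _ = _ := by ring

lemma ess_nonempty (hdim : ¬ FiniteDimensional ℂ H) {n : ℕ} (T : Fin n → H →L[ℂ] H) (M : ℝ)
    (hM : ∀ l, ‖T l‖ ≤ M) (hM0 : 0 ≤ M) : (jointEssNumRange T).Nonempty := by
  let b := Module.Basis.ofVectorSpace ℂ H
  have : Infinite (Module.Basis.ofVectorSpaceIndex ℂ H) := by
    by_contra h
    have := not_infinite_iff_finite.1 h
    exact hdim (Module.Finite.of_basis b)
  let g := Infinite.natEmbedding (Module.Basis.ofVectorSpaceIndex ℂ H)
  have hli : LinearIndependent ℂ (fun k => b (g k)) := b.linearIndependent.comp g g.injective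
  let x : ℕ → H := InnerProductSpace.gramSchmidtNormed ℂ (fun k => b (g k))
  have hx : Orthonormal ℂ x := InnerProductSpace.gramSchmidtNormed_orthonormal hli
  obtain ⟨a, -, φ, hφ, ht⟩ := tendsto_subseq_of_bounded
    (Metric.isBounded_closedBall (x := (0 : Fin n → ℂ)) (r := M))
    (x := fun k l => ⟪T l (x k), x k⟫) (by
      intro k
      rw [mem_closedBall_zero_iff, pi_norm_le_iff_of_nonneg hM0]
      intro l
      have q1 := norm_inner_le_norm (𝕜 := ℂ) (T l (x k)) (x k)
      have q2 := (T l).le_opNorm (x k)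
      rw [hx.1 k, mul_one] at q1 q2
      exact q1.trans (q2.trans (hM l)))
  refine ⟨a, x ∘ φ, hx.comp φ hφ.injective, fun j => ?_⟩
  exact (tendsto_pi_nhds.1 ht) j

/-- One step of the construction. -/
lemma ess_step [CompleteSpace H] {n : ℕ} (T : Fin n → H →L[ℂ] H) (mu : ℕ → Fin n → ℂ)
    (hmu : ∀ k, mu k ∈ jointEssNumRange T) (p : ℝ) (hp : 1 < p) (M : ℝ) (hM : ∀ l, ‖T l‖ ≤ M)
    (hM0 : 0 ≤ M) (K : ℕ) (u : ℕ → H)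
    (hu : ∀ i < K, ∀ j < K, ⟪u i, u j⟫ = if i = j then 1 else 0) (y : H) (ε : ℝ) (hε : 0 < ε) :
    ∃ (K' : ℕ) (u' : ℕ → H), K < K' ∧ (∀ i < K, u' i = u i) ∧
      (∀ i < K', ∀ j < K', ⟪u' i, u' j⟫ = if i = j then 1 else 0) ∧
      y ∈ Submodule.span ℂ (u' '' Set.Iio K') ∧
      ∑ i ∈ Finset.Ico K K', ‖fun l => ⟪T l (u' i), u' i⟫ - mu i l‖ ^ p ≤ ε := by
  have hFfin : (u '' Set.Iio K).Finite := (Set.finite_Iio K).image _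
  -- the vector e
  obtain ⟨e, he, heF, hy⟩ : ∃ e : H, ⟪e, e⟫ = 1 ∧ (∀ f ∈ u '' Set.Iio K, ⟪f, e⟫ = 0) ∧
      ∃ c : ℂ, y - c • e ∈ Submodule.span ℂ (u '' Set.Iio K) := by
    let S : Submodule ℂ H := Submodule.span ℂ (u '' Set.Iio K)
    have : FiniteDimensional ℂ S := FiniteDimensional.span_of_finite ℂ hFfin
    by_cases hz : y - S.starProjection y = 0
    · obtain ⟨x, x1, x2, -, -⟩ := ess_select T (hmu 0) _ hFfin one_pos
      refine ⟨x, x1, x2, 0, ?_⟩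
      rw [zero_smul, sub_zero, sub_eq_zero.1 hz]
      exact S.starProjection_apply_mem y
    · set z := y - S.starProjection y with hzd
      have hnk : (‖z‖ : ℂ) ≠ 0 := by simpa using hz
      refine ⟨((‖z‖ : ℂ)⁻¹) • z, ?_, ?_, (‖z‖ : ℂ), ?_⟩
      · have hself : ⟪z, z⟫ = (‖z‖ : ℂ) ^ 2 := inner_self_eq_norm_sq_to_K z
        rw [inner_smul_left, inner_smul_right, hself]
        simp only [map_inv₀, Complex.conj_ofReal]
        field_simp
      · intro f hf
        have hm : z ∈ Sᗮ := S.sub_starProjection_mem_orthogonal y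
        rw [inner_smul_right, (Submodule.mem_orthogonal S _).1 hm f (Submodule.subset_span hf),
          mul_zero]
      · rw [smul_smul, mul_inv_cancel₀ hnk, one_smul, hzd, sub_sub_cancel]
        exact S.starProjection_apply_mem y
  obtain ⟨c, hc⟩ := hy
  -- the block size
  obtain ⟨N, hN, hNε⟩ : ∃ N : ℕ, 0 < N ∧ (N:ℝ) * ((4 * M + 1) / N) ^ p ≤ ε := by
    have h1 : Tendsto (fun N : ℕ => (4 * M + 1) ^ p * (N:ℝ) ^ (-(p - 1))) atTop (nhds 0) := by
      have := ((tendsto_rpow_neg_atTop (sub_pos.2 hp)).comp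
        tendsto_natCast_atTop_atTop).const_mul ((4 * M + 1) ^ p)
      simpa using this
    obtain ⟨N, h2, h3⟩ := ((h1.eventually (gt_mem_nhds hε)).and (eventually_gt_atTop 0)).exists
    refine ⟨N, h3, ?_⟩
    have hNR : (0:ℝ) < N := by exact_mod_cast h3
    refine le_trans (le_of_eq ?_) h2.le
    rw [Real.div_rpow (by positivity) hNR.le, Real.rpow_neg hNR.le, Real.rpow_sub hNR,
      Real.rpow_one]
    have := (Real.rpow_pos_of_pos hNR p).ne'
    field_simp
  obtain ⟨w, w1, w2, w3, w4⟩ := ess_block T (fun i => mu (K + i)) (fun i => hmu _) _ hFfin e he heF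
    M hM hM0 N hN
  have ul : ∀ i < K, (fun i => if i < K then u i else w (i - K)) i = u i := fun i hi => if_pos hi
  have ur : ∀ i, K ≤ i → (fun i => if i < K then u i else w (i - K)) i = w (i - K) :=
    fun i hi => if_neg (not_lt.2 hi)
  generalize (fun i => if i < K then u i else w (i - K)) = u' at ul ur
  refine ⟨K + N, u', by omega, ul, ?_, ?_, ?_⟩
  · intro i hi j hj
    rcases lt_or_ge i K with h | h <;> rcases lt_or_ge j K with h' | h'
    · rw [ul i h, ul j h', hu i h j h']
    · rw [ul i h, ur j h', if_neg (by omega)]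
      exact w2 _ (by omega) _ ⟨i, h, rfl⟩
    · rw [ur i h, ul j h', if_neg (by omega)]
      exact inner_eq_zero_symm.1 (w2 _ (by omega) _ ⟨j, h', rfl⟩)
    · rw [ur i h, ur j h', w1 _ (by omega) _ (by omega)]
      congr 1
      exact propext (by omega)
  · have hy : y = (y - c • e) + c • e := by simp
    rw [hy]
    refine Submodule.add_mem _ (Submodule.span_mono ?_ hc)
      (Submodule.smul_mem _ _ (Submodule.span_mono ?_ w3))
    · rintro _ ⟨i, hi, rfl⟩
      exact ⟨i, Set.mem_Iio.2 (lt_of_lt_of_le (Set.mem_Iio.1 hi) (Nat.le_add_right K N)), ul i hi⟩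
    · rintro _ ⟨i, hi, rfl⟩
      refine ⟨K + i, Nat.add_lt_add_left hi K, ?_⟩
      rw [ur _ (by omega)]; congr 1; omega
  · refine le_trans ?_ hNε
    rw [Finset.sum_Ico_eq_sum_range, Nat.add_sub_cancel_left]
    have : ∀ i ∈ Finset.range N, ‖fun l => ⟪T l (u' (K + i)), u' (K + i)⟫ - mu (K + i) l‖ ^ p ≤
        ((4 * M + 1) / N) ^ p := by
      intro i hi
      refine Real.rpow_le_rpow (norm_nonneg _) ?_ (by linarith)
      rw [ur _ (by omega), Nat.add_sub_cancel_left]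
      exact w4 i (Finset.mem_range.1 hi)
    refine (Finset.sum_le_sum this).trans ?_
    simp

lemma ess_main [CompleteSpace H] [TopologicalSpace.SeparableSpace H]
    {n : ℕ} (T : Fin n → H →L[ℂ] H) (mu : ℕ → Fin n → ℂ)
    (hmu : ∀ k, mu k ∈ jointEssNumRange T) (p : ℝ) (hp : 1 < p) (M : ℝ) (hM : ∀ l, ‖T l‖ ≤ M)
    (hM0 : 0 ≤ M) : ∃ u : HilbertBasis ℕ ℂ H,
      Summable (fun k => ‖fun j => ⟪(T j) (u k), u k⟫ - mu k j‖ ^ p) := by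
  let State := {s : ℕ × (ℕ → H) //
    ∀ i < s.1, ∀ j < s.1, ⟪s.2 i, s.2 j⟫ = if i = j then (1:ℂ) else 0}
  let y : ℕ → H := TopologicalSpace.denseSeq H
  have step : ∀ (m : ℕ) (s : State), ∃ s' : State, s.1.1 < s'.1.1 ∧
      (∀ i < s.1.1, s'.1.2 i = s.1.2 i) ∧
      y m ∈ Submodule.span ℂ (s'.1.2 '' Set.Iio s'.1.1) ∧
      ∑ i ∈ Finset.Ico s.1.1 s'.1.1, ‖fun l => ⟪T l (s'.1.2 i), s'.1.2 i⟫ - mu i l‖ ^ p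
        ≤ (1/2 : ℝ) ^ m := by
    rintro m ⟨⟨K, u⟩, hu⟩
    obtain ⟨K', u', h1, h2, h3, h4, h5⟩ := ess_step T mu hmu p hp M hM hM0 K u hu (y m)
      ((1/2 : ℝ) ^ m) (by positivity)
    exact ⟨⟨⟨K', u'⟩, h3⟩, h1, h2, h4, h5⟩
  choose nxt n1 n2 n3 n4 using step
  let s0 : State := ⟨⟨0, fun _ => 0⟩, by simp⟩
  let S : ℕ → State := fun m => Nat.rec s0 (fun m s => nxt m s) m
  have hS : ∀ m, S (m+1) = nxt m (S m) := fun m => rfl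
  let K : ℕ → ℕ := fun m => (S m).1.1
  let U : ℕ → ℕ → H := fun m => (S m).1.2
  have hK : StrictMono K := strictMono_nat_of_lt_succ fun m => n1 m (S m)
  have hKm : ∀ m, m ≤ K m := fun m => hK.le_apply
  have hU1 : ∀ m, ∀ i < K m, U (m+1) i = U m i := fun m => n2 m (S m)
  have hU : ∀ m d, ∀ i < K m, U (m+d) i = U m i := by
    intro m d
    induction d with
    | zero => intro i _; rfl
    | succ d ih =>
      intro i hi
      rw [← ih i hi]
      exact hU1 (m+d) i (hi.trans_le (hK.monotone (Nat.le_add_right _ _)))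
  let v : ℕ → H := fun k => U (k+1) k
  have hv : ∀ m, ∀ i < K m, v i = U m i := by
    intro m i hi
    rcases le_total m (i+1) with h | h
    · obtain ⟨d, hd⟩ := Nat.exists_eq_add_of_le h
      show U (i+1) i = _
      rw [hd]; exact hU m d i hi
    · obtain ⟨d, hd⟩ := Nat.exists_eq_add_of_le h
      show U (i+1) i = _
      rw [hd]; exact (hU (i+1) d i (hKm (i+1))).symm
  have hon : Orthonormal ℂ v := by
    rw [orthonormal_iff_ite]
    intro i j
    have hi : i < K (max i j + 1) := lt_of_lt_of_le (by omega) (hKm (max i j + 1))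
    have hj : j < K (max i j + 1) := lt_of_lt_of_le (by omega) (hKm (max i j + 1))
    rw [hv (max i j + 1) i hi, hv (max i j + 1) j hj]
    exact (S (max i j + 1)).2 i hi j hj
  have hspan : ⊤ ≤ (Submodule.span ℂ (Set.range v)).topologicalClosure := by
    intro x _
    have hx : x ∈ closure (Set.range y) := TopologicalSpace.denseRange_denseSeq H x
    refine closure_mono ?_ hx
    rintro _ ⟨m, rfl⟩
    refine Submodule.span_mono ?_ (n3 m (S m))
    rintro _ ⟨i, hi, rfl⟩
    exact ⟨i, hv (m+1) i hi⟩
  refine ⟨HilbertBasis.mk hon hspan, ?_⟩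
  rw [HilbertBasis.coe_mk]
  have hnn : ∀ k, 0 ≤ ‖fun j => ⟪(T j) (v k), v k⟫ - mu k j‖ ^ p := fun k => by positivity
  have hsum : ∀ m, ∑ i ∈ Finset.range (K m), ‖fun j => ⟪(T j) (v i), v i⟫ - mu i j‖ ^ p ≤
      ∑ i ∈ Finset.range m, (1/2:ℝ) ^ i := by
    intro m
    induction m with
    | zero => simp [K, S, s0]
    | succ m ih =>
      rw [Finset.sum_range_succ, ← Finset.sum_range_add_sum_Ico _ (hK.monotone (Nat.le_succ m))]
      refine add_le_add ih (le_trans (le_of_eq ?_) (n4 m (S m)))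
      refine Finset.sum_congr rfl fun i hi => ?_
      rw [hv (m+1) i (Finset.mem_Ico.1 hi).2]
  refine summable_of_sum_range_le (c := 2) hnn fun m => ?_
  refine (Finset.sum_le_sum_of_subset_of_nonneg
    (Finset.range_mono (hKm m)) fun i _ _ => hnn i).trans ((hsum m).trans ?_)
  exact sum_geometric_two_le m

end EssNumRange

/-- If `∑ₖ dist(λ_k, W_e(𝒯))^p < ∞` (`p > 1`), then there is an orthonormal basis
`(u_k)` with `∑ₖ (max_j |⟨T_j u_k, u_k⟩ - λ_{k,j}|)^p < ∞`; equivalently `(λ_k)` is a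
diagonal of `𝒯 + 𝒦` for a tuple `𝒦` of Schatten-`p`-class operators, diagonal in the
basis `(u_k)`. -/
theorem stmt_12 {H : Type*} [NormedAddCommGroup H] [InnerProductSpace ℂ H]
    [CompleteSpace H] [TopologicalSpace.SeparableSpace H]
    (hdim : ¬ FiniteDimensional ℂ H)
    {n : ℕ} (T : Fin n → H →L[ℂ] H)
    (p : ℝ) (hp : 1 < p)
    (lam : ℕ → Fin n → ℂ)
    (hlam : Summable (fun k => (Metric.infDist (lam k) (jointEssNumRange T)) ^ p)) :
    ∃ u : HilbertBasis ℕ ℂ H,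
      Summable (fun k => ‖fun j => ⟪(T j) (u k), u k⟫ - lam k j‖ ^ p) := by
  have hM : ∀ l, ‖T l‖ ≤ ∑ i, ‖T i‖ := fun l =>
    Finset.single_le_sum (f := fun i => ‖T i‖) (fun i _ => norm_nonneg _) (Finset.mem_univ l)
  have hM0 : 0 ≤ ∑ i, ‖T i‖ := Finset.sum_nonneg fun i _ => norm_nonneg _
  have hne := ess_nonempty hdim T _ hM hM0
  have hch : ∀ k, ∃ m ∈ jointEssNumRange T,
      dist (lam k) m < Metric.infDist (lam k) (jointEssNumRange T) + (1/2:ℝ) ^ k := fun k =>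
    (Metric.infDist_lt_iff hne).1 (lt_add_of_pos_right _ (by positivity))
  choose mu hmu hd using hch
  obtain ⟨u, hu⟩ := ess_main T mu hmu p hp _ hM hM0
  refine ⟨u, ?_⟩
  have hgeo : Summable (fun k : ℕ => ((1/2:ℝ) ^ k) ^ p) := by
    refine Summable.of_nonneg_of_le (fun k => by positivity) (fun k => ?_) summable_geometric_two
    exact Real.rpow_le_self_of_le_one (by positivity)
      (pow_le_one₀ (by norm_num) (by norm_num)) hp.le
  have s1 := Real.summable_Lp_add_of_nonneg hp.le (fun k => Metric.infDist_nonneg)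
    (fun k => by positivity) hlam hgeo
  have s2 := Real.summable_Lp_add_of_nonneg hp.le (fun k => norm_nonneg _)
    (fun k => add_nonneg Metric.infDist_nonneg (by positivity)) hu s1
  refine Summable.of_nonneg_of_le (fun k => by positivity) (fun k => ?_) s2
  refine Real.rpow_le_rpow (norm_nonneg _) ?_ (by linarith)
  have e : (fun j => ⟪(T j) (u k), u k⟫ - lam k j) =
      (fun j => ⟪(T j) (u k), u k⟫ - mu k j) - (lam k - mu k) := by
    funext j; simp
  rw [e]
  refine (norm_sub_le _ _).trans (add_le_add le_rfl ?_)
  rw [← dist_eq_norm]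
  exact (hd k).le
end

section
/- Let H be a complex separable infinite-dimensional Hilbert space and 𝒯 = (T_1, …, T_n) an n-tuple of bounded operators on H. Then the union, over all n-tuples 𝒦 = (K_1, …, K_n) of compact operators on H, of the sets D_const(𝒯 + 𝒦) equals W_e(𝒯). That is, λ ∈ ℂ^n belongs to W_e(𝒯) if and only if there exist compact operators K_1, …, K_n on H and an orthonormal basis (u_k)_{k≥1} of H with ⟨(T_j + K_j) u_k, u_k⟩ = λ_j for all k ≥ 1 and all j = 1, …, n. -/
open Filter Metric
open scoped ComplexInnerProductSpace

namespace S13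
variable {H : Type*} [NormedAddCommGroup H] [InnerProductSpace ℂ H]

lemma weak_null {x : ℕ → H} (hx : Orthonormal ℂ x) (v : H) :
    Tendsto (fun k => ⟪x k, v⟫) atTop (nhds 0) := by
  have h := (hx.inner_products_summable v).tendsto_atTop_zero
  rw [tendsto_zero_iff_norm_tendsto_zero]
  have h2 := h.sqrt
  simpa using h2

lemma weak_null' {x : ℕ → H} (hx : Orthonormal ℂ x) (v : H) :
    Tendsto (fun k => ⟪v, x k⟫) atTop (nhds 0) := by
  rw [tendsto_zero_iff_norm_tendsto_zero]
  simpa [norm_inner_symm] using (weak_null hx v).norm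

lemma compact_null [CompleteSpace H] {x : ℕ → H} (hx : Orthonormal ℂ x) {K : H →L[ℂ] H}
    (hK : IsCompactOperator K) : Tendsto (fun k => K (x k)) atTop (nhds 0) := by
  obtain ⟨S, hS, hsub⟩ := hK.image_closedBall_subset_compact (f := (K : H →ₗ[ℂ] H)) 1
  refine tendsto_of_subseq_tendsto fun ns hns => ?_
  have hmem : ∀ k, K (x (ns k)) ∈ S := fun k =>
    hsub ⟨x (ns k), by simp [hx.1], rfl⟩
  obtain ⟨y, -, φ, hφ, hy⟩ := hS.tendsto_subseq hmem
  refine ⟨φ, ?_⟩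
  have h1 : Tendsto (fun k => ⟪y, K (x (ns (φ k)))⟫) atTop (nhds ⟪y, y⟫) :=
    tendsto_const_nhds.inner hy
  have h2 : Tendsto (fun k => ⟪y, K (x (ns (φ k)))⟫) atTop (nhds 0) := by
    have := (weak_null' hx (ContinuousLinearMap.adjoint K y)).comp (hns.comp hφ.tendsto_atTop)
    refine this.congr fun k => ?_
    simp [ContinuousLinearMap.adjoint_inner_left]
  have : y = 0 := inner_self_eq_zero.1 (tendsto_nhds_unique h1 h2)
  subst this
  exact hy

lemma exists_diag [CompleteSpace H] {u : ℕ → H} (hu : Orthonormal ℂ u) {c : ℕ → ℂ}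
    (hc : Tendsto c atTop (nhds 0)) :
    ∃ K : H →L[ℂ] H, IsCompactOperator K ∧ ∀ k, K (u k) = c k • u k := by
  set f : ℕ → H →L[ℂ] H := fun k => c k • InnerProductSpace.rankOne ℂ (u k) (u k) with hf
  have hs : Summable f := by
    rw [summable_iff_vanishing_norm]
    intro ε hε
    obtain ⟨N, hN⟩ := (Metric.tendsto_atTop.1 hc) (ε/2) (by positivity)
    refine ⟨Finset.range N, fun t ht => ?_⟩
    refine lt_of_le_of_lt (ContinuousLinearMap.opNorm_le_bound _ (by positivity : 0 ≤ ε/2)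
      fun v => ?_) (by linarith)
    have e : (∑ i ∈ t, f i) v = ∑ i ∈ t, (c i * ⟪u i, v⟫) • u i := by
      simp [hf, mul_smul]
    have hsq : ‖(∑ i ∈ t, f i) v‖ ^ 2 = ∑ i ∈ t, ‖c i * ⟪u i, v⟫‖ ^ 2 := by
      rw [e]
      have := hu.inner_sum (fun i => c i * ⟪u i, v⟫) (fun i => c i * ⟪u i, v⟫) t
      rw [inner_self_eq_norm_sq_to_K] at this
      have h3 : ((‖∑ i ∈ t, (c i * ⟪u i, v⟫) • u i‖ ^ 2 : ℝ) : ℂ)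
          = ((∑ i ∈ t, ‖c i * ⟪u i, v⟫‖ ^ 2 : ℝ) : ℂ) := by
        push_cast
        refine this.trans (Finset.sum_congr rfl fun i _ => ?_)
        rw [Complex.conj_mul']
      exact_mod_cast h3
    have hb : ‖(∑ i ∈ t, f i) v‖ ^ 2 ≤ (ε / 2 * ‖v‖) ^ 2 := by
      rw [hsq, mul_pow]
      calc ∑ i ∈ t, ‖c i * ⟪u i, v⟫‖ ^ 2 ≤ ∑ i ∈ t, (ε/2)^2 * ‖⟪u i, v⟫‖ ^ 2 := by
            refine Finset.sum_le_sum fun i hi => ?_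
            rw [norm_mul, mul_pow]
            have hi' : N ≤ i := by
              have := Finset.disjoint_left.1 ht hi
              simpa using this
            have := hN i hi'
            rw [dist_zero_right] at this
            gcongr
        _ = (ε/2)^2 * ∑ i ∈ t, ‖⟪u i, v⟫‖ ^ 2 := by rw [Finset.mul_sum]
        _ ≤ _ := by gcongr; exact hu.sum_inner_products_le v
    exact le_of_sq_le_sq hb (by positivity)
  refine ⟨∑' k, f k, ?_, fun k => ?_⟩
  · refine isCompactOperator_of_tendsto (l := atTop) hs.hasSum (Eventually.of_forall fun t => ?_)
    have : ∑ i ∈ t, f i ∈ compactOperator (RingHom.id ℂ) H H := by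
      refine Submodule.sum_mem _ fun i _ => Submodule.smul_mem _ _ ?_
      change IsCompactOperator _
      rw [InnerProductSpace.rankOne_def']
      exact (isCompactOperator_of_locallyCompactSpace_dom
        (innerSL ℂ (u i))).clm_comp (ContinuousLinearMap.toSpanSingleton ℂ (u i))
    exact this
  · have h1 := hs.hasSum.mapL (ContinuousLinearMap.apply ℂ H (u k))
    have h2 : HasSum (fun i => f i (u k)) (f k (u k)) := by
      refine hasSum_single k fun i hi => ?_
      simp [hf, hu.2 hi]
    have := h1.unique h2
    simp only [ContinuousLinearMap.apply_apply] at this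
    rw [this]
    simp [hf, hu.1]

lemma exists_block [CompleteSpace H] {n : ℕ} (T : Fin n → H →L[ℂ] H) (lam : Fin n → ℂ) {x : ℕ → H}
    (hx : Orthonormal ℂ x)
    (hl : ∀ j, Tendsto (fun k => ⟪(T j) (x k), x k⟫) atTop (nhds (lam j))) (k0 : ℕ) (N : ℕ) :
    ∀ ε : ℝ, 0 < ε → ∃ B : Finset ℕ, B.card = N ∧ (∀ k ∈ B, k0 ≤ k) ∧
      ∀ j, ‖⟪T j (∑ k ∈ B, x k), ∑ k ∈ B, x k⟫ - N * lam j‖ < ε := by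
  induction N with
  | zero => intro ε hε; exact ⟨∅, by simp [hε]⟩
  | succ N ih =>
    intro ε hε
    obtain ⟨B, hB, hk, hj⟩ := ih (ε/4) (by positivity)
    set s := ∑ k ∈ B, x k with hs
    have e1 : ∀ᶠ k in atTop, ∀ j, ‖⟪T j s, x k⟫‖ < ε/4 := by
      rw [eventually_all]
      intro j
      have := (weak_null' hx (T j s)).norm
      rw [norm_zero] at this
      exact this.eventually_lt_const (by positivity)
    have e2 : ∀ᶠ k in atTop, ∀ j, ‖⟪T j (x k), s⟫‖ < ε/4 := by
      rw [eventually_all]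
      intro j
      have := (weak_null hx (ContinuousLinearMap.adjoint (T j) s)).norm
      rw [norm_zero] at this
      simp only [ContinuousLinearMap.adjoint_inner_right] at this
      exact this.eventually_lt_const (by positivity)
    have e3 : ∀ᶠ k in atTop, ∀ j, ‖⟪T j (x k), x k⟫ - lam j‖ < ε/4 := by
      rw [eventually_all]
      intro j
      have := ((hl j).sub_const (lam j)).norm
      rw [sub_self, norm_zero] at this
      exact this.eventually_lt_const (by positivity)
    obtain ⟨k, h1, h2, h3, h4, h5⟩ := (e1.and (e2.and (e3.and ((eventually_ge_atTop k0).and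
      (eventually_gt_atTop (B.sup id)))))).exists
    have hkB : k ∉ B := fun h => absurd (Finset.le_sup (f := id) h) (by simpa using h5)
    refine ⟨insert k B, by simp [hkB, hB], ?_, fun j => ?_⟩
    · intro i hi
      rcases Finset.mem_insert.1 hi with rfl | hi
      · exact h4
      · exact hk i hi
    · rw [Finset.sum_insert hkB, ← hs]
      have : ⟪T j (x k + s), x k + s⟫ - ((N+1 : ℕ) : ℂ) * lam j =
          (⟪T j s, s⟫ - N * lam j) + ⟪T j s, x k⟫ + ⟪T j (x k), s⟫ +
            (⟪T j (x k), x k⟫ - lam j) := by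
        simp only [map_add, inner_add_left, inner_add_right]; push_cast; ring
      rw [this]
      refine lt_of_le_of_lt (norm_add₄_le) ?_
      linarith [hj j, h1 j, h2 j, h3 j]

/-- disjoint blocks of increasing size -/
lemma exists_blocks [CompleteSpace H] {n : ℕ} (T : Fin n → H →L[ℂ] H) (lam : Fin n → ℂ) {x : ℕ → H}
    (hx : Orthonormal ℂ x)
    (hl : ∀ j, Tendsto (fun k => ⟪(T j) (x k), x k⟫) atTop (nhds (lam j))) :
    ∃ B : ℕ → Finset ℕ, (∀ m, m < (B m).card) ∧ (∀ m m', m ≠ m' → Disjoint (B m) (B m')) ∧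
      ∀ m j, ‖⟪T j (∑ k ∈ B m, x k), ∑ k ∈ B m, x k⟫ - (B m).card * lam j‖ < 1 := by
  obtain ⟨B, hP, hr⟩ := exists_seq_of_forall_finset_exists
    (fun B : Finset ℕ => 0 < B.card ∧
      ∀ j, ‖⟪T j (∑ k ∈ B, x k), ∑ k ∈ B, x k⟫ - B.card * lam j‖ < 1)
    (fun A B => A.card < B.card ∧ Disjoint A B) (by
      intro F _
      obtain ⟨B, h1, h2, h3⟩ := exists_block T lam hx hl (F.sup (fun A => A.sup id) + 1)
        (F.sup Finset.card + 1) 1 one_pos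
      refine ⟨B, ⟨by omega, fun j => by rw [h1]; exact h3 j⟩, fun A hA => ⟨?_, ?_⟩⟩
      · have := Finset.le_sup (f := Finset.card) hA
        omega
      · rw [Finset.disjoint_left]
        intro k hkA hkB
        have a1 : k ≤ A.sup id := Finset.le_sup (f := id) hkA
        have a2 := Finset.le_sup (f := fun A : Finset ℕ => A.sup id) hA
        have a3 := h2 k hkB
        have a4 := a1.trans a2
        omega)
  refine ⟨B, fun m => ?_, fun m m' h => ?_, fun m j => (hP m).2 j⟩
  · induction m with
    | zero => exact (hP 0).1
    | succ m ih => have := (hr m (m+1) (by omega)).1; omega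
  · rcases lt_or_gt_of_ne h with h | h
    · exact (hr _ _ h).2
    · exact (hr _ _ h).2.symm

lemma tendsto_of_blocks {f : ℕ → H} {B : ℕ → Finset ℕ} (hcard : ∀ m, m < (B m).card)
    (h : ∀ k, f k = 0 ∨ ∃ m, k ∈ B m ∧ ‖f k‖ ≤ 1 / √((B m).card)) :
    Tendsto f cofinite (nhds 0) := by
  rw [Metric.tendsto_nhds]
  intro ε hε
  have hlim : Tendsto (fun m : ℕ => 1 / √(m : ℝ)) atTop (nhds 0) := by
    simp only [one_div]
    exact (Real.tendsto_sqrt_atTop.comp tendsto_natCast_atTop_atTop).inv_tendsto_atTop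
  obtain ⟨M, hM⟩ := eventually_atTop.1 (hlim.eventually_lt_const hε)
  rw [eventually_cofinite]
  refine ((Finset.range M).biUnion B).finite_toSet.subset fun k hk => ?_
  simp only [Set.mem_ofPred_eq, dist_zero_right, not_lt] at hk
  rcases h k with h0 | ⟨m, hm, hle⟩
  · rw [h0, norm_zero] at hk; linarith
  · simp only [Finset.coe_biUnion, Finset.coe_range, Set.mem_iUnion, Set.mem_Iio, Finset.mem_coe]
    refine ⟨m, ?_, hm⟩
    by_contra hcon
    have := hM (B m).card (by have := hcard m; omega)
    linarith

lemma countable_of_orthonormal [TopologicalSpace.SeparableSpace H] {ι : Type*} {v : ι → H}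
    (hv : Orthonormal ℂ v) : Countable ι := by
  refine Pairwise.countable_of_isOpen_disjoint (s := fun i => ball (v i) (1/2)) ?_
    (fun i => isOpen_ball) (fun i => ⟨v i, by simp⟩)
  intro i j hij
  refine ball_disjoint_ball ?_
  have h1 : ‖v i - v j‖ * ‖v i - v j‖ = 2 := by
    have := norm_sub_sq (𝕜 := ℂ) (v i) (v j)
    rw [hv.2 hij, hv.1, hv.1] at this
    norm_num at this
    nlinarith
  rw [dist_eq_norm]
  nlinarith [norm_nonneg (v i - v j)]

lemma exists_good_basis [CompleteSpace H] [TopologicalSpace.SeparableSpace H]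
    {n : ℕ} (T : Fin n → H →L[ℂ] H) (lam : Fin n → ℂ) {x : ℕ → H}
    (hx : Orthonormal ℂ x)
    (hl : ∀ j, Tendsto (fun k => ⟪(T j) (x k), x k⟫) atTop (nhds (lam j))) :
    ∃ u : HilbertBasis ℕ ℂ H, ∀ j, Tendsto (fun k => ⟪(T j) (u k), u k⟫) atTop (nhds (lam j)) := by
  obtain ⟨B, hcard, hdisj, hB⟩ := exists_blocks T lam hx hl
  obtain ⟨w, b, hxw, hb⟩ := hx.toSubtypeRange.exists_hilbertBasis_extension
  have hbo := b.orthonormal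
  have hcount : Countable w := countable_of_orthonormal hbo
  rw [hb] at hbo
  obtain ⟨enc, henc⟩ := Set.countable_iff_exists_injOn.1 (Set.countable_coe_iff.1 hcount)
  have hxw' : ∀ k, x k ∈ w := fun k => hxw ⟨k, rfl⟩
  have hxi : ∀ k l, ⟪x k, x l⟫ = if k = l then (1:ℂ) else 0 := orthonormal_iff_ite.1 hx
  have hww : ∀ y ∈ w, ∀ z ∈ w, y ≠ z → ⟪y, z⟫ = 0 := fun y hy z hz hyz =>
    hbo.2 (i := ⟨y, hy⟩) (j := ⟨z, hz⟩) (by simpa using hyz)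
  have hw1 : ∀ y ∈ w, ‖y‖ = 1 := fun y hy => hbo.1 ⟨y, hy⟩
  set Y : Set H := {y | y ∈ w ∧ y ∉ Set.range x} with hY
  have hyx : ∀ y ∈ Y, ∀ k, ⟪y, x k⟫ = 0 := fun y hy k =>
    hww y hy.1 _ (hxw' k) (fun h => hy.2 ⟨k, h.symm⟩)
  set a : ℕ → ℝ := fun m => 1 / √((B m).card) with ha
  have hpos : ∀ m, (0:ℝ) < (B m).card := fun m => by
    have := hcard m
    exact_mod_cast (by omega : 0 < (B m).card)
  have ha2 : ∀ m, (a m) * (a m) * (B m).card = 1 := fun m => by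
    have h := hpos m
    have h2 := Real.mul_self_sqrt h.le
    have h3 := Real.sqrt_pos.2 h
    simp only [ha]
    field_simp
    nlinarith
  have hapos : ∀ m, 0 ≤ a m := fun m => by positivity
  set s : ℕ → H := fun m => (a m : ℂ) • ∑ k ∈ B m, x k with hs
  have hsx : ∀ m k, ⟪s m, x k⟫ = if k ∈ B m then (a m : ℂ) else 0 := fun m k => by
    simp [hs, inner_smul_left, sum_inner, hxi]
  have hys : ∀ y ∈ Y, ∀ m, ⟪y, s m⟫ = 0 := fun y hy m => by
    simp [hs, inner_smul_right, inner_sum, hyx y hy]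
  have hsy : ∀ y ∈ Y, ∀ m, ⟪s m, y⟫ = 0 := fun y hy m => by
    rw [← inner_conj_symm, hys y hy m, map_zero]
  have hss : ∀ m m', ⟪s m, s m'⟫ = if m = m' then (1:ℂ) else 0 := fun m m' => by
    have : ⟪s m, s m'⟫ = (a m' : ℂ) * ∑ k ∈ B m', if k ∈ B m then (a m : ℂ) else 0 := by
      conv_lhs => rw [hs]
      simp only [inner_smul_right, inner_sum]
      congr 1
      exact Finset.sum_congr rfl fun k _ => hsx m k
    rw [this]
    split_ifs with h
    · subst h
      rw [Finset.sum_congr rfl (fun k hk => if_pos hk)]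
      simp only [Finset.sum_const, nsmul_eq_mul]
      have := ha2 m
      rw [mul_left_comm, mul_comm, ]
      exact_mod_cast this
    · rw [Finset.sum_eq_zero, mul_zero]
      intro k hk
      exact if_neg (fun hk' => Finset.disjoint_left.1 (hdisj m m' h) hk' hk)
  have hs1 : ∀ m, ‖s m‖ = 1 := fun m => by
    have := hss m m
    rw [if_pos rfl, inner_self_eq_norm_sq_to_K] at this
    have h2 : ‖s m‖ ^ 2 = 1 := Complex.ofReal_injective (by push_cast; exact this)
    nlinarith [norm_nonneg (s m)]
  have hsT : ∀ j, Tendsto (fun m => ⟪T j (s m), s m⟫) cofinite (nhds (lam j)) := by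
    intro j
    rw [Nat.cofinite_eq_atTop, tendsto_iff_norm_sub_tendsto_zero]
    refine squeeze_zero (fun _ => norm_nonneg _) (fun m => ?_)
      (tendsto_one_div_add_atTop_nhds_zero_nat (𝕜 := ℝ))
    have e : ⟪T j (s m), s m⟫ - lam j = (a m * a m : ℂ) *
        (⟪T j (∑ k ∈ B m, x k), ∑ k ∈ B m, x k⟫ - (B m).card * lam j) := by
      have h : (a m : ℂ) * a m * (B m).card = 1 := by exact_mod_cast ha2 m
      simp only [hs, map_smul, inner_smul_left, inner_smul_right, Complex.conj_ofReal]
      linear_combination (lam j) * h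
    have hc : (m:ℝ) + 1 ≤ (B m).card := by exact_mod_cast hcard m
    have hm : a m * a m ≤ 1 / ((m:ℝ) + 1) := by
      rw [le_div_iff₀ (by positivity)]
      nlinarith [ha2 m, mul_nonneg (hapos m) (hapos m)]
    rw [e, norm_mul, norm_mul, Complex.norm_real, Real.norm_of_nonneg (hapos m)]
    nlinarith [hB m j, mul_nonneg (hapos m) (hapos m), norm_nonneg (⟪T j (∑ k ∈ B m, x k), ∑ k ∈ B m, x k⟫ - (B m).card * lam j)]
  set d : H → H := fun y => y - s (enc y) with hd
  set K : Submodule ℂ H := (Submodule.span ℂ (d '' Y)).topologicalClosure with hK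
  have hdK : ∀ y ∈ Y, d y ∈ K := fun y hy =>
    Submodule.le_topologicalClosure _ (Submodule.subset_span ⟨y, hy, rfl⟩)
  have hKo : ∀ v, (∀ y ∈ Y, ⟪d y, v⟫ = 0) → v ∈ Kᗮ := by
    intro v hv
    rw [hK, Submodule.orthogonal_closure, Submodule.mem_orthogonal]
    intro z hz
    induction hz using Submodule.span_induction with
    | mem z hz => obtain ⟨y, hy, rfl⟩ := hz; exact hv y hy
    | zero => simp
    | add p q _ _ hp hq => rw [inner_add_left, hp, hq, add_zero]
    | smul c p _ hp => rw [inner_smul_left, hp, mul_zero]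
  have : CompleteSpace K := (Submodule.isClosed_topologicalClosure _).completeSpace_coe
  have hencne : ∀ y ∈ Y, ∀ y' ∈ Y, y ≠ y' → enc y ≠ enc y' := fun y hy y' hy' h h' =>
    h (henc hy.1 hy'.1 h')
  have hPy : ∀ y ∈ Y, K.starProjection y = (1/2 : ℂ) • d y := by
    intro y hy
    refine Submodule.eq_starProjection_of_mem_orthogonal (K.smul_mem _ (hdK y hy)) (hKo _ ?_)
    intro y' hy'
    have e : y - (1/2 : ℂ) • d y = (1/2 : ℂ) • (y + s (enc y)) := by
      simp only [hd]; module
    rw [e, inner_smul_right, hd]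
    simp only [inner_sub_left, inner_add_right, hys y' hy', hsy y hy, hss]
    by_cases h : y' = y
    · subst h
      simp [inner_self_eq_norm_sq_to_K, hw1 y' hy'.1]
    · rw [hww y' hy'.1 y hy.1 h, if_neg (hencne y' hy' y hy h)]; simp
  have hRy : ∀ y ∈ Y, K.reflection y = - s (enc y) := by
    intro y hy
    rw [Submodule.reflection_apply, hPy y hy]
    simp only [hd]; module
  have hdn : ∀ y ∈ Y, ‖d y‖ ≤ 2 := fun y hy => by
    refine (norm_sub_le _ _).trans ?_
    rw [hw1 y hy.1, hs1]; norm_num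
  have hPx : ∀ k, K.starProjection (x k) = 0 ∨
      ∃ m, k ∈ B m ∧ ‖K.starProjection (x k)‖ ≤ 1 / √((B m).card) := by
    intro k
    by_cases hk : ∃ y ∈ Y, k ∈ B (enc y)
    · right
      obtain ⟨y, hy, hk⟩ := hk
      refine ⟨enc y, hk, ?_⟩
      have : K.starProjection (x k) = (-(a (enc y) : ℂ)/2) • d y := by
        refine Submodule.eq_starProjection_of_mem_orthogonal (K.smul_mem _ (hdK y hy)) (hKo _ ?_)
        intro y' hy'
        rw [inner_sub_right, inner_smul_right, hd]
        simp only [inner_sub_left, inner_sub_right, hys y' hy', hsy y hy, hss, hyx y' hy', hsx]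
        by_cases h : y' = y
        · subst h
          simp [inner_self_eq_norm_sq_to_K, hw1 y' hy'.1, hk]
          ring
        · have hne := hencne y' hy' y hy h
          have hk' : k ∉ B (enc y') := fun h' => Finset.disjoint_left.1 (hdisj _ _ hne) h' hk
          rw [hww y' hy'.1 y hy.1 h, if_neg hne, if_neg hk']; simp
      rw [this, norm_smul]
      have h1 : ‖(-(a (enc y) : ℂ)/2)‖ = a (enc y) / 2 := by
        rw [norm_div, norm_neg, Complex.norm_real, Real.norm_of_nonneg (hapos _)]; norm_num
      rw [h1]
      have := hdn y hy
      have h2 := hapos (enc y)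
      change _ ≤ a (enc y)
      nlinarith
    · left
      push Not at hk
      refine (Submodule.eq_starProjection_of_mem_orthogonal (K.zero_mem) (hKo _ ?_)).symm ▸ rfl
      intro y hy
      simp [hd, inner_sub_left, hyx y hy, hsx, hk y hy]
  have hPlim := tendsto_of_blocks hcard hPx
  have hRx : ∀ j, Tendsto (fun k => ⟪T j (K.reflection (x k)), K.reflection (x k)⟫) cofinite
      (nhds (lam j)) := by
    intro j
    have hl' := hl j
    rw [← Nat.cofinite_eq_atTop] at hl'
    set p := fun k => K.starProjection (x k) with hp
    have hTp : Tendsto (fun k => T j (p k)) cofinite (nhds 0) := by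
      have := ((T j).continuous.tendsto 0).comp hPlim
      rw [map_zero] at this
      exact this
    have bdd : ∀ (f g : ℕ → H) (C : ℝ), (∀ k, ‖f k‖ ≤ C) → Tendsto g cofinite (nhds 0) →
        Tendsto (fun k => ⟪f k, g k⟫) cofinite (nhds 0) ∧
        Tendsto (fun k => ⟪g k, f k⟫) cofinite (nhds 0) := by
      intro f g C hf hg
      have h1 : Tendsto (fun k => C * ‖g k‖) cofinite (nhds 0) := by
        simpa using hg.norm.const_mul C
      constructor
      · refine squeeze_zero_norm (fun k => (norm_inner_le_norm _ _).trans ?_) h1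
        gcongr; exact hf k
      · refine squeeze_zero_norm (fun k => (norm_inner_le_norm _ _).trans ?_) h1
        rw [mul_comm]
        gcongr; exact hf k
    have l1 := (bdd (fun k => T j (x k)) p ‖T j‖ (fun k => by
      simpa [hx.1 k] using (T j).le_opNorm (x k)) hPlim).1
    have l2 := (bdd x (fun k => T j (p k)) 1 (fun k => (hx.1 k).le) hTp).2
    have l3 : Tendsto (fun k => ⟪T j (p k), p k⟫) cofinite (nhds 0) := by
      have := Tendsto.inner (𝕜 := ℂ) hTp hPlim
      rwa [inner_zero_left] at this
    have := ((hl'.sub (l1.const_mul 2)).sub (l2.const_mul 2)).add (l3.const_mul 4)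
    simp only [mul_zero, sub_zero, add_zero] at this
    refine this.congr fun k => ?_
    have e : K.reflection (x k) = (2:ℂ) • p k - x k := by
      rw [Submodule.reflection_apply, two_smul, two_smul]
    rw [e]
    simp only [map_sub, map_smul, inner_sub_left, inner_sub_right, inner_smul_left, inner_smul_right, Complex.conj_ofNat]
    ring
  have : Infinite w := Infinite.of_injective (fun k => (⟨x k, hxw' k⟩ : w)) (by
    intro k l h
    exact hx.linearIndependent.injective (by simpa using h))
  obtain ⟨e⟩ : Nonempty (ℕ ≃ w) := nonempty_equiv_of_countable
  have hu : Orthonormal ℂ (fun k : ℕ => K.reflection (e k : H)) :=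
    (hbo.comp e e.injective).comp_linearIsometryEquiv K.reflection
  let u : HilbertBasis ℕ ℂ H := HilbertBasis.mkOfOrthogonalEqBot hu (by
    rw [eq_bot_iff]
    intro v hv
    have hv' : ∀ i : w, ⟪b i, K.reflection v⟫ = 0 := by
      intro i
      have h1 := (Submodule.mem_orthogonal _ _).1 hv (K.reflection (e (e.symm i) : H))
        (Submodule.subset_span ⟨e.symm i, rfl⟩)
      rw [← LinearIsometryEquiv.inner_map_map K.reflection, Submodule.reflection_reflection] at h1
      simpa [hb] using h1
    have h0 : K.reflection v = 0 := by
      apply b.repr.injective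
      ext i
      rw [b.repr_apply_apply, hv' i]; simp
    simpa using h0)
  have hucoe : ∀ k, u k = K.reflection (e k : H) := fun k => by
    simp only [u, HilbertBasis.coe_mkOfOrthogonalEqBot]
  refine ⟨u, fun j => ?_⟩
  simp only [hucoe]
  have key : Tendsto (fun i : w => ⟪T j (K.reflection (i : H)), K.reflection (i : H)⟫) cofinite
      (nhds (lam j)) := by
    rw [Metric.tendsto_nhds]
    intro ε hε
    have f1 := (Metric.tendsto_nhds.1 (hRx j)) ε hε
    have f2 := (Metric.tendsto_nhds.1 (hsT j)) ε hε
    rw [eventually_cofinite] at f1 f2 ⊢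
    have f2' : (Y ∩ enc ⁻¹' {m | ¬ dist ⟪T j (s m), s m⟫ (lam j) < ε}).Finite := by
      refine Set.Finite.of_finite_image (f := enc) (f2.subset ?_) (henc.mono fun y hy => hy.1.1)
      rintro _ ⟨y, hy, rfl⟩
      exact hy.2
    refine Set.Finite.of_finite_image (f := Subtype.val)
      (((f1.image x).union f2').subset ?_) Subtype.val_injective.injOn
    rintro _ ⟨⟨y, hy⟩, hi, rfl⟩
    by_cases hr : y ∈ Set.range x
    · obtain ⟨k, rfl⟩ := hr
      exact Or.inl ⟨k, hi, rfl⟩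
    · refine Or.inr ⟨⟨hy, hr⟩, ?_⟩
      simp only [Set.mem_ofPred_eq, hRy y ⟨hy, hr⟩, map_neg, inner_neg_neg] at hi
      exact hi
  have := key.comp e.injective.tendsto_cofinite
  rwa [Nat.cofinite_eq_atTop] at this

end S13

/-- `⋃_{𝒦 compact} D_const(𝒯 + 𝒦) = W_e(𝒯)`: a point `λ ∈ ℂ^n` is in the joint
essential numerical range of `𝒯` iff it is a constant diagonal of some compact
perturbation of `𝒯`. -/
theorem stmt_13 {H : Type*} [NormedAddCommGroup H] [InnerProductSpace ℂ H]
    [CompleteSpace H] [TopologicalSpace.SeparableSpace H]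
    (hdim : ¬ FiniteDimensional ℂ H)
    {n : ℕ} (T : Fin n → H →L[ℂ] H) (lam : Fin n → ℂ) :
    lam ∈ jointEssNumRange T ↔
      ∃ K : Fin n → H →L[ℂ] H, (∀ j, IsCompactOperator (K j)) ∧
        ∃ u : HilbertBasis ℕ ℂ H, ∀ k j, ⟪(T j + K j) (u k), u k⟫ = lam j := by
  constructor
  · rintro ⟨x, hx, hl⟩
    obtain ⟨u, hu⟩ := S13.exists_good_basis T lam hx hl
    have hc : ∀ j, ∃ K : H →L[ℂ] H, IsCompactOperator K ∧
        ∀ k, K (u k) = (starRingEnd ℂ (lam j - ⟪T j (u k), u k⟫)) • u k := fun j => by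
      refine S13.exists_diag u.orthonormal ?_
      have h1 := (hu j).const_sub (lam j)
      rw [sub_self] at h1
      have h2 := (Complex.continuous_conj.tendsto 0).comp h1
      rw [map_zero] at h2
      exact h2
    choose K hK hKu using hc
    refine ⟨K, hK, u, fun k j => ?_⟩
    rw [add_apply, hKu, inner_add_left, inner_smul_left,
      inner_self_eq_norm_sq_to_K, u.orthonormal.1]
    simp
  · rintro ⟨K, hK, u, hu⟩
    refine ⟨u, u.orthonormal, fun j => ?_⟩
    have h1 := S13.compact_null u.orthonormal (hK j)
    have h2 : Tendsto (fun k => ⟪K j (u k), u k⟫) atTop (nhds 0) := by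
      refine squeeze_zero_norm (fun k => ?_) (tendsto_zero_iff_norm_tendsto_zero.1 h1)
      simpa [u.orthonormal.1 k] using norm_inner_le_norm (𝕜 := ℂ) (K j (u k)) (u k)
    have h3 := h2.const_sub (lam j)
    rw [sub_zero] at h3
    refine h3.congr fun k => ?_
    rw [← hu k j, add_apply, inner_add_left]
    ring
end
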